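/- arXiv:1710.07183 — 4 statements merged into one kernel-verified Lean document; each statement's English description precedes it below -/
import Mathlib

section
/- There is a function f : ℕ → ℕ → ℕ with the property that for any two finite non-abelian simple groups T₁ and T₂ of orders t₁ and t₂, every alternating group Alt(n) with n > f(t₁,t₂) is generated by a copy of T₁ and a copy of T₂; that is, there exist subgroups H₁, H₂ of Alt(n) with H₁ isomorphic to T₁, H₂ isomorphic to T₂, and H₁ ⊔ H₂ = Alt(n). -/
theorem aux_ais {Ω : Type} (g : Equiv.Perm Ω) (w : Ω) : g (g⁻¹ w) = w := by
  rw [← Equiv.Perm.mul_apply, mul_inv_cancel, Equiv.Perm.one_apply]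

theorem aux_ias {Ω : Type} (g : Equiv.Perm Ω) (w : Ω) : g⁻¹ (g w) = w := by
  rw [← Equiv.Perm.mul_apply, inv_mul_cancel, Equiv.Perm.one_apply]

open Equiv Equiv.Perm MulAction in
theorem aux_three_cycle {Ω : Type} [Fintype Ω] [DecidableEq Ω] (y z : Perm Ω) (p : Ω)
    (hy : y p ≠ p) (hz : z p ≠ p) (h : ∀ w, y w ≠ w → z w ≠ w → w = p) :
    y * z * y⁻¹ * z⁻¹ = swap p (z p) * swap p (y p) ∧
      IsThreeCycle (y * z * y⁻¹ * z⁻¹) := by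
  have hne : z p ≠ y p := by
    intro e
    have h1 := h (y p) (fun e' => hy (y.injective e')) (by
      rw [← e]; exact fun e' => hz (z.injective e'))
    exact hy h1
  have key : y * z * y⁻¹ * z⁻¹ = swap p (z p) * swap p (y p) := by
    have zy : ∀ w, y w ≠ w → w ≠ p → z w = w := fun w h1 h2 => by
      by_contra h3; exact h2 (h w h1 h3)
    have yz : ∀ w, z w ≠ w → w ≠ p → y w = w := fun w h1 h2 => by
      by_contra h3; exact h2 (h w h3 h1)
    have yi : ∀ w, y w = w → y⁻¹ w = w := fun w h1 => by
      rw [Perm.inv_eq_iff_eq, h1]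
    have zi : ∀ w, z w = w → z⁻¹ w = w := fun w h1 => by
      rw [Perm.inv_eq_iff_eq, h1]
    ext w
    simp only [Perm.mul_apply]
    by_cases hwp : w = p
    · subst hwp
      have h1 : y (z⁻¹ w) = z⁻¹ w := yz _ (by
        rw [aux_ais]; intro e
        apply hz; rw [Perm.eq_inv_iff_eq] at e; exact e) (by
        intro e; apply hz; rw [Perm.inv_eq_iff_eq] at e; exact e.symm)
      rw [yi _ h1, aux_ais, swap_apply_left,
        swap_apply_of_ne_of_ne hy (Ne.symm hne)]
    · by_cases hwy : w = y p
      · subst hwy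
        have h1 : z (y p) = y p := zy _ (fun e' => hy (y.injective e')) hy
        have h2 : y (z p) = z p := yz _ (fun e' => hz (z.injective e')) hz
        rw [zi _ h1, aux_ias, h2, swap_apply_right, swap_apply_left]
      · rw [swap_apply_of_ne_of_ne hwp hwy]
        by_cases hwz : w = z p
        · subst hwz
          have h1 : z (y⁻¹ p) = y⁻¹ p := zy _ (by
            rw [aux_ais]; intro e
            apply hy; rw [Perm.eq_inv_iff_eq] at e; exact e) (by
            intro e; apply hy; rw [Perm.inv_eq_iff_eq] at e; exact e.symm)
          rw [aux_ias, h1, aux_ais, swap_apply_right]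
        · rw [swap_apply_of_ne_of_ne hwp hwz]
          by_cases hz1 : z w = w
          · rw [zi _ hz1]
            by_cases hy1 : y w = w
            · rw [yi _ hy1, hz1, hy1]
            · have h1 : z (y⁻¹ w) = y⁻¹ w := zy _ (by
                rw [aux_ais]; intro e
                apply hy1; rw [Perm.eq_inv_iff_eq] at e; exact e) (by
                intro e; apply hwy; rw [Perm.inv_eq_iff_eq] at e; exact e)
              rw [h1, aux_ais]
          · have h1 : y (z⁻¹ w) = z⁻¹ w := yz _ (by
              rw [aux_ais]; intro e
              apply hz1; rw [Perm.eq_inv_iff_eq] at e; exact e) (by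
              intro e; apply hwz; rw [Perm.inv_eq_iff_eq] at e; exact e)
            rw [yi _ h1, aux_ais, yz _ hz1 hwp]
  refine ⟨key, ?_⟩
  rw [key]
  exact isThreeCycle_swap_mul_swap_same (Ne.symm hz) (Ne.symm hy) hne

open Equiv Equiv.Perm MulAction in
open scoped Pointwise in
theorem aux_core {Ω : Type} [Fintype Ω] [DecidableEq Ω] (G1 G2 : Subgroup (Perm Ω))
    (hT : ∀ u v : Ω, ∃ g ∈ G1 ⊔ G2, g u = v)
    (S : Set Ω) (hS : ∀ g ∈ G2, ∀ w, g w ≠ w → w ∈ S)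
    (x : Perm Ω) (hx : x ∈ G1 ⊔ G2) (p f : Ω)
    (hSx : ∀ w ∈ S, x w ∈ S → x w = p)
    (hf : ∀ g ∈ G1, g f = f)
    (hpf : ∃ y ∈ G2, y p = f) (hfp : f ≠ p)
    (hp : ∃ y ∈ G2, y (x⁻¹ p) ≠ x⁻¹ p) :
    alternatingGroup Ω ≤ G1 ⊔ G2 := by
  obtain ⟨y', hy', hyp'⟩ := hp
  have h1le : G1 ≤ G1 ⊔ G2 := le_sup_left
  have h2le : G2 ≤ G1 ⊔ G2 := le_sup_right
  set z : Perm Ω := x * y' * x⁻¹ with hzdef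
  have hzG : z ∈ G1 ⊔ G2 := mul_mem (mul_mem hx (h2le hy')) (inv_mem hx)
  have hzp : z p ≠ p := by
    intro e
    apply hyp'
    rw [hzdef, Perm.mul_apply, Perm.mul_apply] at e
    rw [Perm.eq_inv_iff_eq]; exact e
  have hcap : ∀ y ∈ G2, ∀ w, y w ≠ w → z w ≠ w → w = p := by
    intro y hy w hyw hzw
    have h1 := hS y hy w hyw
    have h2 : x⁻¹ w ∈ S := hS y' hy' _ (by
      intro e; apply hzw
      rw [hzdef, Perm.mul_apply, Perm.mul_apply, e, aux_ais])
    have := hSx _ h2 (by rwa [aux_ais])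
    rwa [aux_ais] at this
  have hc : ∀ y ∈ G2, y p ≠ p → (y * z * y⁻¹ * z⁻¹ = swap p (z p) * swap p (y p) ∧
      IsThreeCycle (y * z * y⁻¹ * z⁻¹)) ∧ y * z * y⁻¹ * z⁻¹ ∈ G1 ⊔ G2 := fun y hy hyp =>
    ⟨aux_three_cycle y z p hyp hzp (hcap y hy),
      mul_mem (mul_mem (mul_mem (h2le hy) hzG) (inv_mem (h2le hy))) (inv_mem hzG)⟩
  have htrans : IsPretransitive ↥(G1 ⊔ G2) Ω := ⟨fun u v => by
    obtain ⟨g, hg, e⟩ := hT u v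
    exact ⟨⟨g, hg⟩, e⟩⟩
  have hprim : IsPreprimitive ↥(G1 ⊔ G2) Ω := by
    apply IsPreprimitive.of_isTrivialBlock_base p
    intro B hpB hB
    by_cases hsub : B.Subsingleton
    · exact Or.inl hsub
    right
    obtain ⟨w, hwB, hwp⟩ : ∃ w ∈ B, w ≠ p := by
      by_contra hcon
      push Not at hcon
      exact hsub (fun a ha b hb => by rw [hcon a ha, hcon b hb])
    have stab : ∀ g ∈ G1 ⊔ G2, ∀ b ∈ B, g b ∈ B → ∀ b' ∈ B, g b' ∈ B := by
      intro g hg b hb hgb b' hb'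
      have h1 : (⟨g, hg⟩ : ↥(G1 ⊔ G2)) • B = B := hB.smul_eq_of_mem hb hgb
      rw [← h1]
      exact ⟨b', hb', rfl⟩
    have hyB : ∀ y ∈ G2, y p ∈ B := by
      intro y hy
      by_cases hyp : y p = p
      · rwa [hyp]
      obtain ⟨⟨hc1, hc3⟩, hcG⟩ := hc y hy hyp
      obtain ⟨c, hcdef⟩ : ∃ c, c = y * z * y⁻¹ * z⁻¹ := ⟨_, rfl⟩
      rw [← hcdef] at hc1 hc3 hcG
      have hne : z p ≠ y p := by
        intro e
        rw [e] at hc1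
        rw [swap_mul_self] at hc1
        exact hc3.isCycle.ne_one hc1
      by_cases hwy : w = y p
      · rwa [← hwy]
      have hcp : c p = y p := by
        rw [hc1, Perm.mul_apply, swap_apply_left, swap_apply_of_ne_of_ne hyp (Ne.symm hne)]
      rw [← hcp]
      have hcw : c w ∈ B := by
        rw [hc1, Perm.mul_apply, swap_apply_of_ne_of_ne hwp hwy]
        by_cases hwz : w = z p
        · rw [hwz, swap_apply_right]; exact hpB
        · rw [swap_apply_of_ne_of_ne hwp hwz]; exact hwB
      exact stab c hcG w hwB hcw p hpB
    have hfB : f ∈ B := by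
      obtain ⟨y, hy, e⟩ := hpf
      rw [← e]; exact hyB y hy
    have hle : G1 ⊔ G2 ≤ MulAction.stabilizer (Perm Ω) B := by
      apply sup_le
      · intro g hg
        have h1 : (⟨g, h1le hg⟩ : ↥(G1 ⊔ G2)) • B = B :=
          hB.smul_eq_of_mem hfB (by
            change g f ∈ B
            rw [hf g hg]; exact hfB)
        exact h1
      · intro g hg
        have h1 : (⟨g, h2le hg⟩ : ↥(G1 ⊔ G2)) • B = B :=
          hB.smul_eq_of_mem hpB (hyB g hg)
        exact h1
    ext v
    simp only [Set.mem_univ, iff_true]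
    obtain ⟨g, hg, e⟩ := hT p v
    have h1 : g • B = B := hle hg
    rw [← h1]
    exact ⟨p, hpB, e⟩
  obtain ⟨y, hy, e⟩ := hpf
  obtain ⟨⟨_, hc3⟩, hcG⟩ := hc y hy (by rw [e]; exact hfp)
  exact alternatingGroup_le_of_isPreprimitive_of_isThreeCycle_mem hprim hc3 hcG
theorem aux_pgroup {T : Type} [Group T] [Finite T] [IsSimpleGroup T]
    (h : ¬ ∀ x y : T, x * y = y * x) (p : ℕ) [Fact p.Prime] (k : ℕ)
    (hc : Nat.card T = p ^ k) : False := by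
  have hp : IsPGroup p T := IsPGroup.of_card hc
  have h1 := hp.center_nontrivial
  have h2 : Subgroup.center T = ⊤ := by
    rcases (inferInstance : (Subgroup.center T).Normal).eq_bot_or_eq_top with h3 | h3
    · rw [h3] at h1
      exact absurd h1 (not_nontrivial _)
    · exact h3
  apply h
  intro x y
  have : y ∈ Subgroup.center T := by rw [h2]; trivial
  exact (Subgroup.mem_center_iff.mp this x)

theorem aux_card {T : Type} [Group T] [Finite T] [IsSimpleGroup T]
    (h : ¬ ∀ x y : T, x * y = y * x) : 9 ≤ Nat.card T := by
  by_contra hlt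
  push Not at hlt
  have hpos : 0 < Nat.card T := Nat.card_pos
  have f2 : Fact (Nat.Prime 2) := ⟨by norm_num⟩
  have f3 : Fact (Nat.Prime 3) := ⟨by norm_num⟩
  have f5 : Fact (Nat.Prime 5) := ⟨by norm_num⟩
  have f7 : Fact (Nat.Prime 7) := ⟨by norm_num⟩
  obtain ⟨c, hc⟩ : ∃ c, Nat.card T = c := ⟨_, rfl⟩
  rw [hc] at hlt hpos
  interval_cases c
  · exact aux_pgroup h 2 0 hc
  · exact aux_pgroup h 2 1 hc
  · exact aux_pgroup h 3 1 hc
  · exact aux_pgroup h 2 2 hc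
  · exact aux_pgroup h 5 1 hc
  · obtain ⟨x, hx⟩ := exists_prime_orderOf_dvd_card' (G := T) 3 (by rw [hc]; norm_num)
    have h1 := Subgroup.card_mul_index (Subgroup.zpowers x)
    rw [Nat.card_zpowers, hx, hc] at h1
    have h2 : (Subgroup.zpowers x).index = 2 := by omega
    have h3 := Subgroup.normal_of_index_eq_two h2
    rcases h3.eq_bot_or_eq_top with h4 | h4
    · rw [h4, Subgroup.index_bot, hc] at h2; omega
    · rw [h4, Subgroup.index_top] at h2; omega
  · exact aux_pgroup h 7 1 hc
  · exact aux_pgroup h 2 3 hc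

theorem aux_labels {T : Type} [Group T] [Finite T] [IsSimpleGroup T]
    (h : ¬ ∀ x y : T, x * y = y * x) : ∃ x s z1 z2 : T, z2 * z1 = x ∧ x ≠ 1 ∧ x * x ≠ 1 ∧
      s ≠ 1 ∧ s ≠ x ∧ s * x ≠ 1 ∧ x * s ≠ 1 ∧
      (z1 ≠ 1 ∧ z1 ≠ s ∧ z1 * s ≠ 1 ∧ z1 ≠ x ∧ z1 * x ≠ 1) ∧
      (z2 ≠ 1 ∧ z2 ≠ s ∧ z2 * s ≠ 1 ∧ z2 ≠ x ∧ z2 * x ≠ 1) := by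
  classical
  have hcard := aux_card h
  have := Fintype.ofFinite T
  rw [Nat.card_eq_fintype_card] at hcard
  have hx : ∃ x : T, x * x ≠ 1 := by
    by_contra hcon
    push Not at hcon
    apply h
    intro x y
    have h1 := hcon (x * y)
    have h2 : x * y = (x * y)⁻¹ := eq_inv_of_mul_eq_one_left h1
    rw [h2, mul_inv_rev, ← eq_inv_of_mul_eq_one_left (hcon x),
      ← eq_inv_of_mul_eq_one_left (hcon y)]
  obtain ⟨x, hx⟩ := hx
  have avoid : ∀ F : Finset T, F.card < 9 → ∃ t, t ∉ F := by
    intro F hF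
    by_contra hcon
    push Not at hcon
    have : F = Finset.univ := by ext; simp [hcon]
    rw [this, Finset.card_univ] at hF
    omega
  obtain ⟨s, hs⟩ := avoid {1, x, x⁻¹} (lt_of_le_of_lt Finset.card_le_three (by norm_num))
  obtain ⟨z, hz⟩ := avoid {1, s, s⁻¹, x, x⁻¹, s⁻¹ * x, x * x, s * x} (by
    refine lt_of_le_of_lt ?_ (by norm_num : 8 < 9)
    exact le_trans (Finset.card_insert_le _ _) (Nat.succ_le_succ
      (le_trans (Finset.card_insert_le _ _) (Nat.succ_le_succ Finset.card_le_six))))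
  simp only [Finset.mem_insert, Finset.mem_singleton, not_or] at hs hz
  obtain ⟨hs1, hs2, hs3⟩ := hs
  obtain ⟨a1, a2, a3, a4, a5, a6, a7, a8⟩ := hz
  refine ⟨x, s, z, x * z⁻¹, by group, ?_, hx, hs1, hs2, ?_, ?_, ⟨a1, a2, ?_, a4, ?_⟩,
    ⟨?_, ?_, ?_, ?_, ?_⟩⟩
  · rintro rfl; simp at hx
  · intro e; exact hs3 (eq_inv_of_mul_eq_one_left e)
  · intro e; exact hs3 (eq_inv_of_mul_eq_one_right e)
  · intro e; exact a3 (eq_inv_of_mul_eq_one_left e)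
  · intro e; exact a5 (eq_inv_of_mul_eq_one_left e)
  · intro e; exact a4 (mul_inv_eq_one.mp e).symm
  · intro e; apply a6; rw [← e]; group
  · intro e
    apply a8
    rw [mul_assoc] at e
    have := eq_inv_of_mul_eq_one_right e
    rw [inv_mul_eq_iff_eq_mul, eq_mul_inv_iff_mul_eq] at this
    exact this.symm
  · intro e; apply a1; simpa using e
  · intro e
    apply a7
    rw [mul_assoc] at e
    have := eq_inv_of_mul_eq_one_right e
    rw [inv_mul_eq_iff_eq_mul, eq_mul_inv_iff_mul_eq] at this
    exact this.symm

theorem aux_lab {T1 I : Type} [Group T1] (i0 : I) (x s : T1) (hx1 : x ≠ 1) (hxx : x * x ≠ 1)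
    (hs1 : s ≠ 1) (hsx : s ≠ x) (hxs1 : x * s ≠ 1) :
    ∃ lab : I → Bool → T1, (∀ i, lab i false = 1) ∧ (lab i0 true = x) ∧
      (∀ z, (z ≠ 1 ∧ z ≠ s ∧ z * s ≠ 1 ∧ z ≠ x ∧ z * x ≠ 1) → ∀ i b b',
        z * lab i b ≠ lab i b') ∧
      (∀ i b b', x * lab i b = lab i b' → i = i0 ∧ b = false) ∧
      (∀ i b b', lab i b = lab i b' → b = b') := by
  classical
  refine ⟨fun i b => if b then (if i = i0 then x else s) else 1, by simp, by simp, ?_, ?_, ?_⟩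
  · rintro z ⟨a1, a2, a3, a4, a5⟩ i b b'
    by_cases hi : i = i0 <;> cases b <;> cases b' <;> simp [hi, a1, a2, a3, a4, a5]
  · intro i b b'
    by_cases hi : i = i0 <;> cases b <;> cases b' <;> simp [hi, hx1, hxx, hxs1, hsx.symm]
  · intro i b b'
    by_cases hi : i = i0 <;> cases b <;> cases b' <;> simp [hi, hx1, hs1, hx1.symm, hs1.symm]

open Equiv Equiv.Perm in
theorem aux_construct {T1 T2 : Type} [Group T1] [Group T2] [Finite T1] [Nontrivial T2]
    (N l : ℕ) (sing : Fin N → Prop) (q : Fin l × T2 → Fin N) (flag : Fin l × T2 → Bool)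
    (hinj : ∀ u v, q u = q v → flag u = flag v → u = v)
    (hsing : ∀ u v, q u = q v → sing (q u) → u = v)
    (hsing2 : ∀ u v, u.1 = v.1 → sing (q u) → sing (q v) → u = v)
    (hsurj : Function.Surjective q)
    (hchain : ∀ (j : ℕ) (h : j + 1 < l), ∃ t t',
      q (⟨j, Nat.lt_of_succ_lt h⟩, t) = q (⟨j + 1, h⟩, t'))
    (u0 u1 v : Fin l × T2) (h01 : q u0 = q u1) (h0 : ¬ sing (q u0)) (hu0 : flag u0 = false)
    (hu1 : flag u1 = true) (hv1 : v.1 = u1.1) (hv : sing (q v))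
    (x s z1 z2 : T1) (hz : z2 * z1 = x) (hx1 : x ≠ 1) (hxx : x * x ≠ 1)
    (hs1 : s ≠ 1) (hsx : s ≠ x) (hxs1 : x * s ≠ 1)
    (hz1 : z1 ≠ 1 ∧ z1 ≠ s ∧ z1 * s ≠ 1 ∧ z1 ≠ x ∧ z1 * x ≠ 1)
    (hz2 : z2 ≠ 1 ∧ z2 ≠ s ∧ z2 * s ≠ 1 ∧ z2 ≠ x ∧ z2 * x ≠ 1) :
    ∃ (Ω : Type) (_ : Fintype Ω) (_ : DecidableEq Ω),
      Nat.card Ω = Nat.card {i // ¬ sing i} * Nat.card T1 + Nat.card {i // sing i} ∧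
      ∃ (φ1 : T1 →* Perm Ω) (φ2 : T2 →* Perm Ω), Function.Injective φ1 ∧
        Function.Injective φ2 ∧ alternatingGroup Ω ≤ φ1.range ⊔ φ2.range := by
  classical
  have : Fintype T1 := Fintype.ofFinite T1
  let Ω : Type := ({i // ¬ sing i} × T1) ⊕ {i // sing i}
  obtain ⟨iF⟩ : Nonempty (Fintype Ω) :=
    ⟨inferInstanceAs (Fintype (({i // ¬ sing i} × T1) ⊕ {i // sing i}))⟩
  refine ⟨Ω, iF, Classical.decEq _, by rw [Nat.card_sum, Nat.card_prod], ?_⟩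
  let φ1 : T1 →* Perm Ω :=
    { toFun := fun t => Equiv.sumCongr (Equiv.prodCongr (Equiv.refl _) (Equiv.mulLeft t))
        (Equiv.refl _)
      map_one' := by
        ext w
        rcases w with ⟨k, t⟩ | f <;> simp
      map_mul' := by
        intro a b
        ext w
        rcases w with ⟨k, t⟩ | f <;> simp [mul_assoc] }
  have φ1l : ∀ t k a, φ1 t (Sum.inl (k, a)) = Sum.inl (k, t * a) := fun _ _ _ => rfl
  have φ1r : ∀ t f, φ1 t (Sum.inr f) = Sum.inr f := fun _ _ => rfl
  let ψ : T2 →* Perm (Fin l × T2) :=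
    { toFun := fun t => Equiv.prodCongr (Equiv.refl _) (Equiv.mulLeft t)
      map_one' := by
        ext w <;> simp
      map_mul' := by
        intro a b
        ext w <;> simp [mul_assoc] }
  have ψa : ∀ t u, ψ t u = (u.1, t * u.2) := fun _ _ => rfl
  obtain ⟨lab, lab0, lab1, lsep, lx, linj⟩ := aux_lab (q u0) x s hx1 hxx hs1 hsx hxs1
  obtain ⟨E, Es, En⟩ : ∃ E : Fin l × T2 → Ω,
      (∀ u (h : sing (q u)), E u = Sum.inr ⟨q u, h⟩) ∧
      (∀ u (h : ¬ sing (q u)), E u = Sum.inl (⟨q u, h⟩, lab (q u) (flag u))) := by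
    refine ⟨fun u => if h : sing (q u) then Sum.inr ⟨q u, h⟩
      else Sum.inl (⟨q u, h⟩, lab (q u) (flag u)), ?_, ?_⟩
    · intro u h; simp only [h, dite_true]
    · intro u h; simp only [h, dite_false]
  have Einj : Function.Injective E := by
    intro u w huw
    by_cases hu : sing (q u) <;> by_cases hw : sing (q w)
    · rw [Es u hu, Es w hw] at huw
      have := Sum.inr.inj huw
      exact hsing u w (congrArg Subtype.val this) hu
    · rw [Es u hu, En w hw] at huw; cases huw
    · rw [En u hu, Es w hw] at huw; cases huw
    · rw [En u hu, En w hw] at huw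
      have h1 := Sum.inl.inj huw
      have h2 : q u = q w := congrArg (fun a => a.1.val) h1
      have h3 : lab (q u) (flag u) = lab (q w) (flag w) := congrArg (fun a => a.2) h1
      rw [← h2] at h3
      exact hinj u w h2 (linj _ _ _ h3)
  have Emem : ∀ i h t, (Sum.inl (⟨i, h⟩, t) : Ω) ∈ Set.range E →
      ∃ b, t = lab i b := by
    rintro i h t ⟨u, hu⟩
    by_cases hu' : sing (q u)
    · rw [Es u hu'] at hu; cases hu
    · rw [En u hu'] at hu
      have h1 := Sum.inl.inj hu
      have h2 : q u = i := congrArg (fun a => a.1.val) h1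
      have h3 : lab (q u) (flag u) = t := congrArg (fun a => a.2) h1
      exact ⟨flag u, by rw [← h3, h2]⟩
  let ι : (Fin l × T2) ↪ Ω := ⟨E, Einj⟩
  let φ2 : T2 →* Perm Ω := (viaEmbeddingHom ι).comp ψ
  have φ2E : ∀ t u, φ2 t (E u) = E (u.1, t * u.2) := by
    intro t u
    exact viaEmbedding_apply (ψ t) ι u
  have φ2n : ∀ t w, w ∉ Set.range E → φ2 t w = w := by
    intro t w hw
    exact viaEmbedding_apply_of_notMem (ψ t) ι w hw
  have hφ1 : Function.Injective φ1 := by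
    intro a b hab
    have h1 : φ1 a (Sum.inl (⟨q u0, h0⟩, 1)) = φ1 b (Sum.inl (⟨q u0, h0⟩, 1)) := by rw [hab]
    rw [φ1l, φ1l] at h1
    have h2 := congrArg (fun a => a.2) (Sum.inl.inj h1)
    simpa using h2
  have hφ2 : Function.Injective φ2 := by
    intro a b hab
    have h1 : φ2 a (E u0) = φ2 b (E u0) := by rw [hab]
    rw [φ2E, φ2E] at h1
    have h2 := congrArg (fun a => a.2) (Einj h1)
    simpa using h2
  refine ⟨φ1, φ2, hφ1, hφ2, ?_⟩
  obtain ⟨g, hg⟩ := exists_ne (1 : T2)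
  have m1 : ∀ t, φ1 t ∈ φ1.range ⊔ φ2.range := fun t =>
    (le_sup_left : φ1.range ≤ φ1.range ⊔ φ2.range) ⟨t, rfl⟩
  have m2 : ∀ t, φ2 t ∈ φ1.range ⊔ φ2.range := fun t =>
    (le_sup_right : φ2.range ≤ φ1.range ⊔ φ2.range) ⟨t, rfl⟩
  have hwns : ∀ u (h : ¬ sing (q u)), (φ1 z2 * φ2 g * φ1 z1) (E u) =
      Sum.inl (⟨q u, h⟩, x * lab (q u) (flag u)) := by
    intro u h
    rw [Perm.mul_apply, Perm.mul_apply, En u h, φ1l, φ2n, φ1l, ← mul_assoc, hz]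
    intro hmem
    obtain ⟨b, hb⟩ := Emem _ _ _ hmem
    exact lsep z1 hz1 _ _ _ hb
  have hw01 : (φ1 z2 * φ2 g * φ1 z1) (E u0) = E u1 := by
    have h1 : ¬ sing (q u1) := by rwa [← h01]
    rw [hwns u0 h0, En u1 h1, hu0, hu1, lab0]
    simp only [← h01, lab1, mul_one]
  refine @aux_core Ω iF (Classical.decEq _) φ1.range φ2.range ?_ (Set.range E) ?_ (φ1 z2 * φ2 g * φ1 z1)
    (mul_mem (mul_mem (m1 _) (m2 _)) (m1 _)) (E u1) (E v) ?_ ?_ ?_ ?_ ?_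
  · -- transitivity
    have hrefl : ∀ a : Ω, ∃ h ∈ φ1.range ⊔ φ2.range, h a = a := fun a => ⟨1, one_mem _, rfl⟩
    have htr : ∀ a b c : Ω, (∃ h ∈ φ1.range ⊔ φ2.range, h a = b) →
        (∃ h ∈ φ1.range ⊔ φ2.range, h b = c) → ∃ h ∈ φ1.range ⊔ φ2.range, h a = c := by
      rintro a b c ⟨h, hh, rfl⟩ ⟨k, hk, rfl⟩
      exact ⟨k * h, mul_mem hk hh, rfl⟩
    have hsymm : ∀ a b : Ω, (∃ h ∈ φ1.range ⊔ φ2.range, h a = b) →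
        (∃ h ∈ φ1.range ⊔ φ2.range, h b = a) := by
      rintro a b ⟨h, hh, rfl⟩
      exact ⟨h⁻¹, inv_mem hh, aux_ias h a⟩
    have r1 : ∀ j t t', ∃ h ∈ φ1.range ⊔ φ2.range, h (E (j, t)) = E (j, t') := by
      intro j t t'
      exact ⟨φ2 (t' * t⁻¹), m2 _, by rw [φ2E]; simp⟩
    have r2 : ∀ u (w : Ω), Sum.elim (fun a => a.1.val) (fun a => a.val) w = q u →
        ∃ h ∈ φ1.range ⊔ φ2.range, h (E u) = w := by
      intro u w hw
      rcases w with ⟨⟨i, hi⟩, t⟩ | ⟨i, hi⟩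
      · have hw' : i = q u := hw
        subst hw'
        refine ⟨φ1 (t * (lab (q u) (flag u))⁻¹), m1 _, ?_⟩
        rw [En u hi, φ1l]; simp
      · have hw' : i = q u := hw
        subst hw'
        refine ⟨1, one_mem _, ?_⟩
        rw [Es u hi]; rfl
    have r2' : ∀ u u', q u = q u' → ∃ h ∈ φ1.range ⊔ φ2.range, h (E u) = E u' := by
      intro u u' huu
      apply r2
      by_cases h : sing (q u')
      · rw [Es u' h, huu]; rfl
      · rw [En u' h, huu]; rfl
    have hl : 0 < l := lt_of_le_of_lt (Nat.zero_le _) u0.1.isLt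
    have r3 : ∀ (j : ℕ) (h : j < l), ∃ k ∈ φ1.range ⊔ φ2.range,
        k (E (⟨0, hl⟩, 1)) = E (⟨j, h⟩, 1) := by
      intro j
      induction j with
      | zero => intro h; exact hrefl _
      | succ j ih =>
        intro h
        obtain ⟨t, t', htt⟩ := hchain j h
        exact htr _ _ _ (ih (Nat.lt_of_succ_lt h)) (htr _ _ _ (r1 _ 1 t)
          (htr _ _ _ (r2' _ _ htt) (r1 _ t' 1)))
    have r4 : ∀ w : Ω, ∃ k ∈ φ1.range ⊔ φ2.range, k (E (⟨0, hl⟩, 1)) = w := by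
      intro w
      obtain ⟨u, hu⟩ := hsurj (Sum.elim (fun a => a.1.val) (fun a => a.val) w)
      exact htr _ _ _ (r3 u.1.val u.1.isLt) (htr _ _ _ (r1 _ 1 u.2) (r2 u w hu.symm))
    intro a b
    exact htr _ _ _ (hsymm _ _ (r4 a)) (r4 b)
  · rintro _ ⟨t, rfl⟩ w hw
    by_contra hcon
    exact hw (φ2n t w hcon)
  · rintro _ ⟨u, rfl⟩ hmem
    by_cases hu : sing (q u)
    · exfalso
      have hu' : ¬ sing (q (u.1, g * u.2)) := by
        intro hcon
        have h1 := congrArg (fun a => a.2) (hsing2 u (u.1, g * u.2) rfl hu hcon)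
        apply hg
        simpa using h1
      rw [Perm.mul_apply, Perm.mul_apply, Es u hu, φ1r, ← Es u hu, φ2E, En _ hu', φ1l] at hmem
      obtain ⟨b, hb⟩ := Emem _ _ _ hmem
      exact lsep z2 hz2 _ _ _ hb
    · have hmem' := hmem
      rw [hwns u hu] at hmem'
      obtain ⟨b, hb⟩ := Emem _ _ _ hmem'
      obtain ⟨h1, h2⟩ := lx _ _ _ hb
      have h3 : u = u0 := hinj _ _ h1 (by rw [h2, hu0])
      rw [h3, hw01]
  · rintro _ ⟨t, rfl⟩
    rw [Es v hv, φ1r]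
  · refine ⟨φ2 (v.2 * u1.2⁻¹), ⟨_, rfl⟩, ?_⟩
    rw [φ2E, ← hv1]; simp
  · intro e
    have h1 := Einj e
    rw [h1, ← h01] at hv
    exact h0 hv
  · refine ⟨φ2 g, ⟨_, rfl⟩, ?_⟩
    rw [← hw01, aux_ias, φ2E]
    intro e
    have h1 := congrArg (fun a => a.2) (Einj e)
    apply hg
    simpa using h1

theorem aux_numeric (d N l r : ℕ) (hd : 2 ≤ d) (hl : 3 ≤ l) (hr : 1 ≤ r)
    (hN1 : d * (l - 1) + 1 < N) (hN2 : N ≤ d * l + 1) (hrN : d * r + 1 < N) :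
    ∃ (sing : ℕ → Prop) (q : ℕ → ℕ → ℕ) (flag : ℕ → ℕ → Bool),
      (∀ j < l, ∀ t ≤ d, q j t < N) ∧
      (∀ j < l, ∀ t ≤ d, ∀ j' < l, ∀ t' ≤ d, q j t = q j' t' → flag j t = flag j' t' →
        j = j' ∧ t = t') ∧
      (∀ j < l, ∀ t ≤ d, sing (q j t) → t = 1 ∧ q j t = d * j + 1) ∧
      (∀ i < N, ∃ j < l, ∃ t ≤ d, q j t = i) ∧
      (∀ j, j + 1 < l → q j d = q (j + 1) 0) ∧
      ¬ sing (q 0 d) ∧ flag 0 d = false ∧ flag 1 0 = true ∧ sing (q 1 1) ∧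
      (∀ i, sing i ↔ i ∈ (Finset.Icc 1 r).image (fun m => d * m + 1)) := by
  have hjl : ∀ j t, t ≤ d → N ≤ d * j + t → l ≤ j + 1 := by
    intro j t ht h
    by_contra hcon
    have h1 : j + 1 ≤ l - 1 := by omega
    have h2 := Nat.mul_le_mul_left d h1
    rw [Nat.mul_add] at h2
    omega
  have hll : d * l = d * (l - 1) + d := by
    obtain ⟨k, rfl⟩ : ∃ k, l = k + 1 := ⟨l - 1, by omega⟩
    rw [Nat.add_sub_cancel]; ring
  have hex : ∀ j < l, ∀ t ≤ d, N ≤ d * j + t → j = l - 1 ∧ d * j + t - N + 1 ≤ d - 1 := by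
    intro j hj t ht h
    have h1 := hjl j t ht h
    have h2 : j = l - 1 := by omega
    subst h2
    exact ⟨rfl, by omega⟩
  have heq : ∀ j t j' t', t ≤ d → t' ≤ d → d * j + t = d * j' + t' → (t = 0 ↔ t' = 0) →
      j = j' ∧ t = t' := by
    intro j t j' t' ht ht' h hiff
    rcases lt_trichotomy j j' with hlt | rfl | hlt
    · have := Nat.mul_le_mul_left d (Nat.succ_le_of_lt hlt)
      rw [Nat.mul_succ] at this
      omega
    · omega
    · have := Nat.mul_le_mul_left d (Nat.succ_le_of_lt hlt)
      rw [Nat.mul_succ] at this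
      omega
  have heq1 : ∀ j t m, t ≤ d → d * j + t = d * m + 1 → j = m ∧ t = 1 := by
    intro j t m ht h
    rcases lt_trichotomy j m with hlt | rfl | hlt
    · have := Nat.mul_le_mul_left d (Nat.succ_le_of_lt hlt)
      rw [Nat.mul_succ] at this
      omega
    · omega
    · have := Nat.mul_le_mul_left d (Nat.succ_le_of_lt hlt)
      rw [Nat.mul_succ] at this
      omega
  have hdl : d * 2 ≤ d * (l - 1) := Nat.mul_le_mul_left d (by omega)
  have hmul0 : ∀ j, 0 < d * j → d ≤ d * j := by
    intro j hj
    have : 0 < j := Nat.pos_of_mul_pos_left hj |> fun h => by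
      rcases Nat.eq_zero_or_pos j with rfl | h'
      · simp at hj
      · exact h'
    exact Nat.le_mul_of_pos_right d this
  refine ⟨fun i => i ∈ (Finset.Icc 1 r).image (fun m => d * m + 1),
    fun j t => if d * j + t < N then d * j + t else d * j + t - N + 1,
    fun j t => decide (t = 0 ∨ N ≤ d * j + t), ?_, ?_, ?_, ?_, ?_, ?_, ?_, ?_, ?_, ?_⟩
  · intro j hj t ht
    dsimp only
    split_ifs with h
    · exact h
    · have := (hex j hj t ht (by omega)).2
      omega
  · intro j hj t ht j' hj' t' ht' hq hf
    dsimp only at hq hf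
    rw [decide_eq_decide] at hf
    split_ifs at hq with h1 h2 h2
    · exact heq _ _ _ _ ht ht' hq (by omega)
    · exfalso
      have h3 := (hex j' hj' t' ht' (by omega)).2
      have h4 : t = 0 := by omega
      have := hmul0 j (by omega)
      omega
    · exfalso
      have h3 := (hex j hj t ht (by omega)).2
      have h4 : t' = 0 := by omega
      have := hmul0 j' (by omega)
      omega
    · have h3 := (hex j hj t ht (by omega)).1
      have h4 := (hex j' hj' t' ht' (by omega)).1
      have h5 : j = j' := by omega
      subst h5
      omega
  · intro j hj t ht hs
    dsimp only at hs ⊢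
    simp only [Finset.mem_image, Finset.mem_Icc] at hs
    obtain ⟨m, ⟨hm1, hm2⟩, hm⟩ := hs
    have h6 : d * 1 ≤ d * m := Nat.mul_le_mul_left d hm1
    split_ifs at hm ⊢ with h1
    · obtain ⟨h2, h3⟩ := heq1 j t m ht hm.symm
      subst h2; subst h3; exact ⟨rfl, rfl⟩
    · have := (hex j hj t ht (by omega)).2
      omega
  · intro i hi
    have h1 := Nat.div_add_mod i d
    have h2 := Nat.mod_lt i (show d > 0 by omega)
    by_cases h3 : i / d < l
    · refine ⟨i / d, h3, i % d, h2.le, ?_⟩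
      dsimp only
      rw [h1, if_pos hi]
    · have h4 : d * l ≤ d * (i / d) := Nat.mul_le_mul_left d (by omega)
      refine ⟨l - 1, by omega, d, le_rfl, ?_⟩
      dsimp only
      rw [if_pos (by omega)]
      omega
  · intro j hj
    dsimp only
    have h1 : d * (j + 1) ≤ d * (l - 1) := Nat.mul_le_mul_left d (by omega)
    rw [Nat.mul_succ] at h1
    rw [Nat.mul_succ, if_pos (by omega), if_pos (by omega)]
    omega
  · dsimp only
    rw [if_pos (by omega)]
    simp only [Finset.mem_image, Finset.mem_Icc]
    rintro ⟨m, ⟨hm1, hm2⟩, hm⟩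
    have h6 : d * 1 ≤ d * m := Nat.mul_le_mul_left d hm1
    omega
  · simp only [decide_eq_false_iff_not]; omega
  · simp
  · dsimp only
    rw [if_pos (by omega)]
    simp only [Finset.mem_image, Finset.mem_Icc]
    exact ⟨1, ⟨le_rfl, hr⟩, rfl⟩
  · intro i; rfl

theorem aux_alt {T Ω : Type} [Group T] [IsSimpleGroup T] [Fintype Ω] [DecidableEq Ω]
    (h : ¬ ∀ x y : T, x * y = y * x) (φ : T →* Equiv.Perm Ω) :
    ∀ t, φ t ∈ alternatingGroup Ω := by
  intro t
  rw [Equiv.Perm.mem_alternatingGroup]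
  have hn : (Equiv.Perm.sign.comp φ).ker.Normal := inferInstance
  rcases hn.eq_bot_or_eq_top with h1 | h1
  · exfalso
    apply h
    intro x y
    apply (MonoidHom.ker_eq_bot_iff _).mp h1
    rw [map_mul, map_mul, mul_comm]
  · have : t ∈ (Equiv.Perm.sign.comp φ).ker := by rw [h1]; trivial
    exact this

theorem aux_transfer {T1 T2 Ω : Type} [Group T1] [Group T2] [IsSimpleGroup T1]
    [IsSimpleGroup T2] [Fintype Ω] [DecidableEq Ω]
    (h1 : ¬ ∀ x y : T1, x * y = y * x) (h2 : ¬ ∀ x y : T2, x * y = y * x)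
    (n : ℕ) (hn : Nat.card Ω = n)
    (φ1 : T1 →* Equiv.Perm Ω) (φ2 : T2 →* Equiv.Perm Ω) (i1 : Function.Injective φ1)
    (i2 : Function.Injective φ2) (hle : alternatingGroup Ω ≤ φ1.range ⊔ φ2.range) :
    ∃ H₁ H₂ : Subgroup (alternatingGroup (Fin n)),
      Nonempty (H₁ ≃* T1) ∧ Nonempty (H₂ ≃* T2) ∧ H₁ ⊔ H₂ = ⊤ := by
  let e : Ω ≃ Fin n := Fintype.equivFinOfCardEq (by rw [← hn, Nat.card_eq_fintype_card])
  let ψ1 : T1 →* alternatingGroup Ω := φ1.codRestrict _ (aux_alt h1 φ1)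
  let ψ2 : T2 →* alternatingGroup Ω := φ2.codRestrict _ (aux_alt h2 φ2)
  have j1 : Function.Injective ψ1 := fun a b hab => i1 (congrArg Subtype.val hab)
  have j2 : Function.Injective ψ2 := fun a b hab => i2 (congrArg Subtype.val hab)
  have htop : ψ1.range ⊔ ψ2.range = ⊤ := by
    apply Subgroup.map_injective (alternatingGroup Ω).subtype_injective
    rw [Subgroup.map_sup, MonoidHom.map_range, MonoidHom.map_range]
    have e1 : (alternatingGroup Ω).subtype.comp ψ1 = φ1 := rfl
    have e2 : (alternatingGroup Ω).subtype.comp ψ2 = φ2 := rfl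
    rw [e1, e2, ← MonoidHom.range_eq_map, Subgroup.range_subtype]
    apply le_antisymm _ hle
    apply sup_le
    · rintro _ ⟨t, rfl⟩; exact aux_alt h1 φ1 t
    · rintro _ ⟨t, rfl⟩; exact aux_alt h2 φ2 t
  let E := e.altCongrHom
  refine ⟨(E.toMonoidHom.comp ψ1).range, (E.toMonoidHom.comp ψ2).range,
    ⟨(MonoidHom.ofInjective (f := E.toMonoidHom.comp ψ1) (E.injective.comp j1)).symm⟩,
    ⟨(MonoidHom.ofInjective (f := E.toMonoidHom.comp ψ2) (E.injective.comp j2)).symm⟩, ?_⟩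
  rw [← MonoidHom.map_range, ← MonoidHom.map_range, ← Subgroup.map_sup, htop]
  exact Subgroup.map_top_of_surjective _ E.surjective

theorem aux_card_sing (N : ℕ) (F : Finset ℕ) (hF : ∀ i ∈ F, i < N) :
    Nat.card {i : Fin N // i.val ∈ F} = F.card := by
  have e : {i : Fin N // i.val ∈ F} ≃ F :=
    ⟨fun i => ⟨i.1.1, i.2⟩, fun j => ⟨⟨j.1, hF _ j.2⟩, j.2⟩, fun _ => rfl, fun _ => rfl⟩
  rw [Nat.card_congr e, Nat.card_eq_fintype_card, Fintype.card_coe]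

/-- Theorem 2.1(ii): there is a function `f : ℕ → ℕ → ℕ` such that for any two finite
non-abelian simple groups `T₁, T₂` of orders `t₁, t₂`, every alternating group `Alt(n)`
with `n > f t₁ t₂` is generated by a copy of `T₁` and a copy of `T₂`. -/
theorem stmt_0 :
    ∃ f : ℕ → ℕ → ℕ,
      ∀ (T₁ T₂ : Type) [Group T₁] [Group T₂] [Finite T₁] [Finite T₂]
        [IsSimpleGroup T₁] [IsSimpleGroup T₂],
        (¬ ∀ x y : T₁, x * y = y * x) → (¬ ∀ x y : T₂, x * y = y * x) →
        ∀ n : ℕ, n > f (Nat.card T₁) (Nat.card T₂) →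
          ∃ H₁ H₂ : Subgroup (alternatingGroup (Fin n)),
            Nonempty (H₁ ≃* T₁) ∧ Nonempty (H₂ ≃* T₂) ∧ H₁ ⊔ H₂ = ⊤ := by
  refine ⟨fun a b => a * (a * b + 5 * b), ?_⟩
  intro T₁ T₂ _ _ _ _ _ _ h1 h2 n hn
  have ha := aux_card h1
  have hb := aux_card h2
  obtain ⟨x, s, z1, z2, hz, hx1, hxx, hs1, hsx, -, hxs1, hz1, hz2⟩ := aux_labels h1
  obtain ⟨τ⟩ : Nonempty (T₂ ≃ Fin (Nat.card T₂)) := ⟨Finite.equivFin T₂⟩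
  obtain ⟨a, haa⟩ : ∃ a, Nat.card T₁ = a := ⟨_, rfl⟩
  obtain ⟨d, hbd⟩ : ∃ d, Nat.card T₂ = d + 1 := ⟨Nat.card T₂ - 1, by omega⟩
  rw [haa] at ha hn
  rw [hbd] at hb hn τ
  dsimp only at hn
  obtain ⟨k, hk⟩ : ∃ k, k = (n - 1) / a := ⟨_, rfl⟩
  obtain ⟨r, hr⟩ : ∃ r, r = (n - 1) % a + 1 := ⟨_, rfl⟩
  have hnk : n = k * a + r := by
    have := Nat.div_add_mod (n - 1) a
    rw [← hk, mul_comm] at this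
    omega
  have hr1 : 1 ≤ r := by omega
  have hra : r ≤ a := by
    have := Nat.mod_lt (n - 1) (show a > 0 by omega)
    omega
  have hkb : a * (d + 1) + 5 * (d + 1) ≤ k := by
    rw [hk, Nat.le_div_iff_mul_le (by omega), mul_comm]
    omega
  obtain ⟨N, hN⟩ : ∃ N, N = k + r := ⟨_, rfl⟩
  obtain ⟨l, hl⟩ : ∃ l, l = (N - 2) / d + 1 := ⟨_, rfl⟩
  have hl3 : 3 ≤ l := by
    have : 2 ≤ (N - 2) / d := by
      rw [Nat.le_div_iff_mul_le (by omega)]; omega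
    omega
  have hdm := Nat.div_add_mod (N - 2) d
  have hml := Nat.mod_lt (N - 2) (show d > 0 by omega)
  have hl' : l - 1 = (N - 2) / d := by omega
  have hdl : d * l = d * ((N - 2) / d) + d := by rw [hl]; ring
  have hdr : d * r ≤ a * d := by rw [mul_comm]; exact Nat.mul_le_mul_right d hra
  have hexp : a * (d + 1) = a * d + a := by ring
  have hrN : d * r + 1 < N := by omega
  obtain ⟨sing, q, flag, q1, q2, q3, q4, q5, q6, q7, q8, q9, q10⟩ :=
    aux_numeric d N l r (by omega) hl3 hr1 (by rw [hl']; omega) (by omega) hrN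
  have hτ : ∀ t, (τ t).val ≤ d := fun t => Nat.lt_succ_iff.mp (τ t).isLt
  have hlt0 : 0 < l := by omega
  have hlt1 : 1 < l := by omega
  have : Nontrivial T₂ := inferInstance
  let fd : Fin (d + 1) := ⟨d, by omega⟩
  let f0 : Fin (d + 1) := ⟨0, by omega⟩
  let f1 : Fin (d + 1) := ⟨1, by omega⟩
  have hinj : ∀ u v : Fin l × T₂, u.1.val = v.1.val → (τ u.2).val = (τ v.2).val → u = v :=
    fun u v e1 e2 => Prod.ext (Fin.ext e1) (τ.injective (Fin.ext e2))
  obtain ⟨Ω, i1, i2, hcard, φ1, φ2, j1, j2, hle⟩ := aux_construct (T1 := T₁) (T2 := T₂) N l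
    (fun i => sing i.val)
    (fun u => ⟨q u.1.val (τ u.2).val, q1 _ u.1.isLt _ (hτ _)⟩)
    (fun u => flag u.1.val (τ u.2).val)
    (by
      intro u v e1 e2
      obtain ⟨e3, e4⟩ := q2 _ u.1.isLt _ (hτ u.2) _ v.1.isLt _ (hτ v.2)
        (congrArg Fin.val e1) e2
      exact hinj u v e3 e4)
    (by
      intro u v e1 hs
      have e1' : q u.1.val (τ u.2).val = q v.1.val (τ v.2).val := congrArg Fin.val e1
      have hs' : sing (q u.1.val (τ u.2).val) := hs
      have g1 := q3 _ u.1.isLt _ (hτ u.2) hs'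
      have g2 := q3 _ v.1.isLt _ (hτ v.2) (by rw [← e1']; exact hs')
      refine hinj u v ?_ (g1.1.trans g2.1.symm)
      have : d * u.1.val = d * v.1.val := by
        have := g1.2; have := g2.2; omega
      exact Nat.eq_of_mul_eq_mul_left (by omega) this)
    (by
      intro u v e hs hs'
      have g1 := q3 _ u.1.isLt _ (hτ u.2) hs
      have g2 := q3 _ v.1.isLt _ (hτ v.2) hs'
      exact hinj u v (congrArg Fin.val e) (g1.1.trans g2.1.symm))
    (by
      intro i
      obtain ⟨j, hj, t, ht, e⟩ := q4 i.val i.isLt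
      refine ⟨(⟨j, hj⟩, τ.symm ⟨t, by omega⟩), Fin.ext ?_⟩
      simp only [Equiv.apply_symm_apply]
      exact e)
    (by
      intro j hj
      refine ⟨τ.symm fd, τ.symm f0, Fin.ext ?_⟩
      simp only [Equiv.apply_symm_apply]
      exact q5 j hj)
    (⟨0, hlt0⟩, τ.symm fd) (⟨1, hlt1⟩, τ.symm f0) (⟨1, hlt1⟩, τ.symm f1)
    (by
      refine Fin.ext ?_
      simp only [Equiv.apply_symm_apply]
      exact q5 0 hlt1)
    (by simp only [Equiv.apply_symm_apply]; exact q6)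
    (by simp only [Equiv.apply_symm_apply]; exact q7)
    (by simp only [Equiv.apply_symm_apply]; exact q8)
    rfl
    (by simp only [Equiv.apply_symm_apply]; exact q9)
    x s z1 z2 hz hx1 hxx hs1 hsx hxs1 hz1 hz2
  refine aux_transfer h1 h2 n ?_ φ1 φ2 j1 j2 hle
  have c1 : Nat.card {i : Fin N // sing i.val} = r := by
    simp only [q10]
    rw [aux_card_sing, Finset.card_image_of_injective, Nat.card_Icc]
    · omega
    · intro m m' e
      have : d * m = d * m' := by
        simpa using e
      exact Nat.eq_of_mul_eq_mul_left (by omega) this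
    · intro i hi
      simp only [Finset.mem_image, Finset.mem_Icc] at hi
      obtain ⟨m, ⟨_, hm⟩, rfl⟩ := hi
      have := Nat.mul_le_mul_left d hm
      omega
  have c2 : Nat.card {i : Fin N // ¬ sing i.val} = k := by
    classical
    rw [Nat.card_eq_fintype_card] at c1 ⊢
    rw [Fintype.card_subtype_compl, c1, Fintype.card_fin]
    omega
  rw [hcard, c1, c2, haa, hnk]
end

section
/- There is a function f : ℕ → ℕ → ℕ such that for any two finite non-abelian simple groups T₁ and T₂ of orders t₁ and t₂, and every n > f(t₁,t₂), the alternating group Alt(n) is an image of the free product T₁ * T₂; that is, there exists a surjective group homomorphism from T₁ * T₂ onto Alt(n). -/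
open Equiv Pointwise in
/-- The commutator of two permutations whose supports meet in one point is a three-cycle. -/
lemma aux_threeCycle {Ω : Type} [Fintype Ω] [DecidableEq Ω] (a b : Perm Ω) (c : Ω)
    (ha : a c ≠ c) (hb : b c ≠ c) (hu : ∀ x, a x ≠ x → b x ≠ x → x = c) :
    a * b * a⁻¹ * b⁻¹ = swap c (b c) * swap c (a c) ∧
      (swap c (b c) * swap c (a c)).IsThreeCycle := by
  have hba : b (a c) = a c := by
    by_contra h
    exact ha (hu (a c) (fun h' => ha (a.injective h')) h)
  have hab : a (b c) = b c := by
    by_contra h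
    exact hb (hu (b c) h (fun h' => hb (b.injective h')))
  have hne : b c ≠ a c := by
    intro h
    rw [← h] at hba
    exact hb (b.injective hba)
  refine ⟨?_, Perm.isThreeCycle_swap_mul_swap_same hb.symm ha.symm hne⟩
  have key : a * b = (swap c (b c) * swap c (a c)) * (b * a) := by
    ext x
    simp only [Perm.mul_apply]
    by_cases hx : x = c
    · subst hx
      rw [hab, hba, swap_apply_right, swap_apply_left]
    by_cases hax : a x = x
    · rw [hax]
      by_cases hbx : b x = c
      · rw [hbx, swap_apply_left, swap_apply_of_ne_of_ne ha hne.symm]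
      · have h1 : b x ≠ b c := fun h => hx (b.injective h)
        have h2 : b x ≠ a c := by
          intro h
          rw [← hba] at h
          have := b.injective h
          rw [this] at hax
          exact ha (a.injective hax)
        rw [swap_apply_of_ne_of_ne hbx h2, swap_apply_of_ne_of_ne hbx h1]
        by_contra h
        exact hbx (hu _ h (fun h' => by
          have h3 := b.injective h'
          rw [h3] at h
          exact h hax))
    · have hbx : b x = x := by
        by_contra h
        exact hx (hu x hax h)
      rw [hbx]
      by_cases h : a x = c
      · rw [h, swap_apply_of_ne_of_ne hb hne, swap_apply_right]
      · have hb2 : b (a x) = a x := by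
          by_contra h'
          exact h (hu _ (fun h'' => hax (a.injective h'')) h')
        have h1 : a x ≠ a c := fun h => hx (a.injective h)
        have h2 : a x ≠ b c := by
          intro h'
          rw [h'] at hb2
          exact hb (b.injective hb2)
        rw [hb2, swap_apply_of_ne_of_ne h h1, swap_apply_of_ne_of_ne h h2]
  rw [key]; group

open Equiv Pointwise in
/-- Data of a pair of actions on `Ω` which forces the generated group to contain `Alt(Ω)`. -/
structure AuxQ {T₁ T₂ Ω : Type} [Group T₁] [Group T₂] (a : T₁) (b : T₂)
    (ρ₁ : T₁ →* Perm Ω) (ρ₂ : T₂ →* Perm Ω) (c : Ω) : Prop where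
  ha : ρ₁ a c ≠ c
  hb : ρ₂ b c ≠ c
  hu : ∀ x, ρ₁ a x ≠ x → ρ₂ b x ≠ x → x = c
  h₁ : ∃ M : Subgroup T₁, IsCoatom M ∧ ∀ t, ρ₁ t c = c ↔ t ∈ M
  h₂ : ∃ M : Subgroup T₂, IsCoatom M ∧ ∀ t, ρ₂ t c = c ↔ t ∈ M
  gen : ∀ S : Set Ω, c ∈ S → (∀ t, ∀ x ∈ S, ρ₁ t x ∈ S) → (∀ t, ∀ x ∈ S, ρ₂ t x ∈ S) → ∀ x, x ∈ S

open Equiv Pointwise in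
lemma AuxQ.symm {T₁ T₂ Ω : Type} [Group T₁] [Group T₂] {a : T₁} {b : T₂}
    {ρ₁ : T₁ →* Perm Ω} {ρ₂ : T₂ →* Perm Ω} {c : Ω} (h : AuxQ a b ρ₁ ρ₂ c) :
    AuxQ b a ρ₂ ρ₁ c :=
  ⟨h.hb, h.ha, fun x hx hy => h.hu x hy hx, h.h₂, h.h₁, fun S hc h1 h2 => h.gen S hc h2 h1⟩

open Equiv Pointwise in
/-- A block containing `c` and `ρ a c` is invariant when the stabilizer of `c` is maximal. -/
lemma aux_block {T Ω : Type} [Group T] (ρ : T →* Perm Ω) (G : Subgroup (Perm Ω))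
    (hG : ∀ t, ρ t ∈ G) (B : Set Ω) (hB : MulAction.IsBlock G B) (c : Ω) (hc : c ∈ B) (a : T)
    (ha : ρ a c ≠ c) (haB : ρ a c ∈ B)
    (hM : ∃ M : Subgroup T, IsCoatom M ∧ ∀ t, ρ t c = c ↔ t ∈ M) :
    ∀ t, ∀ x ∈ B, ρ t x ∈ B := by
  obtain ⟨M, hM, hMc⟩ := hM
  have key : ∀ t, ρ t c ∈ B → (⟨ρ t, hG t⟩ : G) • B = B := by
    intro t ht
    by_contra hne
    have := MulAction.isBlock_iff_smul_eq_or_disjoint.1 hB ⟨ρ t, hG t⟩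
    rcases this with h | h
    · exact hne h
    · exact Set.disjoint_left.1 h ⟨c, hc, rfl⟩ ht
  let N : Subgroup T := (MulAction.stabilizer G B).comap (ρ.codRestrict G hG)
  have hMN : M < N := by
    refine lt_of_le_of_ne ?_ ?_
    · intro t ht
      exact key t (by rw [(hMc t).2 ht]; exact hc)
    · intro h
      have : a ∈ N := key a haB
      rw [← h] at this
      exact ha ((hMc a).2 this)
  have hN := hM.2 N hMN
  intro t x hx
  have : t ∈ N := by rw [hN]; trivial
  have h2 : (⟨ρ t, hG t⟩ : G) • B = B := this
  rw [← h2]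
  exact ⟨x, hx, rfl⟩

open Equiv Pointwise in
lemma AuxQ.alt_le {T₁ T₂ Ω : Type} [Group T₁] [Group T₂] {a : T₁} {b : T₂}
    {ρ₁ : T₁ →* Perm Ω} {ρ₂ : T₂ →* Perm Ω} {c : Ω} (h : AuxQ a b ρ₁ ρ₂ c)
    [Fintype Ω] [DecidableEq Ω] (G : Subgroup (Perm Ω)) (h1 : ∀ t, ρ₁ t ∈ G) (h2 : ∀ t, ρ₂ t ∈ G) :
    alternatingGroup Ω ≤ G := by
  obtain ⟨hw, h3⟩ := aux_threeCycle (ρ₁ a) (ρ₂ b) c h.ha h.hb h.hu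
  set g := swap c (ρ₂ b c) * swap c (ρ₁ a c) with hg
  have hgG : g ∈ G := by
    rw [← hw]
    exact G.mul_mem (G.mul_mem (G.mul_mem (h1 a) (h2 b)) (G.inv_mem (h1 a))) (G.inv_mem (h2 b))
  have hne : ρ₂ b c ≠ ρ₁ a c := by
    intro he
    have : ρ₁ a c = c := h.hu _ (fun h' => h.ha ((ρ₁ a).injective h'))
      (fun h' => h.hb ((ρ₂ b).injective (by rw [he]; rw [he] at *; exact h')))
    exact h.ha this
  have g1 : g c = ρ₁ a c := by
    simp only [hg, Perm.mul_apply, swap_apply_left]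
    exact swap_apply_of_ne_of_ne h.ha hne.symm
  have g2 : g (ρ₁ a c) = ρ₂ b c := by
    simp [hg]
  have g3 : g (ρ₂ b c) = c := by
    simp only [hg, Perm.mul_apply]
    rw [swap_apply_of_ne_of_ne h.hb hne, swap_apply_right]
  have g4 : ∀ x, x ≠ c → x ≠ ρ₁ a c → x ≠ ρ₂ b c → g x = x := by
    intro x x1 x2 x3
    simp only [hg, Perm.mul_apply]
    rw [swap_apply_of_ne_of_ne x1 x2, swap_apply_of_ne_of_ne x1 x3]
  refine Perm.alternatingGroup_le_of_isPreprimitive_of_isThreeCycle_mem ?_ h3 hgG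
  refine MulAction.IsPreprimitive.of_isTrivialBlock_of_notMem_fixedPoints (a := c) ?_ ?_
  · intro hf
    exact h.ha (hf ⟨ρ₁ a, h1 a⟩)
  · intro B hc hB
    by_cases hs : B.Subsingleton
    · exact Or.inl hs
    right
    have hgB : (⟨g, hgG⟩ : G) • B = B := by
      rcases MulAction.isBlock_iff_smul_eq_or_disjoint.1 hB ⟨g, hgG⟩ with h' | h'
      · exact h'
      exfalso
      have hd : ∀ x ∈ B, g x ∉ B := fun x hx => Set.disjoint_left.1 h' ⟨x, hx, rfl⟩
      apply hs
      have : ∀ x ∈ B, x = c := by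
        intro x hx
        by_contra hxc
        by_cases x2 : x = ρ₁ a c
        · exact hd c hc (by rw [g1, ← x2]; exact hx)
        by_cases x3 : x = ρ₂ b c
        · exact hd x hx (by rw [x3, g3]; exact hc)
        exact hd x hx (by rw [g4 x hxc x2 x3]; exact hx)
      intro x hx y hy
      rw [this x hx, this y hy]
    have hgm : ∀ x ∈ B, g x ∈ B := fun x hx => by
      rw [← hgB]; exact ⟨x, hx, rfl⟩
    have haB : ρ₁ a c ∈ B := g1 ▸ hgm c hc
    have hbB : ρ₂ b c ∈ B := g2 ▸ hgm _ haB
    exact Set.eq_univ_of_forall (h.gen B hc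
      (aux_block ρ₁ G h1 B hB c hc a h.ha haB h.h₁) (aux_block ρ₂ G h2 B hB c hc b h.hb hbB h.h₂))

open Equiv Pointwise in
/-- Attach a `T`-set `X` to a `T`-set `Ω`, gluing along fixed points of `Ω`. -/
lemma aux_ext {T Ω X : Type} [Group T] (ρ : T →* Perm Ω) (π : T →* Perm X) (S : Set X)
    (ι : S → Ω) (hι : Function.Injective ι) (hfix : ∀ s t, ρ t (ι s) = ι s) :
    ∃ ρ' : T →* Perm (Ω ⊕ (Sᶜ : Set X)), ∃ j : X → Ω ⊕ (Sᶜ : Set X),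
      (∀ s (h : s ∈ S), j s = Sum.inl (ι ⟨s, h⟩)) ∧
      (∀ s (h : s ∈ Sᶜ), j s = Sum.inr ⟨s, h⟩) ∧
      (∀ t x, ρ' t (j x) = j (π t x)) ∧
      (∀ t x, x ∉ Set.range ι → ρ' t (Sum.inl x) = Sum.inl (ρ t x)) := by
  classical
  let j : X → Ω ⊕ (Sᶜ : Set X) := fun x =>
    if h : x ∈ S then Sum.inl (ι ⟨x, h⟩) else Sum.inr ⟨x, h⟩
  have j1 : ∀ s (h : s ∈ S), j s = Sum.inl (ι ⟨s, h⟩) := fun s h => dif_pos h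
  have j2 : ∀ s (h : s ∈ Sᶜ), j s = Sum.inr ⟨s, h⟩ := fun s h => dif_neg h
  have hj : Function.Injective j := by
    intro x y hxy
    by_cases hx : x ∈ S <;> by_cases hy : y ∈ S
    · rw [j1 x hx, j1 y hy] at hxy
      exact congrArg Subtype.val (hι (Sum.inl.inj hxy))
    · rw [j1 x hx, j2 y hy] at hxy; cases hxy
    · rw [j2 x hx, j1 y hy] at hxy; cases hxy
    · rw [j2 x hx, j2 y hy] at hxy
      exact congrArg Subtype.val (Sum.inr.inj hxy)
  let J : X ↪ Ω ⊕ (Sᶜ : Set X) := ⟨j, hj⟩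
  let A : T → Perm (Ω ⊕ (Sᶜ : Set X)) := fun t => Perm.viaEmbeddingHom J (π t)
  let B : T → Perm (Ω ⊕ (Sᶜ : Set X)) := fun t => Equiv.sumCongr (ρ t) (Equiv.refl _)
  have A1 : ∀ t x, A t (j x) = j (π t x) := fun t x => Perm.viaEmbedding_apply (π t) J x
  have A2 : ∀ t x, x ∉ Set.range j → A t x = x := fun t x hx =>
    Perm.viaEmbedding_apply_of_notMem (π t) J x hx
  have B1 : ∀ t x, B t (j x) = j x := by
    intro t x
    by_cases hx : x ∈ S
    · rw [j1 x hx]; simp [B, hfix]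
    · rw [j2 x hx]; simp [B]
  have hcomm : ∀ s t, A s * B t = B t * A s := by
    intro s t
    apply Perm.Disjoint.commute
    intro x
    by_cases hx : x ∈ Set.range j
    · obtain ⟨y, rfl⟩ := hx
      exact Or.inr (B1 t y)
    · exact Or.inl (A2 s x hx)
  let ρ' : T →* Perm (Ω ⊕ (Sᶜ : Set X)) := MonoidHom.mk' (fun t => A t * B t) (by
    intro s t
    have hA : A (s * t) = A s * A t := by simp [A]
    have hB : B (s * t) = B s * B t := by
      ext x; rcases x with x | x <;> simp [B]
    rw [hA, hB, mul_assoc, ← mul_assoc (A t), hcomm t s]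
    simp only [mul_assoc])
  refine ⟨ρ', j, j1, j2, ?_, ?_⟩
  · intro t x
    change A t (B t (j x)) = _
    rw [B1, A1]
  · intro t x hx
    change A t (B t (Sum.inl x)) = _
    have : B t (Sum.inl x) = Sum.inl (ρ t x) := by simp [B]
    rw [this]
    apply A2
    rintro ⟨y, hy⟩
    by_cases hyS : y ∈ S
    · rw [j1 y hyS] at hy
      have h1 := Sum.inl.inj hy
      apply hx
      refine ⟨⟨y, hyS⟩, ?_⟩
      apply (ρ t).injective
      rw [hfix, h1]
    · rw [j2 y hyS] at hy; cases hy

open Equiv Pointwise in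
/-- Extend an action trivially. -/
lemma aux_triv {T Ω Y : Type} [Group T] (ρ : T →* Perm Ω) :
    ∃ ρ' : T →* Perm (Ω ⊕ Y), (∀ t x, ρ' t (Sum.inl x) = Sum.inl (ρ t x)) ∧
      ∀ t x, ρ' t (Sum.inr x) = Sum.inr x :=
  ⟨MonoidHom.mk' (fun t => Equiv.sumCongr (ρ t) (Equiv.refl _)) (by
    intro s t; ext x; rcases x with x | x <;> simp), by simp, by simp⟩

open Equiv Pointwise in
/-- One extension step. -/
lemma AuxQ.step {T₁ T₂ Ω X : Type} [Group T₁] [Group T₂] {a : T₁} {b : T₂}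
    {ρ₁ : T₁ →* Perm Ω} {ρ₂ : T₂ →* Perm Ω} {c : Ω} (h : AuxQ a b ρ₁ ρ₂ c)
    (π : T₁ →* Perm X) (S : Set X) (hS : S.Nonempty) (hSa : ∀ s ∈ S, π a s = s)
    (htr : ∀ x y, ∃ t, π t x = y)
    (ι : S → Ω) (hι : Function.Injective ι) (hfix : ∀ s t, ρ₁ t (ι s) = ι s) :
    ∃ (ρ₁' : T₁ →* Perm (Ω ⊕ (Sᶜ : Set X))) (ρ₂' : T₂ →* Perm (Ω ⊕ (Sᶜ : Set X))),
      AuxQ a b ρ₁' ρ₂' (Sum.inl c) ∧ ∀ t x, ρ₂' t (Sum.inr x) = Sum.inr x := by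
  obtain ⟨ρ₁', j, j1, j2, e1, e2⟩ := aux_ext ρ₁ π S ι hι hfix
  obtain ⟨ρ₂', f1, f2⟩ := aux_triv (Y := (Sᶜ : Set X)) ρ₂
  have hcr : c ∉ Set.range ι := by
    rintro ⟨s, rfl⟩
    exact h.ha (hfix s a)
  refine ⟨ρ₁', ρ₂', ⟨?_, ?_, ?_, ?_, ?_, ?_⟩, f2⟩
  · rw [e2 _ _ hcr]
    exact fun h' => h.ha (Sum.inl.inj h')
  · rw [f1]
    exact fun h' => h.hb (Sum.inl.inj h')
  · rintro (x | x) hx hy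
    · by_cases hxr : x ∈ Set.range ι
      · obtain ⟨⟨s, hs⟩, rfl⟩ := hxr
        exfalso; apply hx
        rw [← j1 s hs, e1, hSa s hs]
      · rw [e2 _ _ hxr] at hx
        rw [f1] at hy
        rw [h.hu x (fun h' => hx (by rw [h'])) (fun h' => hy (by rw [h']))]
    · exact absurd (f2 b x) hy
  · obtain ⟨M, hM, hMc⟩ := h.h₁
    refine ⟨M, hM, fun t => ?_⟩
    rw [e2 _ _ hcr, ← hMc]
    exact Sum.inl_injective.eq_iff
  · obtain ⟨M, hM, hMc⟩ := h.h₂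
    refine ⟨M, hM, fun t => ?_⟩
    rw [f1, ← hMc]
    exact Sum.inl_injective.eq_iff
  · intro U hc hU1 hU2
    have hl : ∀ x, Sum.inl x ∈ U := by
      refine h.gen (Sum.inl ⁻¹' U) hc ?_ ?_
      · intro t x hx
        by_cases hxr : x ∈ Set.range ι
        · obtain ⟨s, rfl⟩ := hxr
          rw [hfix]; exact hx
        · change Sum.inl _ ∈ U
          rw [← e2 _ _ hxr]
          exact hU1 t _ hx
      · intro t x hx
        change Sum.inl _ ∈ U
        rw [← f1]
        exact hU2 t _ hx
    rintro (x | x)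
    · exact hl x
    · obtain ⟨s, hs⟩ := hS
      obtain ⟨t, ht⟩ := htr s x
      rw [← j2 x.1 x.2, ← ht, ← e1, j1 s hs]
      exact hU1 t _ (hl _)

open Equiv Pointwise in
/-- The core configuration. -/
lemma aux_core_s1 {T₁ T₂ X₁ X₂ : Type} [Group T₁] [Group T₂] (a : T₁) (b : T₂)
    (π₁ : T₁ →* Perm X₁) (π₂ : T₂ →* Perm X₂) (s₁ : X₁) (s₂ : X₂)
    (ha : π₁ a s₁ ≠ s₁) (hb : π₂ b s₂ ≠ s₂)
    (h₁ : ∃ M : Subgroup T₁, IsCoatom M ∧ ∀ t, π₁ t s₁ = s₁ ↔ t ∈ M)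
    (h₂ : ∃ M : Subgroup T₂, IsCoatom M ∧ ∀ t, π₂ t s₂ = s₂ ↔ t ∈ M)
    (htr₁ : ∀ x y, ∃ t, π₁ t x = y) (htr₂ : ∀ x y, ∃ t, π₂ t x = y) :
    ∃ (ρ₁ : T₁ →* Perm (X₂ ⊕ (({s₁} : Set X₁)ᶜ : Set X₁)))
      (ρ₂ : T₂ →* Perm (X₂ ⊕ (({s₁} : Set X₁)ᶜ : Set X₁))),
      AuxQ a b ρ₁ ρ₂ (Sum.inl s₂) ∧ ∀ t x, x ≠ s₂ → ρ₁ t (Sum.inl x) = Sum.inl x := by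
  obtain ⟨ρ₁, j, j1, j2, e1, e2⟩ := aux_ext (1 : T₁ →* Perm X₂) π₁ {s₁} (fun _ => s₂)
    (fun x y _ => Subsingleton.elim x y) (fun _ _ => rfl)
  obtain ⟨ρ₂, f1, f2⟩ := aux_triv (Y := (({s₁} : Set X₁)ᶜ : Set X₁)) π₂
  have js : j s₁ = Sum.inl s₂ := j1 s₁ rfl
  have jinj : ∀ x, j x = Sum.inl s₂ ↔ x = s₁ := by
    intro x
    constructor
    · intro hx
      by_contra hne
      rw [j2 x hne] at hx; cases hx
    · rintro rfl; exact js
  have e3 : ∀ t x, x ≠ s₂ → ρ₁ t (Sum.inl x) = Sum.inl x := by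
    intro t x hx
    exact e2 t x (by rintro ⟨_, h⟩; exact hx h.symm)
  refine ⟨ρ₁, ρ₂, ⟨?_, ?_, ?_, ?_, ?_, ?_⟩, e3⟩
  · rw [← js, e1, js, Ne, jinj]; exact ha
  · rw [f1]; exact fun h => hb (Sum.inl.inj h)
  · rintro (x | x) hx hy
    · by_contra hne
      exact hx (e3 a x (fun h => hne (by rw [h])))
    · exact absurd (f2 b x) hy
  · obtain ⟨M, hM, hMc⟩ := h₁
    refine ⟨M, hM, fun t => ?_⟩
    rw [← js, e1, js, jinj, hMc]
  · obtain ⟨M, hM, hMc⟩ := h₂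
    refine ⟨M, hM, fun t => ?_⟩
    rw [f1, ← hMc]
    exact Sum.inl_injective.eq_iff
  · rintro U hc hU1 hU2 (x | x)
    · obtain ⟨t, ht⟩ := htr₂ s₂ x
      rw [← ht, ← f1]; exact hU2 t _ hc
    · obtain ⟨t, ht⟩ := htr₁ s₁ x
      rw [← j2 x.1 x.2, ← ht, ← e1, js]
      exact hU1 t _ hc

/-- A proper subgroup of a non-abelian finite simple group has index at least three. -/
lemma aux_index {T : Type} [Group T] [Finite T] [IsSimpleGroup T]
    (hT : ¬ ∀ x y : T, x * y = y * x) (H : Subgroup T) (hH : H ≠ ⊤) : 3 ≤ H.index := by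
  have h0 : H.index ≠ 0 := Subgroup.index_ne_zero_of_finite
  have h1 : H.index ≠ 1 := fun h => hH (Subgroup.index_eq_one.1 h)
  have h2 : H.index ≠ 2 := by
    intro h
    have hn := Subgroup.normal_of_index_eq_two h
    rcases hn.eq_bot_or_eq_top with hb | ht
    · rw [hb, Subgroup.index_bot] at h
      have : Fact (Nat.Prime 2) := ⟨Nat.prime_two⟩
      have := isCyclic_of_prime_card h
      exact hT fun x y => (IsCyclic.isMulCommutative (α := T)).is_comm.comm x y
    · exact hH ht
  omega

lemma aux_groupData (T : Type) [Group T] [Finite T] [IsSimpleGroup T]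
    (hT : ¬ ∀ x y : T, x * y = y * x) :
    ∃ a : T, (∃ M : Subgroup T, IsCoatom M ∧ a ∉ M) ∧
      ∃ H : Subgroup T, a ∈ H ∧ ∃ k, k ∉ H ∧ k⁻¹ * a * k ∈ H := by
  have hsq : ¬ Squarefree (Nat.card T) := by
    intro h
    have := IsZGroup.of_squarefree h
    have hs : Group.IsSolvable T := inferInstance
    exact hT (IsSimpleGroup.comm_iff_isSolvable.2 hs)
  rw [Nat.squarefree_iff_prime_squarefree] at hsq
  push Not at hsq
  obtain ⟨p, hp, hdvd⟩ := hsq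
  have := Fact.mk hp
  obtain ⟨K, hK⟩ := Sylow.exists_subgroup_card_pow_prime (G := T) p (n := 2) (by rwa [pow_two])
  have hKc := IsPGroup.isMulCommutative_of_card_eq_prime_sq hK
  obtain ⟨a, ha⟩ := exists_prime_orderOf_dvd_card' (G := K) p (by rw [hK, pow_two]; exact dvd_mul_left _ _)
  have hlt : ¬ K ≤ Subgroup.zpowers (a : T) := by
    intro h
    have h1 := Subgroup.card_le_of_le h
    rw [hK, Nat.card_zpowers, Subgroup.orderOf_coe, ha] at h1
    have := hp.two_le
    nlinarith
  obtain ⟨k, hk, hkH⟩ := Set.not_subset.1 hlt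
  refine ⟨a, ?_, Subgroup.zpowers (a : T), Subgroup.mem_zpowers _, k, hkH, ?_⟩
  · by_contra hcon
    push Not at hcon
    have haF : (a : T) ∈ frattini T := by
      simp only [frattini, Order.radical, Subgroup.mem_iInf]
      exact fun M hM => hcon M hM
    have hn : (frattini T).Normal := inferInstance
    rcases hn.eq_bot_or_eq_top with hb | ht
    · rw [hb, Subgroup.mem_bot] at haF
      have : a = 1 := Subtype.ext haF
      rw [this, orderOf_one] at ha
      exact hp.one_lt.ne ha
    · obtain ⟨M, hM, -⟩ := (eq_top_or_exists_le_coatom (⊥ : Subgroup T)).resolve_left bot_ne_top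
      have := frattini_le_coatom hM
      rw [ht] at this
      exact hM.1 (top_le_iff.1 this)
  · have : (a : T) * k = k * a := congrArg Subtype.val (hKc.is_comm.comm a ⟨k, hk⟩)
    rw [mul_assoc, this]
    simp

open Equiv Pointwise in
/-- The configurations on `n` points. -/
def AuxGood {T₁ T₂ : Type} [Group T₁] [Group T₂] (a : T₁) (b : T₂) (n : ℕ) : Prop :=
  ∃ (Ω : Type) (_ : Finite Ω) (ρ₁ : T₁ →* Perm Ω) (ρ₂ : T₂ →* Perm Ω) (c : Ω),
    Nat.card Ω = n ∧ AuxQ a b ρ₁ ρ₂ c ∧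
    ∃ e e' : Ω, e ≠ e' ∧ (∀ t, ρ₁ t e = e) ∧ (∀ t, ρ₁ t e' = e')

lemma aux_card_compl {X : Type} [Finite X] (S : Set X) :
    Nat.card (Sᶜ : Set X) = Nat.card X - S.ncard := by
  rw [Nat.card_coe_set_eq, Set.ncard_compl]

lemma aux_exists_two {X : Type} [Finite X] (h : 3 ≤ Nat.card X) (q : X) :
    ∃ y y' : X, y ≠ q ∧ y' ≠ q ∧ y ≠ y' := by
  have : 1 < (({q} : Set X)ᶜ).ncard := by
    rw [Set.ncard_compl, Set.ncard_singleton]; omega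
  obtain ⟨y, y', hy, hy', hne⟩ := (Set.one_lt_ncard (Set.toFinite _)).1 this |> fun ⟨y, hy, y', hy', hne⟩ =>
    (⟨y, y', hy, hy', hne⟩ : ∃ y y', y ∈ ({q} : Set X)ᶜ ∧ y' ∈ ({q} : Set X)ᶜ ∧ y ≠ y')
  exact ⟨y, y', hy, hy', hne⟩

open Equiv Pointwise in
/-- Attach a `T₁`-orbit along the set `S`, followed by a `T₂`-orbit. -/
lemma aux_good_step {T₁ T₂ X₁ X₂ : Type} [Group T₁] [Group T₂] [Finite X₁] [Finite X₂]
    {a : T₁} {b : T₂}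
    (π₁ : T₁ →* Perm X₁) (π₂ : T₂ →* Perm X₂)
    (htr₁ : ∀ x y, ∃ t, π₁ t x = y) (htr₂ : ∀ x y, ∃ t, π₂ t x = y)
    (S : Set X₁) (hS : S.Nonempty) (hSa : ∀ s ∈ S, π₁ a s = s) (hcard : S.ncard < Nat.card X₁)
    (q : X₂) (hq : π₂ b q = q) (hX₂ : 3 ≤ Nat.card X₂)
    {Ω : Type} [Finite Ω] {ρ₁ : T₁ →* Perm Ω} {ρ₂ : T₂ →* Perm Ω} {c : Ω} (h : AuxQ a b ρ₁ ρ₂ c)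
    (ι : S → Ω) (hι : Function.Injective ι) (hfix : ∀ s t, ρ₁ t (ι s) = ι s) :
    AuxGood a b (Nat.card Ω + (Nat.card X₁ - S.ncard) + (Nat.card X₂ - 1)) := by
  obtain ⟨σ₁, σ₂, hσ, hσf⟩ := h.step π₁ S hS hSa htr₁ ι hι hfix
  have : ∃ f, f ∈ Sᶜ := by
    by_contra hcon
    push Not at hcon
    have : S = Set.univ := Set.eq_univ_of_forall fun x => not_not.1 (hcon x)
    rw [this, Set.ncard_univ] at hcard
    exact lt_irrefl _ hcard
  obtain ⟨f, hf⟩ := this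
  obtain ⟨τ₂, τ₁, hτ, hτf⟩ := hσ.symm.step π₂ {q} ⟨q, rfl⟩ (by rintro s rfl; exact hq) htr₂
    (fun _ => Sum.inr ⟨f, hf⟩) (fun x y _ => Subsingleton.elim x y) (fun _ t => hσf t _)
  obtain ⟨y, y', hy, hy', hne⟩ := aux_exists_two hX₂ q
  refine ⟨_, inferInstance, τ₁, τ₂, _, ?_, hτ.symm, Sum.inr ⟨y, hy⟩, Sum.inr ⟨y', hy'⟩, ?_,
    fun t => hτf t _, fun t => hτf t _⟩
  · rw [Nat.card_sum, Nat.card_sum, aux_card_compl, aux_card_compl, Set.ncard_singleton]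
  · intro h
    exact hne (congrArg Subtype.val (Sum.inr.inj h))

lemma aux_arith (D N : ℕ) (hD : 0 < D) (hN : D * D ≤ N) : ∃ i j : ℕ, N = i * D + j * (D - 1) := by
  have h1 := Nat.div_add_mod N D
  have h2 := Nat.mod_lt N hD
  have h3 : D ≤ N / D := (Nat.le_div_iff_mul_le hD).2 hN
  refine ⟨N / D + 1 - (D - N % D), D - N % D, ?_⟩
  generalize N / D = q at *
  generalize N % D = r at *
  obtain ⟨k, rfl⟩ : ∃ k, D = k + 1 := ⟨D - 1, by omega⟩
  obtain ⟨s, hs⟩ : ∃ s, k + 1 = r + s := ⟨k + 1 - r, by omega⟩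
  obtain ⟨m, hm⟩ : ∃ m, q + 1 = m + s := ⟨q + 1 - s, by omega⟩
  have e1 : k + 1 - r = s := by omega
  have e2 : q + 1 - s = m := by omega
  have e3 : k + 1 - 1 = k := rfl
  rw [e1, e2, e3, ← h1]
  have : (k + 1) * (q + 1) = (k + 1) * (m + s) := by rw [hm]
  nlinarith

open Equiv Pointwise in
lemma aux_good {T₁ T₂ : Type} [Group T₁] [Group T₂] [Finite T₁] [Finite T₂]
    [IsSimpleGroup T₁] [IsSimpleGroup T₂]
    (hT₁ : ¬ ∀ x y : T₁, x * y = y * x) (hT₂ : ¬ ∀ x y : T₂, x * y = y * x) :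
    ∃ (a : T₁) (b : T₂), ∀ n : ℕ,
      n > (Nat.card T₁ + Nat.card T₂) + (Nat.card T₁ + Nat.card T₂) * (Nat.card T₁ + Nat.card T₂) →
      AuxGood a b n := by
  obtain ⟨a, ⟨M₁, hM₁, haM⟩, H₁, haH, k, hkH, hak⟩ := aux_groupData T₁ hT₁
  obtain ⟨b, ⟨M₂, hM₂, hbM⟩, H₂, hbH, k₂, hk₂, -⟩ := aux_groupData T₂ hT₂
  refine ⟨a, b, ?_⟩
  have stab : ∀ {T : Type} [Group T] (H : Subgroup T) (t : T),
      MulAction.toPermHom T (T ⧸ H) t ((1 : T) : T ⧸ H) = ((1 : T) : T ⧸ H) ↔ t ∈ H := by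
    intro T _ H t
    change ((t * 1 : T) : T ⧸ H) = ((1 : T) : T ⧸ H) ↔ t ∈ H
    rw [eq_comm, QuotientGroup.eq]; simp
  have tr : ∀ {T : Type} [Group T] (H : Subgroup T) (x y : T ⧸ H),
      ∃ t, MulAction.toPermHom T (T ⧸ H) t x = y := by
    intro T _ H x y
    exact MulAction.exists_smul_eq T x y
  have iH₁ : 3 ≤ Nat.card (T₁ ⧸ H₁) := aux_index hT₁ H₁ (by rintro rfl; exact hkH trivial)
  have iH₂ : 3 ≤ Nat.card (T₂ ⧸ H₂) := aux_index hT₂ H₂ (by rintro rfl; exact hk₂ trivial)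
  have iM₂ : 3 ≤ Nat.card (T₂ ⧸ M₂) := aux_index hT₂ M₂ hM₂.1
  have iM₁ : 3 ≤ Nat.card (T₁ ⧸ M₁) := aux_index hT₁ M₁ hM₁.1
  have lH₁ : Nat.card (T₁ ⧸ H₁) ≤ Nat.card T₁ := Nat.card_le_card_of_surjective _ Quotient.mk_surjective
  have lH₂ : Nat.card (T₂ ⧸ H₂) ≤ Nat.card T₂ := Nat.card_le_card_of_surjective _ Quotient.mk_surjective
  have lM₁ : Nat.card (T₁ ⧸ M₁) ≤ Nat.card T₁ := Nat.card_le_card_of_surjective _ Quotient.mk_surjective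
  have lM₂ : Nat.card (T₂ ⧸ M₂) ≤ Nat.card T₂ := Nat.card_le_card_of_surjective _ Quotient.mk_surjective
  -- core
  have hcore : AuxGood a b (Nat.card (T₂ ⧸ M₂) + (Nat.card (T₁ ⧸ M₁) - 1)) := by
    obtain ⟨ρ₁, ρ₂, hQ, hf⟩ := aux_core_s1 a b (MulAction.toPermHom T₁ (T₁ ⧸ M₁))
      (MulAction.toPermHom T₂ (T₂ ⧸ M₂)) ((1 : T₁) : T₁ ⧸ M₁) ((1 : T₂) : T₂ ⧸ M₂)
      (fun h => haM ((stab M₁ a).1 h)) (fun h => hbM ((stab M₂ b).1 h))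
      ⟨M₁, hM₁, stab M₁⟩ ⟨M₂, hM₂, stab M₂⟩ (tr M₁) (tr M₂)
    obtain ⟨y, y', hy, hy', hne⟩ := aux_exists_two iM₂ ((1 : T₂) : T₂ ⧸ M₂)
    refine ⟨_, inferInstance, ρ₁, ρ₂, _, ?_, hQ, Sum.inl y, Sum.inl y',
      fun h => hne (Sum.inl.inj h), fun t => hf t y hy, fun t => hf t y' hy'⟩
    rw [Nat.card_sum, aux_card_compl, Set.ncard_singleton]
  -- steps
  let p : T₁ ⧸ H₁ := ((1 : T₁) : T₁ ⧸ H₁)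
  let p' : T₁ ⧸ H₁ := ((k : T₁) : T₁ ⧸ H₁)
  have hp : MulAction.toPermHom T₁ (T₁ ⧸ H₁) a p = p := (stab H₁ a).2 haH
  have hp' : MulAction.toPermHom T₁ (T₁ ⧸ H₁) a p' = p' := by
    change ((a * k : T₁) : T₁ ⧸ H₁) = ((k : T₁) : T₁ ⧸ H₁)
    rw [eq_comm, QuotientGroup.eq, ← mul_assoc]; exact hak
  have hpp : p ≠ p' := by
    intro h
    have := QuotientGroup.eq.1 h
    simp at this
    exact hkH this
  have step1 : ∀ n, AuxGood a b n →
      AuxGood a b (n + (Nat.card (T₁ ⧸ H₁) - 1) + (Nat.card (T₂ ⧸ H₂) - 1)) := by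
    rintro n ⟨Ω, _, ρ₁, ρ₂, c, rfl, hQ, e, e', hne, he, he'⟩
    have := aux_good_step (MulAction.toPermHom T₁ (T₁ ⧸ H₁)) (MulAction.toPermHom T₂ (T₂ ⧸ H₂))
      (tr H₁) (tr H₂) {p} ⟨p, rfl⟩ (by rintro s rfl; exact hp) (by rw [Set.ncard_singleton]; omega)
      _ ((stab H₂ b).2 hbH) iH₂ hQ (fun _ => e) (fun x y _ => Subsingleton.elim x y) (fun _ t => he t)
    rwa [Set.ncard_singleton] at this
  have step2 : ∀ n, AuxGood a b n →
      AuxGood a b (n + (Nat.card (T₁ ⧸ H₁) - 2) + (Nat.card (T₂ ⧸ H₂) - 1)) := by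
    classical
    rintro n ⟨Ω, _, ρ₁, ρ₂, c, rfl, hQ, e, e', hne, he, he'⟩
    have := aux_good_step (MulAction.toPermHom T₁ (T₁ ⧸ H₁)) (MulAction.toPermHom T₂ (T₂ ⧸ H₂))
      (tr H₁) (tr H₂) {p, p'} ⟨p, Or.inl rfl⟩
      (by rintro s (rfl | rfl); exacts [hp, hp']) (by rw [Set.ncard_pair hpp]; omega)
      _ ((stab H₂ b).2 hbH) iH₂ hQ (fun s => if s.1 = p then e else e')
      (by
        rintro ⟨x, rfl | rfl⟩ ⟨y, rfl | rfl⟩ hxy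
        · rfl
        · simp [hpp.symm, hne] at hxy
        · simp [hpp.symm, hne.symm] at hxy
        · rfl)
      (by
        intro s t
        split_ifs
        · exact he t
        · exact he' t)
    rwa [Set.ncard_pair hpp] at this
  intro n hn
  generalize Nat.card (T₁ ⧸ H₁) = d₁ at *
  generalize Nat.card (T₂ ⧸ H₂) = d₂ at *
  generalize Nat.card (T₁ ⧸ M₁) = m₁ at *
  generalize Nat.card (T₂ ⧸ M₂) = m₂ at *
  generalize Nat.card T₁ = t₁ at *
  generalize Nat.card T₂ = t₂ at *
  obtain ⟨D, hD⟩ : ∃ D, D = d₁ + d₂ - 2 := ⟨_, rfl⟩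
  have hDt : D * D ≤ (t₁ + t₂) * (t₁ + t₂) := Nat.mul_le_mul (by omega) (by omega)
  obtain ⟨i, j, hij⟩ := aux_arith D (n - (m₂ + (m₁ - 1))) (by omega) (by omega)
  have hi : ∀ i n, AuxGood a b n → AuxGood a b (n + i * D) := by
    intro i
    induction i with
    | zero => intro n h; simpa using h
    | succ i ih =>
      intro n h
      have := step1 _ (ih n h)
      convert this using 1
      rw [add_mul]; omega
  have hj : ∀ i n, AuxGood a b n → AuxGood a b (n + i * (D - 1)) := by
    intro i
    induction i with
    | zero => intro n h; simpa using h
    | succ i ih =>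
      intro n h
      have := step2 _ (ih n h)
      convert this using 1
      rw [add_mul]; omega
  have := hj j _ (hi i _ hcore)
  convert this using 1
  omega

open Equiv Pointwise in
lemma aux_even {T Ω : Type} [Group T] [IsSimpleGroup T] [Fintype Ω] [DecidableEq Ω]
    (hT : ¬ ∀ x y : T, x * y = y * x) (ρ : T →* Perm Ω) (t : T) : ρ t ∈ alternatingGroup Ω := by
  rw [Perm.mem_alternatingGroup]
  let s : T →* ℤˣ := Perm.sign.comp ρ
  have hn : s.ker.Normal := inferInstance
  rcases hn.eq_bot_or_eq_top with hb | ht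
  · exfalso
    have hinj := (MonoidHom.ker_eq_bot_iff s).1 hb
    exact hT fun x y => hinj (by rw [map_mul, map_mul, mul_comm])
  · have : t ∈ s.ker := by rw [ht]; trivial
    exact this

/-- Corollary 2.2 (alternating case): there is a function `f : ℕ → ℕ → ℕ` such that for any
two finite non-abelian simple groups `T₁, T₂` of orders `t₁, t₂` and every `n > f t₁ t₂`,
the alternating group `Alt(n)` is an image of the free product `T₁ * T₂`. -/
theorem stmt_1 :
    ∃ f : ℕ → ℕ → ℕ,
      ∀ (T₁ T₂ : Type) [Group T₁] [Group T₂] [Finite T₁] [Finite T₂]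
        [IsSimpleGroup T₁] [IsSimpleGroup T₂],
        (¬ ∀ x y : T₁, x * y = y * x) → (¬ ∀ x y : T₂, x * y = y * x) →
        ∀ n : ℕ, n > f (Nat.card T₁) (Nat.card T₂) →
          ∃ φ : Monoid.Coprod T₁ T₂ →* alternatingGroup (Fin n),
            Function.Surjective φ := by
  refine ⟨fun t₁ t₂ => (t₁ + t₂) + (t₁ + t₂) * (t₁ + t₂), ?_⟩
  intro T₁ T₂ _ _ _ _ _ _ hT₁ hT₂ n hn
  obtain ⟨a, b, hab⟩ := aux_good hT₁ hT₂
  obtain ⟨Ω, hΩ, ρ₁, ρ₂, c, hcard, hQ, -⟩ := hab n hn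
  classical
  have := Fintype.ofFinite Ω
  let E : Ω ≃ Fin n := Finite.equivFinOfCardEq hcard
  let F : alternatingGroup Ω ≃* alternatingGroup (Fin n) := E.altCongrHom
  let ψ₁ : T₁ →* alternatingGroup Ω := ρ₁.codRestrict _ (aux_even hT₁ ρ₁)
  let ψ₂ : T₂ →* alternatingGroup Ω := ρ₂.codRestrict _ (aux_even hT₂ ρ₂)
  let ψ : Monoid.Coprod T₁ T₂ →* alternatingGroup Ω := Monoid.Coprod.lift ψ₁ ψ₂
  refine ⟨F.toMonoidHom.comp ψ, F.surjective.comp ?_⟩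
  have hle := hQ.alt_le (ψ.range.map (alternatingGroup Ω).subtype)
    (fun t => ⟨ψ₁ t, ⟨Monoid.Coprod.inl t, by simp [ψ]⟩, rfl⟩)
    (fun t => ⟨ψ₂ t, ⟨Monoid.Coprod.inr t, by simp [ψ]⟩, rfl⟩)
  intro x
  obtain ⟨y, ⟨z, hz⟩, hy⟩ := hle x.2
  exact ⟨z, by rw [hz]; exact Subtype.ext hy⟩
end

section
/- There is a function f : ℕ → ℕ → ℕ such that for any two finite non-abelian simple groups T₁ and T₂ of orders t₁ and t₂, every n > f(t₁,t₂), and every finite field K, the projective special linear group PSL_n(K) is generated by a copy of T₁ and a copy of T₂; that is, there exist subgroups H₁, H₂ of PSL_n(K) with H₁ isomorphic to T₁, H₂ isomorphic to T₂, and H₁ ⊔ H₂ = PSL_n(K). -/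
section allParts
open Matrix

section partA
variable {ι K : Type*} [DecidableEq ι] [Fintype ι] [Field K]

lemma hdiag_mul {i j : ι} (hij : i ≠ j) (a : K) (ha : a ≠ 0) :
    (transvection i j a * transvection j i (-a⁻¹) * transvection i j a) *
    (transvection i j (-1) * transvection j i 1 * transvection i j (-1)) =
    diagonal (fun k => if k = i then a else if k = j then a⁻¹ else 1) := by
  have hd : diagonal (fun k => if k = i then a else if k = j then a⁻¹ else 1) =
      (1 : Matrix ι ι K) + single i i (a - 1) + single j j (a⁻¹ - 1) := by
    ext k l
    simp only [diagonal_apply, Matrix.add_apply, one_apply, single_apply]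
    split_ifs <;> grind
  rw [hd]
  simp only [transvection, mul_add, add_mul, one_mul, mul_one, single_mul_single_same,
    single_mul_single_of_ne _ _ _ _ hij, single_mul_single_of_ne _ _ _ _ hij.symm, add_zero, zero_mul, mul_zero, zero_add]
  ext k l
  simp only [Matrix.add_apply, one_apply, single_apply]
  have := mul_inv_cancel₀ ha
  split_ifs <;> grind

theorem SL_eq_top_of_transvections (G : Subgroup (SpecialLinearGroup ι K))
    (h : ∀ (i j : ι) (hij : i ≠ j) (a : K), SpecialLinearGroup.transvection hij a ∈ G) :
    G = ⊤ := by
  classical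
  rw [eq_top_iff]
  intro M _
  let P : Matrix ι ι K → Prop := fun M => ∃ A ∈ G, A.1 = M
  have hmul : ∀ A B, P A → P B → P (A * B) := by
    rintro _ _ ⟨A, hA, rfl⟩ ⟨B, hB, rfl⟩
    exact ⟨A * B, G.mul_mem hA hB, rfl⟩
  have ht : ∀ (i j : ι) (hij : i ≠ j) (a : K), P (transvection i j a) :=
    fun i j hij a => ⟨_, h i j hij a, rfl⟩
  have hh : ∀ (i j : ι) (hij : i ≠ j) (a : K) (ha : a ≠ 0),
      P (diagonal (fun k => if k = i then a else if k = j then a⁻¹ else 1)) := by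
    intro i j hij a ha
    rw [← hdiag_mul hij a ha]
    exact hmul _ _ (hmul _ _ (hmul _ _ (ht _ _ hij _) (ht _ _ hij.symm _)) (ht _ _ hij _))
      (hmul _ _ (hmul _ _ (ht _ _ hij _) (ht _ _ hij.symm _)) (ht _ _ hij _))
  have : P M.1 := by
    apply diagonal_transvection_induction P
    · intro D hD
      rw [M.2, det_diagonal] at hD
      have hD0 : ∀ i, D i ≠ 0 := by
        intro i hi
        rw [Finset.prod_eq_zero (Finset.mem_univ i) hi] at hD
        exact zero_ne_one hD
      rcases isEmpty_or_nonempty ι with he | ⟨⟨i0⟩⟩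
      · exact ⟨1, G.one_mem, Subsingleton.elim _ _⟩
      · have key : ∀ s : Finset ι, i0 ∉ s →
            P (diagonal (fun k => if k ∈ s then D k else if k = i0 then (∏ i ∈ s, D i)⁻¹ else 1)) := by
          intro s
          induction s using Finset.induction_on with
          | empty => intro _; exact ⟨1, G.one_mem, by simp⟩
          | insert a s ha ih =>
            intro hs
            rw [Finset.mem_insert, not_or] at hs
            have := hmul _ _ (hh a i0 (Ne.symm hs.1) (D a) (hD0 a)) (ih hs.2)
            rw [diagonal_mul_diagonal] at this
            convert this using 2
            ext k
            rw [Finset.prod_insert ha]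
            simp only [Finset.mem_insert]
            have := hs.1; have := hs.2
            have := mul_inv (D a) (∏ i ∈ s, D i)
            grind
        convert key (Finset.univ.erase i0) (by simp) using 2
        ext k
        have := Finset.mul_prod_erase Finset.univ D (Finset.mem_univ i0)
        rw [hD] at this
        by_cases hk : k = i0
        · subst hk
          simp
          exact eq_inv_of_mul_eq_one_left this
        · simp [hk]
    · intro t; exact ht _ _ t.hij _
    · exact hmul
  obtain ⟨A, hA, h⟩ := this
  rwa [← Subtype.ext h]
end partA

section partB
variable {ι K : Type*} [DecidableEq ι] [Fintype ι] [Field K]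

/-- even permutations as elements of `SL` -/
def permSL (ι K : Type*) [DecidableEq ι] [Fintype ι] [Field K] :
    alternatingGroup ι →* SpecialLinearGroup ι K where
  toFun σ := ⟨permMatrixHom (R := K) σ.1, by
    have : Equiv.Perm.sign σ.1 = 1 := σ.2
    rw [permMatrixHom_apply, det_permutation, Equiv.Perm.sign_inv, this]; simp⟩
  map_one' := Subtype.ext (by simp)
  map_mul' σ τ := Subtype.ext (map_mul (permMatrixHom (R := K)) σ.1 τ.1)

lemma permSL_coe (σ : alternatingGroup ι) :
    ((permSL ι K σ : SpecialLinearGroup ι K) : Matrix ι ι K) = permMatrixHom (R := K) σ.1 := rfl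

lemma permHom_mul_transvection (σ : Equiv.Perm ι) (i j : ι) (a : K) :
    permMatrixHom (R := K) σ * transvection i j a =
      transvection (σ i) (σ j) a * permMatrixHom (R := K) σ := by
  simp only [transvection, mul_add, add_mul, one_mul, mul_one, permMatrixHom_apply]
  congr 1
  ext k l
  rw [PEquiv.toMatrix_toPEquiv_mul]
  simp only [Matrix.submatrix_apply, single_apply, Matrix.mul_apply, PEquiv.toMatrix_apply,
    Equiv.toPEquiv_apply, id]
  rw [Finset.sum_eq_single (σ j)]
  · simp [Equiv.Perm.inv_def, Equiv.eq_symm_apply]; grind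
  · intro b _ hb
    simp [Ne.symm hb]
  · simp

lemma permSL_conj (σ : alternatingGroup ι) {i j : ι} (hij : i ≠ j) (hij' : σ.1 i ≠ σ.1 j) (a : K) :
    permSL ι K σ * SpecialLinearGroup.transvection hij a * (permSL ι K σ)⁻¹ =
      SpecialLinearGroup.transvection hij' a := by
  rw [mul_inv_eq_iff_eq_mul]
  exact Subtype.ext (permHom_mul_transvection σ.1 i j a)

lemma transv_commute {i j k l : ι} (hij : i ≠ j) (hkl : k ≠ l) (h1 : j ≠ k) (h2 : l ≠ i) (a b : K) :
    Commute (SpecialLinearGroup.transvection hij a) (SpecialLinearGroup.transvection hkl b) := by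
  apply Subtype.ext
  change transvection i j a * transvection k l b = transvection k l b * transvection i j a
  simp only [transvection, mul_add, add_mul, one_mul, mul_one,
    single_mul_single_of_ne _ _ _ _ h1, single_mul_single_of_ne _ _ _ _ h2, add_zero]
  abel

lemma transv_comm {p r s : ι} (hpr : p ≠ r) (hrs : r ≠ s) (hps : p ≠ s) (a b : K) :
    SpecialLinearGroup.transvection hpr a * SpecialLinearGroup.transvection hrs b *
    (SpecialLinearGroup.transvection hpr a)⁻¹ * (SpecialLinearGroup.transvection hrs b)⁻¹ =
    SpecialLinearGroup.transvection hps (a * b) := by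
  rw [_root_.mul_inv_eq_iff_eq_mul, _root_.mul_inv_eq_iff_eq_mul]
  apply Subtype.ext
  change transvection p r a * transvection r s b =
    transvection p s (a*b) * transvection r s b * transvection p r a
  simp only [transvection, mul_add, add_mul, one_mul, mul_one, single_mul_single_same,
    single_mul_single_of_ne _ _ _ _ hrs.symm, single_mul_single_of_ne _ _ _ _ hps.symm, add_zero]
  abel

lemma comm_aux {G : Type*} [Group G] {A B C D : G} (hBC : Commute B C) (hBD : Commute B D)
    (hAB : Commute A B)
    (hAD : Commute A D) (hCD : Commute C D) :
    (A * B) * (C * D) * (A * B)⁻¹ * (C * D)⁻¹ = A * C * A⁻¹ * C⁻¹ := by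
  have h1 : (A * B) * (C * D) = A * C * (B * D) := by
    simp only [mul_assoc]; rw [← mul_assoc B C, hBC.eq, mul_assoc]
  have h2 : (A * B)⁻¹ * (C * D)⁻¹ = (B * D)⁻¹ * (A⁻¹ * C⁻¹) := by
    rw [← _root_.mul_inv_rev, ← _root_.mul_inv_rev, ← _root_.mul_inv_rev]
    congr 1
    rw [mul_assoc, ← mul_assoc D A, ← hAD.eq, mul_assoc A D B, ← hBD.eq, ← mul_assoc A B D, ← mul_assoc C,
      ← mul_assoc C A, mul_assoc (C * A)]
  rw [mul_assoc, h2, h1]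
  group


set_option maxHeartbeats 2000000 in
theorem SL_eq_top_of_alt (G : Subgroup (SpecialLinearGroup ι K)) (hcard : 7 ≤ Fintype.card ι)
    (hG : ∀ σ, permSL ι K σ ∈ G) (c : K) (hc0 : c ≠ 0) (hc : ∀ a : K, a ≠ 0 → ∃ k : ℕ, c ^ k = a)
    {p r p' r' : ι} (hpr : p ≠ r) (hpr' : p' ≠ r') (h1 : p ≠ p') (h2 : p ≠ r') (h3 : r ≠ p')
    (h4 : r ≠ r')
    (hM : SpecialLinearGroup.transvection hpr c *
      SpecialLinearGroup.transvection hpr' (-c) ∈ G) : G = ⊤ := by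
  classical
  have hM' : ∀ (p r p' r' : ι) (hpr : p ≠ r) (hpr' : p' ≠ r'), p ≠ p' → p ≠ r' → r ≠ p' → r ≠ r' →
      SpecialLinearGroup.transvection hpr c * SpecialLinearGroup.transvection hpr' (-c) ∈ G := by
    intro q s q' s' hqs hqs' k1 k2 k3 k4
    have h4t : MulAction.IsMultiplyPretransitive (alternatingGroup ι) ι 4 := by
      have := alternatingGroup.isMultiplyPretransitive ι
      refine MulAction.isMultiplyPretransitive_of_le' (n := Nat.card ι - 2) ?_ ?_ 
      · rw [Nat.card_eq_fintype_card]; omega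
      · simp
    let e1 : Fin 4 ↪ ι := ⟨![p, r, p', r'], by
      intro i j; fin_cases i <;> fin_cases j <;> simp_all [eq_comm]⟩
    let e2 : Fin 4 ↪ ι := ⟨![q, s, q', s'], by
      intro i j; fin_cases i <;> fin_cases j <;> simp_all [eq_comm]⟩
    obtain ⟨σ, hσ⟩ := h4t.exists_smul_eq e1 e2
    have a0 : σ.1 p = q := congrArg (fun e => e 0) hσ
    have a1 : σ.1 r = s := congrArg (fun e => e 1) hσ
    have a2 : σ.1 p' = q' := congrArg (fun e => e 2) hσ
    have a3 : σ.1 r' = s' := congrArg (fun e => e 3) hσ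
    subst a0 a1 a2 a3
    rw [← permSL_conj σ hpr hqs, ← permSL_conj σ hpr' hqs']
    have := G.mul_mem (G.mul_mem (hG σ) hM) (G.inv_mem (hG σ))
    convert this using 1
    group
  have hex : ∀ S : Finset ι, S.card ≤ 6 → ∃ i, i ∉ S := by
    intro S hS
    by_contra! h
    have : S = Finset.univ := Finset.eq_univ_iff_forall.2 h
    rw [this, Finset.card_univ] at hS
    omega
  have hstep : ∀ k : ℕ, ∀ (p s : ι) (hps : p ≠ s), SpecialLinearGroup.transvection hps (c ^ (k + 2)) ∈ G := by
    intro k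
    induction k with
    | zero =>
      intro p s hps
      obtain ⟨r, hr⟩ := hex {p, s} (Finset.card_le_two.trans (by norm_num))
      obtain ⟨p', hp'⟩ := hex {p, s, r} (Finset.card_le_three.trans (by norm_num))
      obtain ⟨r', hr'⟩ := hex {p, s, r, p'} (Finset.card_le_four.trans (by norm_num))
      obtain ⟨u, hu⟩ := hex {p, s, r, p', r'} (Finset.card_le_five.trans (by norm_num))
      obtain ⟨v, hv⟩ := hex {p, s, r, p', r', u} Finset.card_le_six
      simp only [Finset.mem_insert, Finset.mem_singleton, not_or] at hr hp' hr' hu hv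
      have hpr : p ≠ r := by tauto
      have hrs : r ≠ s := by tauto
      have hpr' : p' ≠ r' := by tauto
      have huv : u ≠ v := by tauto
      have m1 := hM' p r p' r' hpr hpr' (by tauto) (by tauto) (by tauto) (by tauto)
      have m2 := hM' r s u v hrs huv (by tauto) (by tauto) (by tauto) (by tauto)
      have := G.mul_mem (G.mul_mem (G.mul_mem m1 m2) (G.inv_mem m1)) (G.inv_mem m2)
      rw [comm_aux, transv_comm hpr hrs hps] at this
      · rw [zero_add, pow_two]; exact this
      all_goals apply transv_commute <;> tauto
    | succ k ih =>
      intro p s hps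
      obtain ⟨r, hr⟩ := hex {p, s} (Finset.card_le_two.trans (by norm_num))
      obtain ⟨p', hp'⟩ := hex {p, s, r} (Finset.card_le_three.trans (by norm_num))
      obtain ⟨r', hr'⟩ := hex {p, s, r, p'} (Finset.card_le_four.trans (by norm_num))
      simp only [Finset.mem_insert, Finset.mem_singleton, not_or] at hr hp' hr'
      have hpr : p ≠ r := by tauto
      have hrs : r ≠ s := by tauto
      have hpr' : p' ≠ r' := by tauto
      have m1 := hM' p r p' r' hpr hpr' (by tauto) (by tauto) (by tauto) (by tauto)
      have m2 := ih r s hrs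
      have := G.mul_mem (G.mul_mem (G.mul_mem m1 m2) (G.inv_mem m1)) (G.inv_mem m2)
      rw [← mul_one (SpecialLinearGroup.transvection hrs _), comm_aux, transv_comm hpr hrs hps] at this
      · convert this using 2; ring
      · apply transv_commute <;> tauto
      · exact Commute.one_right _
      · apply transv_commute <;> tauto
      · exact Commute.one_right _
      · exact Commute.one_right _
  apply SL_eq_top_of_transvections
  intro i j hij a
  by_cases ha : a = 0
  · subst ha; simp
  · obtain ⟨k, hk⟩ := hc (a / c ^ 2) (div_ne_zero ha (pow_ne_zero _ hc0))
    have : a = c ^ (k + 2) := by rw [pow_add, hk]; field_simp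
    rw [this]; exact hstep k i j hij
end partB

section partC
variable {Ω : Type*} [DecidableEq Ω]

/-- the three-cycle `i → j → k → i` -/
def cyc3 (i j k : Ω) : Equiv.Perm Ω := Equiv.swap i j * Equiv.swap j k

/-- `H` contains the three-cycle on the distinct points `i j k`. -/
def Tri (H : Subgroup (Equiv.Perm Ω)) (i j k : Ω) : Prop :=
  i ≠ j ∧ j ≠ k ∧ i ≠ k ∧ cyc3 i j k ∈ H

lemma cyc3_fst {i j k : Ω} (h1 : i ≠ j) (h2 : j ≠ k) (h3 : i ≠ k) : cyc3 i j k i = j := by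
  simp [cyc3, Equiv.swap_apply_def, h1, h3]

lemma cyc3_snd {i j k : Ω} (h1 : i ≠ j) (h2 : j ≠ k) (h3 : i ≠ k) : cyc3 i j k j = k := by
  simp only [cyc3, Equiv.swap_apply_def, Equiv.Perm.mul_apply]; grind

lemma cyc3_trd {i j k : Ω} (h1 : i ≠ j) (h2 : j ≠ k) (h3 : i ≠ k) : cyc3 i j k k = i := by
  simp only [cyc3, Equiv.swap_apply_def, Equiv.Perm.mul_apply]; grind

lemma cyc3_other {i j k l : Ω} (h1 : l ≠ i) (h2 : l ≠ j) (h3 : l ≠ k) : cyc3 i j k l = l := by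
  simp only [cyc3, Equiv.swap_apply_def, Equiv.Perm.mul_apply]; grind

lemma cyc3_conj (σ : Equiv.Perm Ω) (i j k : Ω) :
    σ * cyc3 i j k * σ⁻¹ = cyc3 (σ i) (σ j) (σ k) := by
  simp only [cyc3, Equiv.swap_apply_apply]; group

lemma cyc3_unique {i j k : Ω} (h1 : i ≠ j) (h2 : j ≠ k) (h3 : i ≠ k) (σ : Equiv.Perm Ω)
    (e1 : σ i = j) (e2 : σ j = k) (e3 : σ k = i) (e4 : ∀ l, l ≠ i → l ≠ j → l ≠ k → σ l = l) :
    σ = cyc3 i j k := by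
  ext l
  simp only [cyc3, Equiv.swap_apply_def, Equiv.Perm.mul_apply]
  have := e4 l
  grind

variable {H : Subgroup (Equiv.Perm Ω)}

lemma Tri.conj {i j k : Ω} (h : Tri H i j k) {σ : Equiv.Perm Ω} (hσ : σ ∈ H) :
    Tri H (σ i) (σ j) (σ k) :=
  ⟨by simpa using h.1, by simpa using h.2.1, by simpa using h.2.2.1, by
    rw [← cyc3_conj]; exact H.mul_mem (H.mul_mem hσ h.2.2.2) (H.inv_mem hσ)⟩

lemma Tri.rot {i j k : Ω} (h : Tri H i j k) : Tri H j k i := by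
  obtain ⟨h1, h2, h3, h4⟩ := h
  refine ⟨h2, h3.symm, h1.symm, ?_⟩
  have := cyc3_unique h2 h3.symm h1.symm (cyc3 i j k) (cyc3_snd h1 h2 h3) (cyc3_trd h1 h2 h3)
    (cyc3_fst h1 h2 h3) (fun l a b c => cyc3_other c a b)
  rwa [← this]

lemma Tri.rev {i j k : Ω} (h : Tri H i j k) : Tri H k j i := by
  obtain ⟨h1, h2, h3, h4⟩ := h
  refine ⟨h2.symm, h1.symm, h3.symm, ?_⟩
  have := H.inv_mem h4
  rwa [cyc3, _root_.mul_inv_rev, Equiv.swap_inv, Equiv.swap_inv, Equiv.swap_comm, Equiv.swap_comm i j] at this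

lemma Tri.swap {i j k : Ω} (h : Tri H i j k) : Tri H j i k := h.rev.rot

lemma Tri.four {i j k l : Ω} (h : Tri H i j k) (h' : Tri H i j l) (hkl : k ≠ l) : Tri H j k l := by
  have := h'.conj h.2.2.2
  rwa [cyc3_fst h.1 h.2.1 h.2.2.1, cyc3_snd h.1 h.2.1 h.2.2.1,
    cyc3_other h'.2.2.1.symm h'.2.1.symm hkl.symm] at this

lemma Tri.five {i j k l m : Ω} (h : Tri H i j k) (h' : Tri H i l m) (a : l ≠ j) (b : l ≠ k)
    (c : m ≠ j) (d : m ≠ k) : Tri H j l m := by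
  have := h'.conj h.2.2.2
  rwa [cyc3_fst h.1 h.2.1 h.2.2.1, cyc3_other h'.1.symm a b,
    cyc3_other h'.2.2.1.symm c d] at this

/-- All three-cycles on `D` are in `H`. -/
def FullOn (H : Subgroup (Equiv.Perm Ω)) (D : Set Ω) : Prop :=
  ∀ i ∈ D, ∀ j ∈ D, ∀ k ∈ D, i ≠ j → j ≠ k → i ≠ k → Tri H i j k

lemma FullOn.insert {D : Set Ω} (hD : FullOn H D) {i j k : Ω} (hi : i ∈ D) (hj : j ∈ D)
    (h : Tri H i j k) : FullOn H (Insert.insert k D) := by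
  by_cases hk : k ∈ D
  · rwa [Set.insert_eq_of_mem hk]
  have step : ∀ i ∈ D, ∀ j ∈ D, Tri H i j k → ∀ l ∈ D, l ≠ i → Tri H i l k := by
    intro i hi j hj h l hl hli
    by_cases hlj : l = j
    · rwa [hlj]
    · have h2 := hD i hi j hj l hl h.1 (Ne.symm hlj) (Ne.symm hli)
      have hkl : l ≠ k := fun e => hk (e ▸ hl)
      exact h2.swap.four h.swap hkl
  have all : ∀ u ∈ D, ∀ v ∈ D, u ≠ v → Tri H u v k := by
    intro u hu v hv huv
    by_cases hui : u = i
    · subst hui; exact step u hu j hj h v hv huv.symm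
    · have h1 := (step i hi j hj h u hu hui).swap
      exact step u hu i hi h1 v hv huv.symm
  rintro a (rfl | ha) b (rfl | hb) c (rfl | hc) hab hbc hac
  · exact absurd rfl hab
  · exact absurd rfl hab
  · exact absurd rfl hac
  · exact (all b hb c hc hbc).rot.rot
  · exact absurd rfl hbc
  · exact (all c hc a ha hac.symm).rot
  · exact all a ha b hb hab
  · exact hD a ha b hb c hc hab hbc hac

theorem exists_class [Finite Ω] {a b c : Ω} (h : Tri H a b c) :
    ∃ D : Set Ω, a ∈ D ∧ b ∈ D ∧ c ∈ D ∧ FullOn H D ∧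
      ∀ i ∈ D, ∀ k l, Tri H i k l → k ∈ D ∧ l ∈ D := by
  have h0 : FullOn H ({a, b, c} : Set Ω) := by
    have := h.rot; have := h.rot.rot; have := h.rev; have := h.rev.rot; have := h.rev.rot.rot
    rintro i (rfl | rfl | rfl) j (rfl | rfl | rfl) k (rfl | rfl | rfl) h1 h2 h3 <;>
      first | assumption | exact absurd rfl h1 | exact absurd rfl h2 | exact absurd rfl h3
  obtain ⟨D, hle, hD⟩ := (Set.toFinite {D : Set Ω | FullOn H D}).exists_le_maximal h0
  have ha : a ∈ D := hle (by simp)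
  have hb : b ∈ D := hle (by simp)
  have hc : c ∈ D := hle (by simp)
  have hF : FullOn H D := hD.1
  have two : ∀ i ∈ D, ∀ j ∈ D, ∀ k, Tri H i j k → k ∈ D := by
    intro i hi j hj k ht
    exact hD.2 (hF.insert hi hj ht) (Set.subset_insert _ _) (Set.mem_insert _ _)
  have one : ∀ i ∈ D, ∀ k l, Tri H i k l → k ∈ D := by
    intro i hi k l ht
    by_contra hk
    by_cases hl : l ∈ D
    · exact hk (two l hl i hi k ht.rot.rot)
    · obtain ⟨j, hj, m, hm, hij, hjm, him⟩ : ∃ j ∈ D, ∃ m ∈ D, i ≠ j ∧ j ≠ m ∧ i ≠ m := by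
        obtain ⟨h1, h2, h3, _⟩ := h
        by_cases i1 : i = a
        · exact ⟨b, hb, c, hc, i1 ▸ h1, h2, i1 ▸ h3⟩
        · by_cases i2 : i = b
          · exact ⟨a, ha, c, hc, i1, h3, i2 ▸ h2⟩
          · exact ⟨a, ha, b, hb, i1, h1, i2⟩
      have hijm := hF i hi j hj m hm hij hjm him
      have hkj : k ≠ j := fun e => hk (e ▸ hj)
      have hkm : k ≠ m := fun e => hk (e ▸ hm)
      have hlj : l ≠ j := fun e => hl (e ▸ hj)
      have hlm : l ≠ m := fun e => hl (e ▸ hm)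
      have h5 := hijm.five ht hkj hkm hlj hlm
      have h6 := ht.rot.swap.four h5.rot.swap hij
      exact hk (two i hi j hj k h6.rot)
  exact ⟨D, ha, hb, hc, hF, fun i hi k l ht => ⟨one i hi k l ht, one i hi l k ht.rot.rot.swap⟩⟩

theorem alt_le_of_full [Fintype Ω] (hF : FullOn H Set.univ) : alternatingGroup Ω ≤ H := by
  rw [← Equiv.Perm.closure_three_cycles_eq_alternating, Subgroup.closure_le]
  intro σ hσ
  have hσ' : σ.IsThreeCycle := hσ
  obtain ⟨a, b, c, h1, h2, h3, e⟩ : ∃ a b c : Ω, a ≠ b ∧ a ≠ c ∧ b ≠ c ∧ σ.support = {a, b, c} :=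
    Finset.card_eq_three.1 hσ'.card_support
  have ha : σ a ≠ a := by rw [← Equiv.Perm.mem_support, e]; simp
  have h3' : σ (σ (σ a)) = a := by
    have := pow_orderOf_eq_one σ
    rw [hσ'.orderOf] at this
    exact DFunLike.congr_fun this a
  have hs : σ (σ a) ≠ a := by
    intro h; rw [h] at h3'; exact ha h3'
  have : σ = cyc3 a (σ a) (σ (σ a)) := by
    apply cyc3_unique ha.symm (fun h => ha (σ.injective h).symm) hs.symm σ rfl rfl h3'
    intro l l1 l2 l3
    by_contra hl
    rw [← Ne, ← Equiv.Perm.mem_support, e] at hl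
    have m1 : σ a ∈ σ.support := by simpa using ha
    have m2 : σ (σ a) ∈ σ.support := by simpa using ha
    rw [e] at m1 m2
    have : σ (σ a) ≠ σ a := fun h => ha (σ.injective h)
    simp only [Finset.mem_insert, Finset.mem_singleton] at hl m1 m2
    grind
  rw [this]
  exact (hF _ trivial _ trivial _ trivial ha.symm (fun h => ha (σ.injective h).symm) hs.symm).2.2.2
end partC

theorem perm_ais {Ω : Type*} (σ : Equiv.Perm Ω) (a : Ω) : σ (σ⁻¹ a) = a := by simp

theorem perm_ias {Ω : Type*} (σ : Equiv.Perm Ω) (a : Ω) : σ⁻¹ (σ a) = a := by simp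

section partD
variable {T₁ T₂ Ω K : Type*} [Group T₁] [Group T₂] [DecidableEq Ω] [Fintype Ω] [Field K]
open scoped Pointwise

lemma mem_permH {G : Subgroup (SpecialLinearGroup Ω K)} {σ : Equiv.Perm Ω} :
    σ ∈ (G.comap (permSL Ω K)).map (alternatingGroup Ω).subtype ↔
      ∃ hσ : σ ∈ alternatingGroup Ω, permSL Ω K ⟨σ, hσ⟩ ∈ G := by
  simp [Subgroup.mem_map]

lemma exists_third {D : Set Ω} {a b c : Ω} (ha : a ∈ D) (hb : b ∈ D) (hc : c ∈ D) (h1 : a ≠ b)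
    (h2 : b ≠ c) (h3 : a ≠ c) (d : Ω) (hd : d ≠ a) : ∃ e ∈ D, e ≠ a ∧ d ≠ e := by
  by_cases h : d = b
  · exact ⟨c, hc, h3.symm, h ▸ h2⟩
  · exact ⟨b, hb, h1.symm, h⟩

theorem abstract_gen (ρ₁ : T₁ →* Equiv.Perm Ω) (ρ₂ : T₂ →* Equiv.Perm Ω)
    (hs₁ : ∀ t, ρ₁ t ∈ alternatingGroup Ω) (hs₂ : ∀ t, ρ₂ t ∈ alternatingGroup Ω)
    (hcard : 7 ≤ Fintype.card Ω)
    (c : K) (hc0 : c ≠ 0) (hc : ∀ a : K, a ≠ 0 → ∃ k : ℕ, c ^ k = a)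
    (x : T₁) (y : T₂) (ω₀ p r : Ω) (L : Set Ω)
    (hx : ρ₁ x ω₀ ≠ ω₀) (hy : ρ₂ y ω₀ ≠ ω₀)
    (hxy : ∀ ω, ρ₁ x ω ≠ ω → ρ₂ y ω ≠ ω → ω = ω₀)
    (hmax₁ : ∀ S : Subgroup T₁, (∀ t, ρ₁ t ω₀ = ω₀ → t ∈ S) → x ∈ S → S = ⊤)
    (hmax₂ : ∀ S : Subgroup T₂, (∀ t, ρ₂ t ω₀ = ω₀ → t ∈ S) → y ∈ S → S = ⊤)
    (hpr : p ≠ r) (hxp : ρ₁ x p = p) (hxr : ρ₁ x r = r)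
    (hL : ∀ z, ∀ ω ∈ L, ρ₂ z ω ∈ L) (hpL : p ∈ L) (hrL : r ∈ L) (h0L : ω₀ ∉ L)
    (hxL : ρ₁ x ω₀ ∉ L)
    (hconn : ∀ D : Set Ω, ω₀ ∈ D → (∀ t, ∀ d ∈ D, ρ₁ t d ∈ D) →
      (∀ z, ∀ d ∈ D, d ≠ p → d ≠ r → ρ₂ z d ≠ p → ρ₂ z d ≠ r → ρ₂ z d ∈ D) → ∀ ω, ω ∈ D)
    (z₀ : T₂) (hz1 : ρ₂ z₀ p ≠ p) (hz2 : ρ₂ z₀ r ≠ r) (hz3 : ρ₂ z₀ p ≠ r) (hz4 : ρ₂ z₀ r ≠ p) :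
    ((permSL Ω K).comp (ρ₁.codRestrict _ hs₁)).range ⊔
      (((MulAut.conj (SpecialLinearGroup.transvection hpr c)).toMonoidHom.comp
        (permSL Ω K)).comp (ρ₂.codRestrict _ hs₂)).range = ⊤ := by
  classical
  set g := SpecialLinearGroup.transvection hpr c with hg
  set G := ((permSL Ω K).comp (ρ₁.codRestrict _ hs₁)).range ⊔
      (((MulAut.conj g).toMonoidHom.comp
        (permSL Ω K)).comp (ρ₂.codRestrict _ hs₂)).range with hGdef
  have f1 : ∀ t, permSL Ω K ⟨ρ₁ t, hs₁ t⟩ ∈ G := fun t =>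
    (le_sup_left : _ ≤ G) ⟨t, rfl⟩
  have f2 : ∀ t, g * permSL Ω K ⟨ρ₂ t, hs₂ t⟩ * g⁻¹ ∈ G := fun t =>
    (le_sup_right : _ ≤ G) ⟨t, rfl⟩
  have f3 : ∀ τ : alternatingGroup Ω, τ.1 p = p → τ.1 r = r →
      g * permSL Ω K τ = permSL Ω K τ * g := by
    intro τ h1 h2
    have := permSL_conj (K := K) τ hpr (by rw [h1, h2]; exact hpr) c
    rw [mul_inv_eq_iff_eq_mul] at this
    rw [hg, this]
    congr 2 <;> simp [h1, h2]
  clear_value G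
  clear hGdef
  set H := (G.comap (permSL Ω K)).map (alternatingGroup Ω).subtype with hH
  have h1 : ∀ t, ρ₁ t ∈ H := fun t => mem_permH.2 ⟨hs₁ t, f1 t⟩
  have f4 : ∀ z, ∀ τ ∈ H, τ p = p → τ r = r → (ρ₂ z * τ * (ρ₂ z)⁻¹) p = p →
      (ρ₂ z * τ * (ρ₂ z)⁻¹) r = r → ρ₂ z * τ * (ρ₂ z)⁻¹ ∈ H := by
    intro z τ hτ a1 a2 a3 a4
    obtain ⟨hτ', hτG⟩ := mem_permH.1 hτ
    set Z : alternatingGroup Ω := ⟨ρ₂ z, hs₂ z⟩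
    set t : alternatingGroup Ω := ⟨τ, hτ'⟩
    refine mem_permH.2 ⟨(Z * t * Z⁻¹).2, ?_⟩
    change permSL Ω K (Z * t * Z⁻¹) ∈ G
    have e1 := f3 t a1 a2
    have e2 := f3 (Z * t * Z⁻¹) a3 a4
    have := G.mul_mem (G.mul_mem (f2 z) hτG) (G.inv_mem (f2 z))
    convert this using 1
    change _ = g * permSL Ω K Z * g⁻¹ * permSL Ω K t * (g * permSL Ω K Z * g⁻¹)⁻¹
    calc permSL Ω K (Z * t * Z⁻¹) = g * permSL Ω K (Z * t * Z⁻¹) * g⁻¹ := by rw [e2]; group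
      _ = g * permSL Ω K Z * g⁻¹ * (g * permSL Ω K t) * (permSL Ω K Z)⁻¹ * g⁻¹ := by
        simp only [map_mul, map_inv]; group
      _ = _ := by rw [e1]; group
  have f4' : ∀ z, ∀ i j k, Tri H i j k → p ≠ i → p ≠ j → p ≠ k → r ≠ i → r ≠ j → r ≠ k →
      p ≠ ρ₂ z i → p ≠ ρ₂ z j → p ≠ ρ₂ z k → r ≠ ρ₂ z i → r ≠ ρ₂ z j → r ≠ ρ₂ z k →
      Tri H (ρ₂ z i) (ρ₂ z j) (ρ₂ z k) := by
    intro z i j k ht b1 b2 b3 b4 b5 b6 b7 b8 b9 b10 b11 b12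
    refine ⟨by simpa using ht.1, by simpa using ht.2.1, by simpa using ht.2.2.1, ?_⟩
    rw [← cyc3_conj]
    apply f4 z _ ht.2.2.2 (cyc3_other b1 b2 b3) (cyc3_other b4 b5 b6)
    · rw [cyc3_conj]; exact cyc3_other b7 b8 b9
    · rw [cyc3_conj]; exact cyc3_other b10 b11 b12
  have hyL : ρ₂ y ω₀ ∉ L := by
    intro h
    have := hL y⁻¹ _ h
    rw [← Equiv.Perm.mul_apply, ← map_mul, inv_mul_cancel, map_one] at this
    exact h0L this
  have neL : ∀ q ∈ L, ∀ ω, ω ∉ L → q ≠ ω := fun q hq ω hω e => hω (e ▸ hq)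
  -- the three-cycle
  set X := ρ₁ x with hX
  set Y := ρ₂ y with hY
  have fixY : ∀ ω, X ω ≠ ω → ω ≠ ω₀ → Y ω = ω := fun ω h h' => by
    by_contra h2; exact h' (hxy ω h h2)
  have fixX : ∀ ω, Y ω ≠ ω → ω ≠ ω₀ → X ω = ω := fun ω h h' => by
    by_contra h2; exact h' (hxy ω h2 h)
  have YX : Y (X ω₀) = X ω₀ := fixY _ (fun h => hx (X.injective h)) hx
  have XY : X (Y ω₀) = Y ω₀ := fixX _ (fun h => hy (Y.injective h)) hy
  have hXYne : X ω₀ ≠ Y ω₀ := by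
    intro h
    rw [h] at YX
    exact hy (Y.injective YX)
  have hcomm : X * Y * X⁻¹ * Y⁻¹ = cyc3 ω₀ (X ω₀) (Y ω₀) := by
    apply cyc3_unique hx.symm hXYne hy.symm
    · have : X (Y⁻¹ ω₀) = Y⁻¹ ω₀ := by
        apply fixX
        · rw [perm_ais]; intro h; apply hy; rw [h, perm_ais, ← h]
        · intro h; apply hy; nth_rw 1 [← h]; simp
      have h2 : X⁻¹ (Y⁻¹ ω₀) = Y⁻¹ ω₀ := by rw [Equiv.Perm.inv_eq_iff_eq, this]
      simp only [Equiv.Perm.mul_apply]; rw [h2, perm_ais]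
    · have : Y⁻¹ (X ω₀) = X ω₀ := by rw [Equiv.Perm.inv_eq_iff_eq, YX]
      simp [Equiv.Perm.mul_apply, this, XY]
    · simp only [Equiv.Perm.mul_apply, perm_ias]
      have : Y (X⁻¹ ω₀) = X⁻¹ ω₀ := by
        apply fixY
        · rw [perm_ais]; intro h; apply hx; rw [h, perm_ais, ← h]
        · intro h; apply hx; nth_rw 1 [← h]; simp
      rw [this, perm_ais]
    · intro l l1 l2 l3
      simp only [Equiv.Perm.mul_apply]
      by_cases hYl : Y l = l
      · have e1 : Y⁻¹ l = l := by rw [Equiv.Perm.inv_eq_iff_eq, hYl]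
        rw [e1]
        by_cases hXl : X l = l
        · have e2 : X⁻¹ l = l := by rw [Equiv.Perm.inv_eq_iff_eq, hXl]
          rw [e2, hYl, hXl]
        · have : Y (X⁻¹ l) = X⁻¹ l := by
            apply fixY
            · rw [perm_ais]; intro h; apply hXl; nth_rw 1 [h]; simp
            · intro h; apply l2; rw [← h]; simp
          rw [this]; simp
      · have e1 := fixX l hYl l1
        have e2 : X (Y⁻¹ l) = Y⁻¹ l := by
          apply fixX
          · rw [perm_ais]; intro h; apply hYl; nth_rw 1 [h]; simp
          · intro h; apply l3; rw [← h]; simp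
        have e3 : X⁻¹ (Y⁻¹ l) = Y⁻¹ l := by rw [Equiv.Perm.inv_eq_iff_eq, e2]
        rw [e3]; simp [e1]
  have htri : Tri H ω₀ (X ω₀) (Y ω₀) := by
    refine ⟨hx.symm, hXYne, hy.symm, ?_⟩
    rw [← hcomm]
    set Z : alternatingGroup Ω := ⟨X, hs₁ x⟩
    set t : alternatingGroup Ω := ⟨Y, hs₂ y⟩
    refine mem_permH.2 ⟨(Z * t * Z⁻¹ * t⁻¹).2, ?_⟩
    change permSL Ω K (Z * t * Z⁻¹ * t⁻¹) ∈ G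
    have e1 := f3 Z hxp hxr
    have e2 := f3 (Z * t * Z⁻¹ * t⁻¹)
      (by change (X * Y * X⁻¹ * Y⁻¹) p = p
          rw [hcomm]; exact cyc3_other (neL p hpL _ h0L) (neL p hpL _ hxL) (neL p hpL _ hyL))
      (by change (X * Y * X⁻¹ * Y⁻¹) r = r
          rw [hcomm]; exact cyc3_other (neL r hrL _ h0L) (neL r hrL _ hxL) (neL r hrL _ hyL))
    have := G.mul_mem (G.mul_mem (G.mul_mem (f1 x) (f2 y)) (G.inv_mem (f1 x))) (G.inv_mem (f2 y))
    convert this using 1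
    change _ = permSL Ω K Z * (g * permSL Ω K t * g⁻¹) * (permSL Ω K Z)⁻¹ *
      (g * permSL Ω K t * g⁻¹)⁻¹
    have e3 : permSL Ω K Z = g * permSL Ω K Z * g⁻¹ := by rw [e1]; group
    rw [e3]
    calc permSL Ω K (Z * t * Z⁻¹ * t⁻¹) = g * permSL Ω K (Z * t * Z⁻¹ * t⁻¹) * g⁻¹ := by
          rw [e2]; group
      _ = _ := by simp only [map_mul, map_inv]; group
  obtain ⟨D, d0, dX, dY, hF, hcl⟩ := exists_class htri
  have D1 : ∀ t, ∀ d ∈ D, ρ₁ t d ∈ D := by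
    have key : ∀ t, ρ₁ t ω₀ ∈ D → ∀ d ∈ D, ρ₁ t d ∈ D := by
      intro t ht d hd
      by_cases hd0 : d = ω₀
      · rwa [hd0]
      · obtain ⟨e, he, he1, he2⟩ := exists_third d0 dX dY htri.1 htri.2.1 htri.2.2.1 d hd0
        exact (hcl _ ht _ _ ((hF _ d0 d hd e he (Ne.symm hd0) he2 he1.symm).conj (h1 t))).1
    have hS := hmax₁ ((MulAction.stabilizer (Equiv.Perm Ω) D).comap ρ₁)
      (by
        intro t ht
        rw [Subgroup.mem_comap, MulAction.mem_stabilizer_set' (Set.toFinite D)]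
        exact key t (by rw [ht]; exact d0))
      (by
        rw [Subgroup.mem_comap, MulAction.mem_stabilizer_set' (Set.toFinite D)]
        exact key x dX)
    intro t
    have : t ∈ (MulAction.stabilizer (Equiv.Perm Ω) D).comap ρ₁ := hS ▸ Subgroup.mem_top t
    rw [Subgroup.mem_comap, MulAction.mem_stabilizer_set' (Set.toFinite D)] at this
    exact this
  have hL' : ∀ z, ∀ ω, ω ∉ L → ρ₂ z ω ∉ L := by
    intro z ω h h'
    have := hL z⁻¹ _ h'
    rw [← Equiv.Perm.mul_apply, ← map_mul, inv_mul_cancel, map_one] at this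
    exact h this
  have D2 : ∀ z, ∀ d ∈ D \ L, ρ₂ z d ∈ D \ L := by
    have key : ∀ t, ρ₂ t ω₀ ∈ D → ∀ d ∈ D \ L, ρ₂ t d ∈ D \ L := by
      intro t ht d hd
      refine ⟨?_, hL' t d hd.2⟩
      by_cases hd0 : d = ω₀
      · rwa [hd0]
      · obtain ⟨e, he, he1, he2⟩ := exists_third (D := D \ L) ⟨d0, h0L⟩ ⟨dX, hxL⟩ ⟨dY, hyL⟩
          htri.1 htri.2.1 htri.2.2.1 d hd0
        have := hF _ d0 d hd.1 e he.1 (Ne.symm hd0) he2 he1.symm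
        refine (hcl _ ht _ _ (f4' t _ _ _ this ?_ ?_ ?_ ?_ ?_ ?_ ?_ ?_ ?_ ?_ ?_ ?_)).1
        · exact neL p hpL _ h0L
        · exact neL p hpL _ hd.2
        · exact neL p hpL _ he.2
        · exact neL r hrL _ h0L
        · exact neL r hrL _ hd.2
        · exact neL r hrL _ he.2
        · exact neL p hpL _ (hL' _ _ h0L)
        · exact neL p hpL _ (hL' _ _ hd.2)
        · exact neL p hpL _ (hL' _ _ he.2)
        · exact neL r hrL _ (hL' _ _ h0L)
        · exact neL r hrL _ (hL' _ _ hd.2)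
        · exact neL r hrL _ (hL' _ _ he.2)
    have hS := hmax₂ ((MulAction.stabilizer (Equiv.Perm Ω) (D \ L)).comap ρ₂)
      (by
        intro t ht
        rw [Subgroup.mem_comap, MulAction.mem_stabilizer_set' (Set.toFinite _)]
        exact key t (by rw [ht]; exact d0))
      (by
        rw [Subgroup.mem_comap, MulAction.mem_stabilizer_set' (Set.toFinite _)]
        exact key y dY)
    intro t
    have : t ∈ (MulAction.stabilizer (Equiv.Perm Ω) (D \ L)).comap ρ₂ := hS ▸ Subgroup.mem_top t
    rw [Subgroup.mem_comap, MulAction.mem_stabilizer_set' (Set.toFinite _)] at this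
    exact this
  have hD : ∀ ω, ω ∈ D := by
    apply hconn D d0 D1
    intro z d hd e1 e2 e3 e4
    by_cases hdL : d ∈ L
    · have m1 : ω₀ ∈ D \ L := ⟨d0, h0L⟩
      have m2 : X ω₀ ∈ D \ L := ⟨dX, hxL⟩
      have := hF _ d0 _ dX d hd hx.symm (fun h => hxL (h ▸ hdL)) (fun h => h0L (h ▸ hdL))
      have n1 := D2 z _ m1
      have n2 := D2 z _ m2
      refine (hcl _ n1.1 _ _ (f4' z _ _ _ this ?_ ?_ e1.symm ?_ ?_ e2.symm ?_ ?_ e3.symm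
        ?_ ?_ e4.symm)).2
      · exact neL p hpL _ h0L
      · exact neL p hpL _ hxL
      · exact neL r hrL _ h0L
      · exact neL r hrL _ hxL
      · exact neL p hpL _ n1.2
      · exact neL p hpL _ n2.2
      · exact neL r hrL _ n1.2
      · exact neL r hrL _ n2.2
    · exact (D2 z d ⟨hd, hdL⟩).1
  have hU : FullOn H Set.univ := fun i _ j _ k _ => hF i (hD i) j (hD j) k (hD k)
  have hAlt := alt_le_of_full hU
  have hG : ∀ σ, permSL Ω K σ ∈ G := by
    intro σ
    obtain ⟨_, h⟩ := mem_permH.1 (hAlt σ.2)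
    exact h
  have hpr' : ρ₂ z₀ p ≠ ρ₂ z₀ r := fun h => hpr ((ρ₂ z₀).injective h)
  refine SL_eq_top_of_alt G hcard hG c hc0 hc hpr hpr' hz1.symm hz4.symm hz3.symm hz2.symm ?_
  rw [← hg, ← permSL_conj ⟨ρ₂ z₀, hs₂ z₀⟩ hpr hpr' (-c), ← SpecialLinearGroup.transvection_inv, ← hg]
  have := G.mul_mem (f2 z₀) (G.inv_mem (hG ⟨ρ₂ z₀, hs₂ z₀⟩))
  convert this using 1
  group
end partD

section partE
variable {T : Type*} [Group T] [Finite T] [IsSimpleGroup T]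

theorem simple_exists_pair (hna : ¬ ∀ x y : T, x * y = y * x) :
    ∃ x t : T, x ≠ 1 ∧ x * t = t * x ∧ t ∉ Subgroup.zpowers x := by
  have hcard : Nat.card T ≠ 1 := by
    intro h
    have := (Nat.card_eq_one_iff_unique.mp h).1
    exact hna fun x y => Subsingleton.elim _ _
  obtain ⟨p, hp⟩ : ∃ p, (Nat.card T).minFac = p := ⟨_, rfl⟩
  have hpp : p.Prime := hp ▸ Nat.minFac_prime hcard
  haveI : Fact p.Prime := ⟨hpp⟩
  let P : Sylow p T := default
  have hdvd : p ∣ Nat.card T := hp ▸ Nat.minFac_dvd _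
  have hPbot : (P : Subgroup T) ≠ ⊥ := P.ne_bot_of_dvd_card hdvd
  have hnc : ¬ IsCyclic P := by
    intro hP
    have h1 := hP.isComplement' hp
    rcases Subgroup.Normal.eq_bot_or_eq_top (MonoidHom.normal_ker
      (MonoidHom.transferSylow P (hP.normalizer_le_centralizer hp))) with h | h
    · rw [h, Subgroup.isComplement'_bot_left] at h1
      apply hna
      intro x y
      have hx : x ∈ (P : Subgroup T) := h1 ▸ Subgroup.mem_top x
      have hy : y ∈ (P : Subgroup T) := h1 ▸ Subgroup.mem_top y
      letI := hP.commGroup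
      have := mul_comm (⟨x, hx⟩ : P) ⟨y, hy⟩
      exact congrArg Subtype.val this
    · rw [h, Subgroup.isComplement'_top_left] at h1
      exact hPbot h1
  haveI : Nontrivial P := (Subgroup.nontrivial_iff_ne_bot _).2 hPbot
  haveI := P.2.center_nontrivial
  obtain ⟨⟨x, hx⟩, hx1⟩ := exists_ne (1 : Subgroup.center P)
  have : ∃ t : P, t ∉ Subgroup.zpowers x := by
    by_contra! h
    exact hnc ⟨⟨x, h⟩⟩
  obtain ⟨t, ht⟩ := this
  refine ⟨x, t, ?_, ?_, ?_⟩
  · intro h; apply hx1; ext; exact h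
  · exact congrArg Subtype.val ((Subgroup.mem_center_iff.1 hx t).symm)
  · rintro ⟨n, hn⟩
    exact ht ⟨n, by ext; simpa using hn⟩

theorem simple_zpowers_ne_top (hna : ¬ ∀ x y : T, x * y = y * x) (x : T) :
    Subgroup.zpowers x ≠ ⊤ := by
  intro h
  apply hna
  intro a b
  have ha : a ∈ Subgroup.zpowers x := h ▸ Subgroup.mem_top a
  have hb : b ∈ Subgroup.zpowers x := h ▸ Subgroup.mem_top b
  obtain ⟨m, rfl⟩ := ha
  obtain ⟨n, rfl⟩ := hb
  exact (Commute.refl x).zpow_zpow m n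

theorem simple_hom_eq_one (hna : ¬ ∀ x y : T, x * y = y * x) {G : Type*} [CommGroup G]
    (f : T →* G) (t : T) : f t = 1 := by
  rcases Subgroup.Normal.eq_bot_or_eq_top (MonoidHom.normal_ker f) with h | h
  · exfalso
    apply hna
    intro x y
    apply (MonoidHom.ker_eq_bot_iff f).1 h
    simp [mul_comm]
  · exact MonoidHom.mem_ker.1 (h ▸ Subgroup.mem_top t)

/-- some coset is moved -/
theorem simple_moves {C : Subgroup T} (hC : C ≠ ⊤) {x : T} (hx : x ≠ 1) :
    ∃ q : T ⧸ C, x • q ≠ q := by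
  by_contra! h
  have hk : x ∈ C.normalCore := by
    rw [Subgroup.normalCore_eq_ker, MonoidHom.mem_ker]
    ext q
    exact h q
  rcases Subgroup.Normal.eq_bot_or_eq_top (Subgroup.normalCore_normal C) with h1 | h1
  · rw [h1] at hk
    exact hx hk
  · exact hC (top_le_iff.1 (h1 ▸ Subgroup.normalCore_le C))

theorem coatom_stab {A : Subgroup T} (hA : IsCoatom A) (q : T ⧸ A) (x : T) (hx : x • q ≠ q)
    (S : Subgroup T) (hS : ∀ t : T, t • q = q → t ∈ S) (hxS : x ∈ S) : S = ⊤ := by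
  induction q using QuotientGroup.induction_on with
  | H g =>
  have key : ∀ t : T, t • (g : T ⧸ A) = g ↔ g⁻¹ * t * g ∈ A := by
    intro t
    rw [MulAction.Quotient.smul_coe, smul_eq_mul, eq_comm, QuotientGroup.eq, mul_assoc]
  let S' := S.comap (MulAut.conj g).toMonoidHom
  have hlt : A < S' := by
    refine lt_of_le_of_ne ?_ ?_
    · intro a ha
      refine hS _ ?_
      rw [key]
      simpa [mul_assoc] using ha
    · intro h
      apply hx
      rw [key, h]
      change g * (g⁻¹ * x * g) * g⁻¹ ∈ S
      simpa [mul_assoc] using hxS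
  have h2 := hA.2 _ hlt
  rw [eq_top_iff]
  intro s _
  have : g⁻¹ * s * g ∈ S' := h2 ▸ Subgroup.mem_top _
  have h3 : g * (g⁻¹ * s * g) * g⁻¹ ∈ S := this
  simpa [mul_assoc] using h3

theorem fix_mk {C : Subgroup T} {x t : T} (hx : x ∈ C) (h : x * t = t * x) :
    x • (t : T ⧸ C) = t := by
  rw [MulAction.Quotient.smul_coe, smul_eq_mul, h, eq_comm, QuotientGroup.eq]
  simpa using hx

theorem exists_coatom_ge {C : Subgroup T} (hC : C ≠ ⊤) : ∃ A, IsCoatom A ∧ C ≤ A := by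
  rcases eq_top_or_exists_le_coatom C with h | h
  · exact absurd h hC
  · exact h

end partE

section partF

theorem glue {S₁ S₂ J : Type*} [Fintype S₁] [Fintype S₂] [Fintype J] (g₁ : J → S₁) (g₂ : J → S₂)
    (h₁ : Function.Injective g₁) (h₂ : Function.Injective g₂) (n : ℕ)
    (hn : n + Fintype.card J = Fintype.card S₁ + Fintype.card S₂) :
    ∃ (i₁ : S₁ ↪ Fin n) (i₂ : S₂ ↪ Fin n),
      (∀ a s, i₁ a = i₂ s ↔ ∃ j, g₁ j = a ∧ g₂ j = s) ∧
      ∀ ω, (∃ a, i₁ a = ω) ∨ ∃ s, i₂ s = ω := by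
  classical
  have hc : Fintype.card (S₁ ⊕ {s : S₂ // ¬ ∃ j, g₂ j = s}) = Fintype.card (Fin n) := by
    have e1 : Fintype.card {s : S₂ // ∃ j, g₂ j = s} = Fintype.card J :=
      Fintype.card_congr (Equiv.ofInjective g₂ h₂).symm
    have e2 := Fintype.card_subtype_compl (fun s : S₂ => ∃ j, g₂ j = s)
    have e3 : Fintype.card {s : S₂ // ∃ j, g₂ j = s} ≤ Fintype.card S₂ :=
      Fintype.card_subtype_le _
    rw [Fintype.card_sum, Fintype.card_fin]
    omega
  let e := Fintype.equivOfCardEq hc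
  let f : S₂ → S₁ ⊕ {s : S₂ // ¬ ∃ j, g₂ j = s} := fun s =>
    if h : ∃ j, g₂ j = s then Sum.inl (g₁ h.choose) else Sum.inr ⟨s, h⟩
  have f1 : ∀ j, f (g₂ j) = Sum.inl (g₁ j) := by
    intro j
    have h : ∃ j', g₂ j' = g₂ j := ⟨j, rfl⟩
    simp only [f, dif_pos h]
    rw [h₂ h.choose_spec]
  have f2 : ∀ s (h : ¬ ∃ j, g₂ j = s), f s = Sum.inr ⟨s, h⟩ := by
    intro s h
    simp only [f, dif_neg h]
  have hf : Function.Injective f := by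
    intro s s' hs
    by_cases h : ∃ j, g₂ j = s <;> by_cases h' : ∃ j, g₂ j = s'
    · obtain ⟨j, rfl⟩ := h
      obtain ⟨j', rfl⟩ := h'
      rw [f1, f1] at hs
      rw [h₁ (Sum.inl_injective hs)]
    · obtain ⟨j, rfl⟩ := h
      rw [f1, f2 s' h'] at hs
      cases hs
    · obtain ⟨j, rfl⟩ := h'
      rw [f1, f2 s h] at hs
      cases hs
    · rw [f2 s h, f2 s' h'] at hs
      exact congrArg Subtype.val (Sum.inr_injective hs)
  refine ⟨⟨fun a => e (Sum.inl a), fun a b h => Sum.inl_injective (e.injective h)⟩,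
    ⟨fun s => e (f s), fun a b h => hf (e.injective h)⟩, ?_, ?_⟩
  · intro a s
    change e (Sum.inl a) = e (f s) ↔ _
    constructor
    · intro h
      replace h := e.injective h
      by_cases hs : ∃ j, g₂ j = s
      · obtain ⟨j, rfl⟩ := hs
        rw [f1] at h
        exact ⟨j, (Sum.inl_injective h).symm, rfl⟩
      · rw [f2 s hs] at h
        cases h
    · rintro ⟨j, rfl, rfl⟩
      rw [f1]
  · intro ω
    obtain ⟨u, rfl⟩ := e.surjective ω
    rcases u with a | ⟨s, hs⟩
    · exact Or.inl ⟨a, rfl⟩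
    · exact Or.inr ⟨s, congrArg e (f2 s hs)⟩

variable {T : Type*} [Group T]

/-- action on a sum of one set and copies of another -/
def actSum (T X₀ X : Type*) [Group T] [MulAction T X₀] [MulAction T X] (k : ℕ) :
    T →* Equiv.Perm (X₀ ⊕ Fin k × X) :=
  MonoidHom.mk' (fun t => Equiv.sumCongr (MulAction.toPerm t)
    (Equiv.prodCongr (Equiv.refl _) (MulAction.toPerm t))) (by
    intro a b
    ext u
    rcases u with u | ⟨i, u⟩ <;> simp [mul_smul])

/-- action on copies of a set -/
def actProd (T I X : Type*) [Group T] [MulAction T X] :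
    T →* Equiv.Perm (I × X) :=
  MonoidHom.mk' (fun t => Equiv.prodCongr (Equiv.refl _) (MulAction.toPerm t)) (by
    intro a b
    ext u <;> simp [mul_smul])

theorem actSum_inl {X₀ X : Type*} [MulAction T X₀] [MulAction T X] {k : ℕ} (t : T) (w : X₀) :
    actSum T X₀ X k t (Sum.inl w) = Sum.inl (t • w) := rfl

theorem actSum_inr {X₀ X : Type*} [MulAction T X₀] [MulAction T X] {k : ℕ} (t : T) (i : Fin k)
    (u : X) : actSum T X₀ X k t (Sum.inr (i, u)) = Sum.inr (i, t • u) := rfl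

theorem actProd_apply {I X : Type*} [MulAction T X] (t : T) (i : I)
    (u : X) : actProd T I X t (i, u) = (i, t • u) := rfl

theorem construct {T₁ T₂ X₀ X Y K : Type*} [Group T₁] [Group T₂] [Field K]
    [MulAction T₁ X₀] [MulAction T₁ X] [MulAction T₂ Y]
    [MulAction.IsPretransitive T₁ X₀] [MulAction.IsPretransitive T₁ X]
    [MulAction.IsPretransitive T₂ Y] [Fintype X₀] [Fintype X] [Fintype Y]
    (hT₁ : ∀ (f : T₁ →* ℤˣ) t, f t = 1) (hT₂ : ∀ (f : T₂ →* ℤˣ) t, f t = 1)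
    (x : T₁) (y : T₂) (w0 w1 : X₀) (u0 u1 u2 : X) (v0 v1 : Y)
    (hw0 : x • w0 = w0) (hw1 : x • w1 ≠ w1) (hu0 : x • u0 = u0) (hu1 : x • u1 = u1)
    (hu01 : u0 ≠ u1) (hu2 : x • u2 ≠ u2) (hv0 : y • v0 = v0) (hv1 : y • v1 ≠ v1)
    (hmax₁ : ∀ S : Subgroup T₁, (∀ t : T₁, t • w1 = w1 → t ∈ S) → x ∈ S → S = ⊤)
    (hmax₂ : ∀ S : Subgroup T₂, (∀ t : T₂, t • v1 = v1 → t ∈ S) → y ∈ S → S = ⊤)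
    (k E n : ℕ) (hE : 2 ≤ E) (hEk : E ≤ k) (hn7 : 7 ≤ n)
    (hn : n + (1 + (k + (k + E))) =
      (Fintype.card X₀ + k * Fintype.card X) + (k + 1) * Fintype.card Y)
    (c : K) (hc0 : c ≠ 0) (hc : ∀ a : K, a ≠ 0 → ∃ k : ℕ, c ^ k = a) :
    ∃ (ρ₁ : T₁ →* Equiv.Perm (Fin n)) (ρ₂ : T₂ →* Equiv.Perm (Fin n))
      (hs₁ : ∀ t, ρ₁ t ∈ alternatingGroup (Fin n)) (hs₂ : ∀ t, ρ₂ t ∈ alternatingGroup (Fin n))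
      (p r : Fin n) (hpr : p ≠ r), ρ₁ x ≠ 1 ∧ ρ₂ y ≠ 1 ∧
    ((permSL (Fin n) K).comp (ρ₁.codRestrict _ hs₁)).range ⊔
      (((MulAut.conj (SpecialLinearGroup.transvection hpr c)).toMonoidHom.comp
        (permSL (Fin n) K)).comp (ρ₂.codRestrict _ hs₂)).range = ⊤ := by
  classical
  have hk2 : 2 ≤ k := hE.trans hEk
  let pre : Fin k → X₀ ⊕ Fin k × X := fun i =>
    if i.val = 0 then Sum.inl w0 else Sum.inr (⟨i.val - 1, by omega⟩, u2)
  let g₁ : Unit ⊕ (Fin k ⊕ (Fin k ⊕ Fin E)) → X₀ ⊕ Fin k × X :=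
    Sum.elim (fun _ => Sum.inl w1) (Sum.elim pre (Sum.elim (fun i => Sum.inr (i, u0))
      (fun i => Sum.inr (Fin.castLE hEk i, u1))))
  let g₂ : Unit ⊕ (Fin k ⊕ (Fin k ⊕ Fin E)) → Option (Fin k) × Y :=
    Sum.elim (fun _ => (none, v1)) (Sum.elim (fun i => (some i, v0))
      (Sum.elim (fun i => (some i, v1)) (fun i => (some (Fin.castLE hEk i), y • v1))))
  have w01 : w0 ≠ w1 := fun h => hw1 (h ▸ hw0)
  have u02 : u0 ≠ u2 := fun h => hu2 (h ▸ hu0)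
  have u12 : u1 ≠ u2 := fun h => hu2 (h ▸ hu1)
  have v01 : v0 ≠ v1 := fun h => hv1 (h ▸ hv0)
  have v02 : v0 ≠ y • v1 := fun h => v01 (smul_left_cancel y (hv0.trans h))
  have pre_inj : Function.Injective pre := by
    intro i j h
    simp only [pre] at h
    ext
    split_ifs at h with h1 h2 h2
    · omega
    · have := congrArg (fun q : Fin k × X => q.1.val) (Sum.inr_injective h)
      simp at this
      omega
  have pre_w1 : ∀ i, pre i ≠ Sum.inl w1 := by
    intro i h
    simp only [pre] at h
    split_ifs at h with h1
    exact w01 (Sum.inl_injective h)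
  have pre_u : ∀ i j u, pre i = Sum.inr (j, u) → u = u2 := by
    intro i j u h
    simp only [pre] at h
    split_ifs at h with h1
    exact (congrArg Prod.snd (Sum.inr_injective h)).symm
  have hg₁ : Function.Injective g₁ := by
    rintro (a | a | a | a) (b | b | b | b) h <;> simp only [g₁, Sum.elim_inl, Sum.elim_inr] at h
    · rfl
    · exact absurd h.symm (pre_w1 b)
    · cases h
    · cases h
    · exact absurd h (pre_w1 a)
    · rw [pre_inj h]
    · exact absurd (pre_u _ _ _ h) u02
    · exact absurd (pre_u _ _ _ h) u12
    · cases h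
    · exact absurd (pre_u _ _ _ h.symm) u02
    · have : a = b := congrArg Prod.fst (Sum.inr_injective h)
      rw [this]
    · exact absurd (congrArg Prod.snd (Sum.inr_injective h)) hu01
    · cases h
    · exact absurd (pre_u _ _ _ h.symm) u12
    · exact absurd (congrArg Prod.snd (Sum.inr_injective h)).symm hu01
    · have := congrArg Prod.fst (Sum.inr_injective h)
      rw [Fin.castLE_injective hEk this]
  have hg₂ : Function.Injective g₂ := by
    rintro (a | a | a | a) (b | b | b | b) h <;>
      simp only [g₂, Sum.elim_inl, Sum.elim_inr, Prod.mk.injEq, Option.some.injEq] at h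
    · rfl
    · cases h.1
    · cases h.1
    · cases h.1
    · cases h.1
    · rw [h.1]
    · exact absurd h.2 v01
    · exact absurd h.2 v02
    · cases h.1
    · exact absurd h.2.symm v01
    · rw [h.1]
    · exact absurd h.2.symm hv1
    · cases h.1
    · exact absurd h.2.symm v02
    · exact absurd h.2 hv1
    · rw [Fin.castLE_injective hEk h.1]
  obtain ⟨i₁, i₂, hi, hcov⟩ := glue g₁ g₂ hg₁ hg₂ n (by
    simp only [Fintype.card_sum, Fintype.card_prod, Fintype.card_option, Fintype.card_fin,
      Fintype.card_unit]
    exact hn)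
  let ρ₁ : T₁ →* Equiv.Perm (Fin n) := (Equiv.Perm.viaEmbeddingHom i₁).comp (actSum T₁ X₀ X k)
  let ρ₂ : T₂ →* Equiv.Perm (Fin n) :=
    (Equiv.Perm.viaEmbeddingHom i₂).comp (actProd T₂ (Option (Fin k)) Y)
  have r1 : ∀ t a, ρ₁ t (i₁ a) = i₁ (actSum T₁ X₀ X k t a) := fun t a =>
    Equiv.Perm.viaEmbedding_apply _ _ _
  have r2 : ∀ t a, ρ₂ t (i₂ a) = i₂ (actProd T₂ (Option (Fin k)) Y t a) := fun t a =>
    Equiv.Perm.viaEmbedding_apply _ _ _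
  have r1' : ∀ t ω, ρ₁ t ω ≠ ω → ∃ a, i₁ a = ω := by
    intro t ω h
    by_contra h'
    exact h (Equiv.Perm.viaEmbedding_apply_of_notMem _ _ _ h')
  have r2' : ∀ t ω, ρ₂ t ω ≠ ω → ∃ a, i₂ a = ω := by
    intro t ω h
    by_contra h'
    exact h (Equiv.Perm.viaEmbedding_apply_of_notMem _ _ _ h')
  have hs₁ : ∀ t, ρ₁ t ∈ alternatingGroup (Fin n) := fun t =>
    Equiv.Perm.mem_alternatingGroup.2 (hT₁ (Equiv.Perm.sign.comp ρ₁) t)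
  have hs₂ : ∀ t, ρ₂ t ∈ alternatingGroup (Fin n) := fun t =>
    Equiv.Perm.mem_alternatingGroup.2 (hT₂ (Equiv.Perm.sign.comp ρ₂) t)
  clear_value ρ₁ ρ₂
  -- gluing identities
  have q0 : i₁ (Sum.inl w1) = i₂ (none, v1) := (hi _ _).2 ⟨Sum.inl (), rfl, rfl⟩
  have qpre : ∀ i, i₁ (pre i) = i₂ (some i, v0) := fun i =>
    (hi _ _).2 ⟨Sum.inr (Sum.inl i), rfl, rfl⟩
  have qu0 : ∀ i, i₁ (Sum.inr (i, u0)) = i₂ (some i, v1) := fun i =>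
    (hi _ _).2 ⟨Sum.inr (Sum.inr (Sum.inl i)), rfl, rfl⟩
  have qu1 : ∀ i : Fin k, i.val < E → i₁ (Sum.inr (i, u1)) = i₂ (some i, y • v1) := fun i h =>
    (hi _ _).2 ⟨Sum.inr (Sum.inr (Sum.inr ⟨i, h⟩)), rfl, rfl⟩
  let a0 : Fin k := ⟨0, by omega⟩
  let a1 : Fin k := ⟨1, by omega⟩
  have a01 : a0 ≠ a1 := by simp [a0, a1]
  have hpr : i₂ (some a0, v1) ≠ i₂ (some a1, v1) := by
    intro h
    have := i₂.injective h
    simp only [Prod.mk.injEq, Option.some.injEq] at this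
    exact a01 this.1
  have hx : ρ₁ x (i₁ (Sum.inl w1)) ≠ i₁ (Sum.inl w1) := by
    rw [r1, actSum_inl]
    intro h
    exact hw1 (Sum.inl_injective (i₁.injective h))
  have hy : ρ₂ y (i₁ (Sum.inl w1)) ≠ i₁ (Sum.inl w1) := by
    rw [q0, r2, actProd_apply]
    intro h
    exact hv1 (congrArg Prod.snd (i₂.injective h))
  refine ⟨ρ₁, ρ₂, hs₁, hs₂, i₂ (some a0, v1), i₂ (some a1, v1), hpr, ?_, ?_, ?_⟩
  · intro h
    rw [h] at hx
    exact hx rfl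
  · intro h
    rw [h] at hy
    exact hy rfl
  refine abstract_gen ρ₁ ρ₂ hs₁ hs₂ (by simpa using hn7) c hc0 hc x y (i₁ (Sum.inl w1))
    (i₂ (some a0, v1)) (i₂ (some a1, v1))
    {ω | ∃ (i : Fin k) (v : Y), i.val < 2 ∧ ω = i₂ (some i, v)}
    hx hy ?_ ?_ ?_ hpr ?_ ?_ ?_ ?_ ?_ ?_ ?_ ?_ y ?_ ?_ ?_ ?_
  · intro ω h1 h2
    obtain ⟨a, rfl⟩ := r1' _ _ h1
    obtain ⟨s, hs⟩ := r2' _ _ h2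
    obtain ⟨j, rfl, rfl⟩ := (hi a s).1 hs.symm
    rw [← hs, r2] at h2
    rw [r1] at h1
    rcases j with j | j | j | j
    · rfl
    · exact absurd (by simp only [g₂, Sum.elim_inl, Sum.elim_inr, actProd_apply, hv0]) h2
    · exact absurd (by simp only [g₁, Sum.elim_inl, Sum.elim_inr, actSum_inr, hu0]) h1
    · exact absurd (by simp only [g₁, Sum.elim_inl, Sum.elim_inr, actSum_inr, hu1]) h1
  · intro S hS
    refine hmax₁ S fun t ht => hS t ?_
    rw [r1, actSum_inl, ht]
  · intro S hS
    refine hmax₂ S fun t ht => hS t ?_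
    rw [q0, r2, actProd_apply, ht]
  · rw [← qu0, r1, actSum_inr, hu0]
  · rw [← qu0, r1, actSum_inr, hu0]
  · rintro z _ ⟨i, v, h, rfl⟩
    exact ⟨i, z • v, h, by rw [r2, actProd_apply]⟩
  · exact ⟨a0, v1, by simp [a0], rfl⟩
  · exact ⟨a1, v1, by simp [a1], rfl⟩
  · rintro ⟨i, v, -, h⟩
    rw [q0] at h
    cases congrArg Prod.fst (i₂.injective h)
  · rintro ⟨i, v, -, h⟩
    rw [r1, actSum_inl] at h
    obtain ⟨j, h1, h2⟩ := (hi _ _).1 h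
    rcases j with j | j | j | j
    · cases congrArg Prod.fst h2
    · simp only [g₁, Sum.elim_inl, Sum.elim_inr, pre] at h1
      split_ifs at h1
      have := Sum.inl_injective h1
      exact w01 (smul_left_cancel x (hw0.trans this))
    · cases h1
    · cases h1
  · intro D hD hD1 hD2
    have t1 : ∀ i u u', i₁ (Sum.inr (i, u)) ∈ D → i₁ (Sum.inr (i, u')) ∈ D := by
      intro i u u' h
      obtain ⟨t, rfl⟩ := MulAction.exists_smul_eq T₁ u u'
      have := hD1 t _ h
      rwa [r1, actSum_inr] at this
    have t0 : ∀ w, i₁ (Sum.inl w) ∈ D := by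
      intro w
      obtain ⟨t, rfl⟩ := MulAction.exists_smul_eq T₁ w1 w
      have := hD1 t _ hD
      rwa [r1, actSum_inl] at this
    have tn : ∀ v, i₂ (none, v) ∈ D := by
      intro v
      obtain ⟨t, rfl⟩ := MulAction.exists_smul_eq T₂ v1 v
      have := hD2 t _ hD
      rw [q0, r2, actProd_apply] at this
      apply this <;> (intro h; cases congrArg Prod.fst (i₂.injective h))
    have ts : ∀ (i : Fin k) v v', i₂ (some i, v) ∈ D → (v ≠ v1 ∧ v' ≠ v1 ∨ 2 ≤ i.val) →
        i₂ (some i, v') ∈ D := by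
      intro i v v' h hv
      obtain ⟨t, rfl⟩ := MulAction.exists_smul_eq T₂ v v'
      have := hD2 t _ h
      rw [r2, actProd_apply] at this
      apply this
      all_goals
        intro h
        have h' := i₂.injective h
        simp only [Prod.mk.injEq, Option.some.injEq] at h'
        rcases hv with ⟨h3, h4⟩ | h3
        · first | exact h3 h'.2 | exact h4 h'.2
        · rw [h'.1] at h3
          simp [a0, a1] at h3
    have key : ∀ (m : ℕ) (hm : m < k), (∀ u, i₁ (Sum.inr (⟨m, hm⟩, u)) ∈ D) ∧
        ∀ v, i₂ (some ⟨m, hm⟩, v) ∈ D := by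
      intro m
      induction m with
      | zero =>
        intro hm
        have b0 : i₂ (some ⟨0, hm⟩, v0) ∈ D := by
          rw [← qpre]
          exact t0 _
        have b1 := ts _ _ (y • v1) b0 (Or.inl ⟨v01, hv1⟩)
        rw [← qu1 _ (by simp; omega)] at b1
        refine ⟨fun u => t1 _ _ _ b1, fun v => ?_⟩
        by_cases hv : v = v1
        · rw [hv, ← qu0]; exact t1 _ _ _ b1
        · exact ts _ _ _ b0 (Or.inl ⟨v01, hv⟩)
      | succ m ih =>
        intro hm
        have b0 : i₂ (some ⟨m + 1, hm⟩, v0) ∈ D := by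
          rw [← qpre]
          exact (ih (by omega)).1 _
        have b1 : ∃ u, i₁ (Sum.inr (⟨m + 1, hm⟩, u)) ∈ D := by
          by_cases h2 : 2 ≤ m + 1
          · have b1 := ts _ _ v1 b0 (Or.inr h2)
            rw [← qu0] at b1
            exact ⟨_, b1⟩
          · have b1 := ts _ _ (y • v1) b0 (Or.inl ⟨v01, hv1⟩)
            rw [← qu1 _ (by simp; omega)] at b1
            exact ⟨_, b1⟩
        obtain ⟨u, b1⟩ := b1
        refine ⟨fun u => t1 _ _ _ b1, fun v => ?_⟩
        by_cases hv : v = v1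
        · rw [hv, ← qu0]; exact t1 _ _ _ b1
        · exact ts _ _ _ b0 (Or.inl ⟨v01, hv⟩)
    intro ω
    rcases hcov ω with ⟨w | ⟨i, u⟩, rfl⟩ | ⟨⟨_ | i, v⟩, rfl⟩
    · exact t0 w
    · exact (key i.1 i.2).1 u
    · exact tn v
    · exact (key i.1 i.2).2 v
  all_goals
    rw [r2, actProd_apply]
    intro h
    have h' := i₂.injective h
    simp only [Prod.mk.injEq, Option.some.injEq] at h'
  · exact hv1 h'.2
  · exact hv1 h'.2
  · exact a01 h'.1
  · exact a01 h'.1.symm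

end partF

section partG

theorem arith_choice (A a b t₁ t₂ n : ℕ) (ha : 3 ≤ a) (hb : 3 ≤ b) (hA : A ≤ t₁)
    (hat : a ≤ t₁) (hbt : b ≤ t₂) (hn : n > 10 * (t₁ + t₂ + 1) ^ 2) :
    ∃ k E : ℕ, 2 ≤ E ∧ E ≤ k ∧ n + (1 + (k + (k + E))) = (A + k * a) + (k + 1) * b := by
  obtain ⟨m, hm⟩ : ∃ m, a + b = m + 2 := ⟨a + b - 2, by omega⟩
  have hm0 : 0 < m := by omega
  have h1 : m * m + m + A + b ≤ n := by
    have : m ≤ t₁ + t₂ := by omega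
    nlinarith [Nat.mul_le_mul this this]
  obtain ⟨N, hN⟩ : ∃ N, n + 1 = N + A + b := ⟨n + 1 - (A + b), by omega⟩
  have h2 : m * m + m ≤ N + m + 1 := by omega
  have d1 := Nat.div_add_mod (N + m + 1) m
  have d2 := Nat.mod_lt (N + m + 1) hm0
  obtain ⟨k, hk⟩ : ∃ k, k = (N + m + 1) / m := ⟨_, rfl⟩
  rw [← hk] at d1
  have h3 : m + 1 ≤ k := by
    rw [hk, Nat.le_div_iff_mul_le hm0]
    nlinarith
  obtain ⟨E, hE⟩ : ∃ E, N + E = m * k := ⟨m * k - N, by omega⟩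
  refine ⟨k, E, by omega, by omega, ?_⟩
  have : k * a + k * b = m * k + 2 * k := by
    rw [← mul_add, hm]; ring
  nlinarith

theorem three_le_of_moved {G X : Type*} [Group G] [MulAction G X] [Fintype X] (x : G) (u v : X)
    (hu : x • u = u) (hv : x • v ≠ v) : 3 ≤ Fintype.card X := by
  classical
  have h1 : u ≠ v := fun h => hv (h ▸ hu)
  have h2 : u ≠ x • v := fun h => h1 (smul_left_cancel x (hu.trans h))
  have : ({u, v, x • v} : Finset X).card = 3 := Finset.card_eq_three.2 ⟨_, _, _, h1, h2, hv.symm, rfl⟩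
  rw [← this]
  exact Finset.card_le_univ _

theorem comp_center_injective {T G : Type*} [Group T] [IsSimpleGroup T] [Group G]
    (hna : ¬ ∀ x y : T, x * y = y * x) (Φ : T →* G) (x : T) (hx : Φ x ≠ 1) :
    Function.Injective ((QuotientGroup.mk' (Subgroup.center G)).comp Φ) := by
  have hinj : Function.Injective Φ := by
    rcases Subgroup.Normal.eq_bot_or_eq_top (MonoidHom.normal_ker Φ) with h | h
    · exact (MonoidHom.ker_eq_bot_iff Φ).1 h
    · exact absurd (MonoidHom.mem_ker.1 (h ▸ Subgroup.mem_top x)) hx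
  rcases Subgroup.Normal.eq_bot_or_eq_top (MonoidHom.normal_ker
    ((QuotientGroup.mk' (Subgroup.center G)).comp Φ)) with h | h
  · exact (MonoidHom.ker_eq_bot_iff _).1 h
  · exfalso
    apply hna
    intro a b
    apply hinj
    have hb : b ∈ ((QuotientGroup.mk' (Subgroup.center G)).comp Φ).ker := h ▸ Subgroup.mem_top b
    rw [MonoidHom.mem_ker, MonoidHom.comp_apply, QuotientGroup.mk'_apply,
      QuotientGroup.eq_one_iff] at hb
    rw [map_mul, map_mul]
    exact Subgroup.mem_center_iff.1 hb (Φ a)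

theorem permSL_injective (n : ℕ) (K : Type*) [Field K] :
    Function.Injective (permSL (Fin n) K) := by
  intro σ τ h
  have h1 : permMatrixHom (R := K) σ.1 = permMatrixHom (R := K) τ.1 := congrArg Subtype.val h
  rw [permMatrixHom_apply, permMatrixHom_apply] at h1
  have h2 := PEquiv.toMatrix_injective h1
  have h3 : σ.1⁻¹ = τ.1⁻¹ := by
    ext i
    have h4 := congrArg (fun f : Fin n ≃. Fin n => f i) h2
    simp only [Equiv.toPEquiv_apply, Option.some.injEq] at h4
    rw [h4]
  exact Subtype.ext (inv_injective h3)

theorem finite_gen (K : Type*) [Field K] [Finite K] :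
    ∃ c : K, c ≠ 0 ∧ ∀ a : K, a ≠ 0 → ∃ k : ℕ, c ^ k = a := by
  obtain ⟨g, hg⟩ := IsCyclic.exists_generator (α := Kˣ)
  refine ⟨g, g.ne_zero, fun a ha => ?_⟩
  have := hg (Units.mk0 a ha)
  rw [← mem_powers_iff_mem_zpowers] at this
  obtain ⟨k, hk⟩ := this
  exact ⟨k, by simpa using congrArg Units.val hk⟩

theorem main_aux (T₁ T₂ : Type) [Group T₁] [Group T₂] [Finite T₁] [Finite T₂]
    [IsSimpleGroup T₁] [IsSimpleGroup T₂]
    (h₁ : ¬ ∀ x y : T₁, x * y = y * x) (h₂ : ¬ ∀ x y : T₂, x * y = y * x)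
    (n : ℕ) (hn : n > 10 * (Nat.card T₁ + Nat.card T₂ + 1) ^ 2)
    (K : Type) [Field K] [Fintype K] :
    ∃ H₁ H₂ : Subgroup
        (Matrix.SpecialLinearGroup (Fin n) K ⧸
          Subgroup.center (Matrix.SpecialLinearGroup (Fin n) K)),
      Nonempty (H₁ ≃* T₁) ∧ Nonempty (H₂ ≃* T₂) ∧ H₁ ⊔ H₂ = ⊤ := by
  classical
  obtain ⟨c, hc0, hc⟩ := finite_gen K
  obtain ⟨x, t, hx1, hxt, ht⟩ := simple_exists_pair h₁
  obtain ⟨y, -, hy1, -, -⟩ := simple_exists_pair h₂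
  have hCx := simple_zpowers_ne_top h₁ x
  have hCy := simple_zpowers_ne_top h₂ y
  obtain ⟨A, hA, hxA⟩ := exists_coatom_ge hCx
  obtain ⟨B, hB, hyB⟩ := exists_coatom_ge hCy
  have hxA' : x ∈ A := hxA (Subgroup.mem_zpowers x)
  have hyB' : y ∈ B := hyB (Subgroup.mem_zpowers y)
  obtain ⟨w1, hw1⟩ := simple_moves hA.1 hx1
  obtain ⟨u2, hu2⟩ := simple_moves hCx hx1
  obtain ⟨v1, hv1⟩ := simple_moves hB.1 hy1
  have hw0 : x • ((1 : T₁) : T₁ ⧸ A) = (1 : T₁) := fix_mk hxA' (by simp)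
  have hu0 : x • ((1 : T₁) : T₁ ⧸ Subgroup.zpowers x) = (1 : T₁) :=
    fix_mk (Subgroup.mem_zpowers x) (by simp)
  have hu1 : x • (t : T₁ ⧸ Subgroup.zpowers x) = t := fix_mk (Subgroup.mem_zpowers x) hxt
  have hv0 : y • ((1 : T₂) : T₂ ⧸ B) = (1 : T₂) := fix_mk hyB' (by simp)
  have hu01 : ((1 : T₁) : T₁ ⧸ Subgroup.zpowers x) ≠ t := by
    intro h
    rw [QuotientGroup.eq] at h
    apply ht
    simpa using h
  letI : Fintype (T₁ ⧸ A) := Fintype.ofFinite _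
  letI : Fintype (T₁ ⧸ Subgroup.zpowers x) := Fintype.ofFinite _
  letI : Fintype (T₂ ⧸ B) := Fintype.ofFinite _
  have k1 : ∀ {T : Type} [Group T] [Finite T] (C : Subgroup T) [Fintype (T ⧸ C)],
      Fintype.card (T ⧸ C) ≤ Nat.card T := by
    intro T _ _ C _
    rw [← Nat.card_eq_fintype_card]
    exact Nat.card_le_card_of_surjective _ (QuotientGroup.mk_surjective (s := C))
  obtain ⟨k, E, hE, hEk, hnk⟩ := arith_choice (Fintype.card (T₁ ⧸ A))
    (Fintype.card (T₁ ⧸ Subgroup.zpowers x)) (Fintype.card (T₂ ⧸ B)) (Nat.card T₁) (Nat.card T₂) n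
    (three_le_of_moved x _ _ hu0 hu2) (three_le_of_moved y _ _ hv0 hv1) (k1 _) (k1 _) (k1 _) hn
  have hn7 : 7 ≤ n := by
    have : 1 ≤ (Nat.card T₁ + Nat.card T₂ + 1) ^ 2 := Nat.one_le_pow _ _ (by omega)
    omega
  obtain ⟨ρ₁, ρ₂, hs₁, hs₂, p, r, hpr, hρ₁, hρ₂, htop⟩ := construct (K := K)
    (fun f t => simple_hom_eq_one h₁ f t) (fun f t => simple_hom_eq_one h₂ f t)
    x y _ w1 _ _ u2 _ v1 hw0 hw1 hu0 hu1 hu01 hu2 hv0 hv1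
    (fun S hS hxS => coatom_stab hA w1 x hw1 S hS hxS)
    (fun S hS hxS => coatom_stab hB v1 y hv1 S hS hxS) k E n hE hEk hn7 hnk c hc0 hc
  set Φ₁ := (permSL (Fin n) K).comp (ρ₁.codRestrict _ hs₁) with hΦ₁
  set Φ₂ := ((MulAut.conj (SpecialLinearGroup.transvection hpr c)).toMonoidHom.comp
        (permSL (Fin n) K)).comp (ρ₂.codRestrict _ hs₂) with hΦ₂
  have n1 : Φ₁ x ≠ 1 := by
    intro h
    have h' : permSL (Fin n) K ⟨ρ₁ x, hs₁ x⟩ = 1 := h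
    rw [← map_one (permSL (Fin n) K)] at h'
    exact hρ₁ (congrArg Subtype.val (permSL_injective n K h'))
  have n2 : Φ₂ y ≠ 1 := by
    intro h
    have h' : MulAut.conj (SpecialLinearGroup.transvection hpr c)
      (permSL (Fin n) K ⟨ρ₂ y, hs₂ y⟩) = 1 := h
    rw [map_eq_one_iff _ (MulEquiv.injective _), ← map_one (permSL (Fin n) K)] at h'
    exact hρ₂ (congrArg Subtype.val (permSL_injective n K h'))
  refine ⟨_, _, ⟨(MonoidHom.ofInjective (comp_center_injective h₁ Φ₁ x n1)).symm⟩,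
    ⟨(MonoidHom.ofInjective (comp_center_injective h₂ Φ₂ y n2)).symm⟩, ?_⟩
  rw [MonoidHom.range_comp (f := Φ₁), MonoidHom.range_comp (f := Φ₂), ← Subgroup.map_sup, htop]
  exact Subgroup.map_top_of_surjective _ (QuotientGroup.mk'_surjective _)

end partG

end allParts

/-- Type-A case of Theorem 2.1(i): there is a function `f : ℕ → ℕ → ℕ` such that for any two
finite non-abelian simple groups `T₁, T₂` of orders `t₁, t₂`, every `n > f t₁ t₂` and every
finite field `K`, the projective special linear group `PSL_n(K)` is generated by a copy of
`T₁` and a copy of `T₂`. -/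
theorem stmt_2 :
    ∃ f : ℕ → ℕ → ℕ,
      ∀ (T₁ T₂ : Type) [Group T₁] [Group T₂] [Finite T₁] [Finite T₂]
        [IsSimpleGroup T₁] [IsSimpleGroup T₂],
        (¬ ∀ x y : T₁, x * y = y * x) → (¬ ∀ x y : T₂, x * y = y * x) →
        ∀ n : ℕ, n > f (Nat.card T₁) (Nat.card T₂) →
          ∀ (K : Type) [Field K] [Fintype K],
            ∃ H₁ H₂ : Subgroup
                (Matrix.SpecialLinearGroup (Fin n) K ⧸
                  Subgroup.center (Matrix.SpecialLinearGroup (Fin n) K)),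
              Nonempty (H₁ ≃* T₁) ∧ Nonempty (H₂ ≃* T₂) ∧ H₁ ⊔ H₂ = ⊤ := by
  refine ⟨fun t₁ t₂ => 10 * (t₁ + t₂ + 1) ^ 2, ?_⟩
  intro T₁ T₂ _ _ _ _ _ _ h₁ h₂ n hn K _ _
  exact main_aux T₁ T₂ h₁ h₂ n hn K
end

section
/- Let G be a group that has at least one finite non-abelian simple group among its quotients (i.e. there is a surjective homomorphism from G onto some finite simple non-commutative group). Then the set of natural numbers n for which there exists a surjective homomorphism from the free product G * G onto the alternating group Alt(n) is infinite. -/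
open Equiv Equiv.Perm

namespace AltQuot

/-- Left regular action on many copies of `S`. -/
def reg (I S : Type) [Group S] : S →* Perm (I × S) where
  toFun s := Equiv.prodCongr (Equiv.refl I) (Equiv.mulLeft s)
  map_one' := by ext x <;> simp
  map_mul' s t := by ext x <;> simp [mul_assoc]

/-- The action of `S` on `Ω` whose nontrivial orbits are regular, given by an embedding. -/
noncomputable def act {I S Ω : Type} [Group S] (e : I × S ↪ Ω) : S →* Perm Ω :=
  (viaEmbeddingHom e).comp (reg I S)

lemma act_apply {I S Ω : Type} [Group S] (e : I × S ↪ Ω) (s : S) (i : I) (t : S) :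
    act e s (e (i, t)) = e (i, s * t) := by
  simp [act, viaEmbeddingHom_apply, viaEmbedding_apply, reg]

lemma act_fix {I S Ω : Type} [Group S] (e : I × S ↪ Ω) (s : S) (x : Ω)
    (hx : ∀ i t, e (i, t) ≠ x) : act e s x = x := by
  simp only [act, MonoidHom.comp_apply, viaEmbeddingHom_apply]
  apply viaEmbedding_apply_of_notMem
  rintro ⟨⟨i, t⟩, h⟩
  exact hx i t h

/-- A commutator criterion for 3-cycles. -/
lemma threeCycle {Ω : Type} [Fintype Ω] [DecidableEq Ω] (α β : Perm Ω) (o x y : Ω)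
    (hx : α x = o) (hy : β y = o)
    (h : ∀ z, z ≠ o → z ≠ x → z ≠ y → α (β z) = β (α z))
    (h1 : β (α o) = α o) (h2 : α (β o) = β o) (h3 : β x = x) (h4 : α y = y)
    (h5 : α o ≠ o) (h6 : β o ≠ o) :
    IsThreeCycle (α * β * (β * α)⁻¹) := by
  have h7 : α o ≠ β o := by
    intro h7
    rw [h7] at h1
    exact h6 (β.injective h1)
  have key : α * β * (β * α)⁻¹ = swap o (β o) * swap o (α o) := by
    rw [mul_inv_eq_iff_eq_mul]
    ext z
    simp only [Perm.mul_apply]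
    by_cases z1 : z = o
    · subst z1
      rw [h1, h2, swap_apply_right, swap_apply_left]
    by_cases z2 : z = x
    · subst z2
      rw [h3, hx, swap_apply_of_ne_of_ne h6 h7.symm, swap_apply_right]
    by_cases z3 : z = y
    · subst z3
      rw [h4, hy, swap_apply_left, swap_apply_of_ne_of_ne h5 h7]
    have e1 : β (α z) ≠ o := by
      intro e
      rw [← hy] at e
      have e' := β.injective e
      rw [← h4] at e'
      exact z3 (α.injective e')
    have e2 : β (α z) ≠ α o := by
      intro e
      rw [← h1] at e
      exact z1 (α.injective (β.injective e))
    have e3 : β (α z) ≠ β o := by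
      intro e
      have e' := β.injective e
      rw [← hx] at e'
      exact z2 (α.injective e')
    rw [h z z1 z2 z3, swap_apply_of_ne_of_ne e1 e2, swap_apply_of_ne_of_ne e1 e3]
  rw [key]
  exact isThreeCycle_swap_mul_swap_same h6.symm h5.symm h7.symm

/-- The underlying set: `N + 1` copies of `S` with one point deleted. -/
abbrev Pts (N : ℕ) (S : Type) [Group S] : Type :=
  {x : Fin (N + 1) × S // x ≠ (Fin.last N, 1)}

/-- A point of copy number `j`. -/
def pt {N : ℕ} {S : Type} [Group S] (j : ℕ) (t : S) (hj : j ≤ N) (h : j < N ∨ t ≠ 1) :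
    Pts N S :=
  ⟨(⟨j, by omega⟩, t), by
    intro e
    simp only [Prod.mk.injEq, Fin.ext_iff, Fin.val_last] at e
    rcases h with h | h
    · omega
    · exact h e.2⟩

lemma pt_inj {N : ℕ} {S : Type} [Group S] {j j' : ℕ} {t t' : S} {hj hj' h h'} :
    (pt (N := N) j t hj h = pt j' t' hj' h') ↔ j = j' ∧ t = t' := by
  simp [pt]

lemma exists_pt {N : ℕ} {S : Type} [Group S] (x : Pts N S) :
    ∃ j t hj h, x = pt j t hj h := by
  obtain ⟨⟨j, t⟩, hx⟩ := x
  refine ⟨j, t, by omega, ?_, rfl⟩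
  by_contra hc
  push Not at hc
  apply hx
  ext
  · simp; omega
  · simp [hc.2]

/-- The first embedding. -/
def emb1 (N : ℕ) (S : Type) [Group S] : Fin N × S ↪ Pts N S where
  toFun x := pt x.1 x.2 (by omega) (Or.inl (by omega))
  inj' := by
    rintro ⟨i, t⟩ ⟨i', t'⟩ h
    simpa [pt_inj, Fin.ext_iff] using h

open Classical in
/-- The second embedding as a function. -/
noncomputable def fun2 (N : ℕ) {S : Type} [Group S] (a : S) (x : Fin N × S) : Pts N S :=
  if h : x.2 ∈ Subgroup.zpowers a then
    if h' : x.1.val = 0 ∧ x.2 ≠ 1 then pt N x.2 le_rfl (Or.inr h'.2)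
    else pt x.1 x.2 (by omega) (Or.inl (by omega))
  else pt (x.1 + 1) x.2 (by omega) (Or.inr (by rintro e; exact h (e ▸ one_mem _)))

/-- The second embedding. -/
noncomputable def emb2 (N : ℕ) {S : Type} [Group S] (a : S) : Fin N × S ↪ Pts N S where
  toFun := fun2 N a
  inj' := by
    rintro ⟨i, t⟩ ⟨i', t'⟩ h
    have hi := i.2
    have hi' := i'.2
    unfold fun2 at h
    split_ifs at h <;> simp only [pt_inj] at h <;> obtain ⟨h1, rfl⟩ := h <;>
      simp_all [Fin.ext_iff]

lemma emb2_eq (N : ℕ) {S : Type} [Group S] (a : S) (x : Fin N × S) :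
    emb2 N a x = fun2 N a x := rfl

lemma emb2_out (N : ℕ) {S : Type} [Group S] (a : S) (i : ℕ) (hi : i < N) (t : S)
    (ht : t ∉ Subgroup.zpowers a) (h : i + 1 < N ∨ t ≠ 1) :
    emb2 N a (⟨i, hi⟩, t) = pt (i + 1) t hi h := by
  rw [emb2_eq]
  simp [fun2, ht]

lemma emb2_in (N : ℕ) {S : Type} [Group S] (a : S) (i : ℕ) (hi : i < N) (t : S)
    (ht : t ∈ Subgroup.zpowers a) (h0 : i ≠ 0 ∨ t = 1) :
    emb2 N a (⟨i, hi⟩, t) = pt i t hi.le (Or.inl hi) := by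
  have : ¬ (i = 0 ∧ t ≠ 1) := by tauto
  rw [emb2_eq]
  simp only [fun2, ht, this, dite_true, dite_false]

lemma emb2_zero (N : ℕ) {S : Type} [Group S] (a : S) (hN : 0 < N) (t : S)
    (ht : t ∈ Subgroup.zpowers a) (h0 : t ≠ 1) :
    emb2 N a (⟨0, hN⟩, t) = pt N t le_rfl (Or.inr h0) := by
  rw [emb2_eq]
  simp [fun2, ht, h0]

section
variable {N : ℕ} {S : Type} [Group S]

lemma act1 (s : S) (j : ℕ) (t : S) (hj : j < N) :
    act (emb1 N S) s (pt j t hj.le (Or.inl hj)) = pt j (s * t) hj.le (Or.inl hj) :=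
  act_apply (emb1 N S) s ⟨j, hj⟩ t

lemma act1_last (s : S) (t : S) (ht : t ≠ 1) :
    act (emb1 N S) s (pt N t le_rfl (Or.inr ht)) = pt N t le_rfl (Or.inr ht) := by
  apply act_fix
  intro i t' h
  change pt (i : ℕ) t' i.2.le (Or.inl i.2) = _ at h
  rw [pt_inj] at h
  omega

lemma act2_zero (a s t : S) (ht : t ≠ 1) (hN : 0 < N) :
    act (emb2 N a) s (pt 0 t hN.le (Or.inl hN)) = pt 0 t hN.le (Or.inl hN) := by
  apply act_fix
  intro i t' h
  have hi := i.2
  rw [emb2_eq] at h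
  simp only [fun2] at h
  split_ifs at h <;> simp only [pt_inj] at h <;> obtain ⟨h1, rfl⟩ := h
  · omega
  · tauto
  · omega

lemma mem_iff (a t : S) : a * t ∈ Subgroup.zpowers a ↔ t ∈ Subgroup.zpowers a :=
  Subgroup.mul_mem_cancel_left _ (Subgroup.mem_zpowers a)

lemma act2_mid (a t : S) (j : ℕ) (hj0 : 0 < j) (hj : j < N) :
    act (emb2 N a) a (pt j t hj.le (Or.inl hj)) = pt j (a * t) hj.le (Or.inl hj) := by
  by_cases ht : t ∈ Subgroup.zpowers a
  · rw [← emb2_in N a j hj t ht (Or.inl hj0.ne'), act_apply,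
      emb2_in N a j hj _ ((mem_iff a t).2 ht) (Or.inl hj0.ne')]
  · obtain ⟨i, rfl⟩ : ∃ i, j = i + 1 := ⟨j - 1, by omega⟩
    rw [← emb2_out N a i (by omega) t ht (Or.inl hj), act_apply,
      emb2_out N a i (by omega) _ (by rwa [mem_iff]) (Or.inl hj)]

lemma act2_last (a t : S) (hN : 0 < N) (ht1 : t ≠ 1) (hat : a * t ≠ 1) :
    act (emb2 N a) a (pt N t le_rfl (Or.inr ht1)) = pt N (a * t) le_rfl (Or.inr hat) := by
  by_cases ht : t ∈ Subgroup.zpowers a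
  · rw [← emb2_zero N a hN t ht ht1, act_apply, emb2_zero N a hN _ ((mem_iff a t).2 ht) hat]
  · obtain ⟨i, rfl⟩ : ∃ i, N = i + 1 := ⟨N - 1, by omega⟩
    rw [← emb2_out (i + 1) a i (by omega) t ht (Or.inr ht1), act_apply,
      emb2_out (i + 1) a i (by omega) _ (by rwa [mem_iff]) (Or.inr hat)]

lemma act2_last_inv (a : S) (hN : 0 < N) (ht1 : a⁻¹ ≠ 1) :
    act (emb2 N a) a (pt N a⁻¹ le_rfl (Or.inr ht1)) = pt 0 1 hN.le (Or.inl hN) := by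
  rw [← emb2_zero N a hN a⁻¹ (inv_mem (Subgroup.mem_zpowers a)) ht1, act_apply, mul_inv_cancel,
    emb2_in N a 0 hN 1 (one_mem _) (Or.inr rfl)]

lemma act2_base (a : S) (hN : 0 < N) (ha : a ≠ 1) :
    act (emb2 N a) a (pt 0 1 hN.le (Or.inl hN)) = pt N a le_rfl (Or.inr ha) := by
  rw [← emb2_in N a 0 hN 1 (one_mem _) (Or.inr rfl), act_apply, mul_one,
    emb2_zero N a hN a (Subgroup.mem_zpowers a) ha]

lemma three [Fintype (Pts N S)] [DecidableEq (Pts N S)] (a : S) (hN : 0 < N) (ha : a ≠ 1) :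
    IsThreeCycle (act (emb1 N S) a * act (emb2 N a) a *
      (act (emb2 N a) a * act (emb1 N S) a)⁻¹) := by
  have hai : a⁻¹ ≠ 1 := inv_ne_one.2 ha
  apply threeCycle _ _ (pt 0 1 hN.le (Or.inl hN)) (pt 0 a⁻¹ hN.le (Or.inl hN))
    (pt N a⁻¹ le_rfl (Or.inr hai))
  · rw [act1 _ _ _ hN]; simp
  · exact act2_last_inv a hN hai
  · intro z z1 z2 z3
    obtain ⟨j, t, hj, h, rfl⟩ := exists_pt z
    simp only [ne_eq, pt_inj, not_and] at z1 z2 z3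
    rcases hj.lt_or_eq with hj' | rfl
    · rcases Nat.eq_zero_or_pos j with rfl | hj0
      · have hat : a * t ≠ 1 := fun e => z2 rfl (eq_inv_of_mul_eq_one_right e)
        rw [act2_zero a a t (z1 rfl) hN, act1 a 0 t hN, act2_zero a a _ hat hN]
      · rw [act2_mid a t j hj0 hj', act1 a j _ hj', act1 a j _ hj', act2_mid a _ j hj0 hj']
    · have ht : t ≠ 1 := by
        rcases h with h | h
        · omega
        · exact h
      have hat : a * t ≠ 1 := fun e => z3 rfl (eq_inv_of_mul_eq_one_right e)
      rw [act1_last a t ht, act2_last a t hN ht hat, act1_last a _ hat]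
  · rw [act1 a 0 1 hN, act2_zero a a _ (by simpa using ha) hN]
  · rw [act2_base a hN ha, act1_last a a ha]
  · exact act2_zero a a _ hai hN
  · exact act1_last a _ hai
  · rw [act1 a 0 1 hN]; simpa [pt_inj] using ha
  · rw [act2_base a hN ha]; simp [pt_inj, ha]

/-- Transitivity of the generated group. -/
lemma trans (a : S) (ha : Subgroup.zpowers a ≠ ⊤) (hN : 0 < N)
    (H : Subgroup (Perm (Pts N S))) (h1 : ∀ s, act (emb1 N S) s ∈ H)
    (h2 : ∀ s, act (emb2 N a) s ∈ H) : MulAction.IsPretransitive H (Pts N S) := by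
  obtain ⟨b, hb⟩ : ∃ b, b ∉ Subgroup.zpowers a := by
    by_contra hc
    push Not at hc
    exact ha ((Subgroup.eq_top_iff' _).2 hc)
  have hb1 : b ≠ 1 := fun e => hb (e ▸ one_mem _)
  have tr : ∀ x y z : Pts N S, (∃ g ∈ H, g x = y) → (∃ g ∈ H, g y = z) → ∃ g ∈ H, g x = z := by
    rintro x y z ⟨g, hg, rfl⟩ ⟨k, hk, rfl⟩
    exact ⟨k * g, mul_mem hk hg, rfl⟩
  have base : ∀ j (hj : j < N), ∃ g ∈ H,
      g (pt 0 1 hN.le (Or.inl hN)) = pt j 1 hj.le (Or.inl hj) := by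
    intro j
    induction j with
    | zero => intro _; exact ⟨1, one_mem _, rfl⟩
    | succ i ih =>
      intro hj
      refine tr _ _ _ (ih (by omega)) (tr _ (pt (i + 1) b hj.le (Or.inl hj)) _ ?_ ?_)
      · refine ⟨_, h2 b, ?_⟩
        rw [← emb2_in N a i (by omega) 1 (one_mem _) (Or.inr rfl), act_apply, mul_one,
          emb2_out N a i (by omega) b hb]
      · refine ⟨_, h1 b⁻¹, ?_⟩
        rw [act1 _ _ _ hj]; simp
  have all : ∀ x : Pts N S, ∃ g ∈ H, g (pt 0 1 hN.le (Or.inl hN)) = x := by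
    intro x
    obtain ⟨j, t, hj, h, rfl⟩ := exists_pt x
    rcases hj.lt_or_eq with hj' | rfl
    · refine tr _ _ _ (base j hj') ⟨_, h1 t, ?_⟩
      rw [act1 _ _ _ hj']; simp
    · have ht : t ≠ 1 := by
        rcases h with h | h
        · omega
        · exact h
      by_cases htz : t ∈ Subgroup.zpowers a
      · refine ⟨_, h2 t, ?_⟩
        rw [← emb2_in j a 0 hN 1 (one_mem _) (Or.inr rfl), act_apply, mul_one,
          emb2_zero j a hN t htz ht]
      · obtain ⟨i, rfl⟩ : ∃ i, j = i + 1 := ⟨j - 1, by omega⟩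
        refine tr _ _ _ (base i (by omega)) ⟨_, h2 t, ?_⟩
        rw [← emb2_in (i + 1) a i (by omega) 1 (one_mem _) (Or.inr rfl), act_apply, mul_one,
          emb2_out (i + 1) a i (by omega) t htz]
  refine ⟨fun x y => ?_⟩
  obtain ⟨g, hg, rfl⟩ := all x
  obtain ⟨k, hk, rfl⟩ := all y
  refine ⟨⟨k * g⁻¹, mul_mem hk (inv_mem hg)⟩, ?_⟩
  simp [Subgroup.smul_def]

end

/-- A non-abelian simple group has no nontrivial sign. -/
lemma to_comm_trivial {S A : Type} [Group S] [IsSimpleGroup S] [CommGroup A]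
    (hna : ¬ ∀ x y : S, x * y = y * x) (f : S →* A) (s : S) : f s = 1 := by
  rcases (inferInstance : f.ker.Normal).eq_bot_or_eq_top with h | h
  · exfalso
    apply hna
    intro x y
    apply (MonoidHom.ker_eq_bot_iff f).1 h
    simp [mul_comm]
  · have : s ∈ f.ker := h ▸ Subgroup.mem_top s
    exact this

lemma main {G S : Type} [Group G] [Group S] [Finite S] [IsSimpleGroup S]
    (hna : ¬ ∀ x y : S, x * y = y * x)
    (φ : G →* S) (hφ : Function.Surjective φ) (N : ℕ) (hN : 0 < N)
    (hp : ((N + 1) * Nat.card S - 1).Prime) :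
    ∃ ψ : Monoid.Coprod G G →* alternatingGroup (Fin ((N + 1) * Nat.card S - 1)),
      Function.Surjective ψ := by
  classical
  have := Fintype.ofFinite S
  obtain ⟨a, ha⟩ := exists_ne (1 : S)
  have hz : Subgroup.zpowers a ≠ ⊤ := by
    intro h
    apply hna
    intro x y
    obtain ⟨m, rfl⟩ := Subgroup.mem_zpowers_iff.1 (h ▸ Subgroup.mem_top x)
    obtain ⟨n, rfl⟩ := Subgroup.mem_zpowers_iff.1 (h ▸ Subgroup.mem_top y)
    rw [← zpow_add, ← zpow_add, add_comm]
  have hcard : Fintype.card (Pts N S) = (N + 1) * Nat.card S - 1 := by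
    rw [Fintype.card_subtype_compl]
    simp
  let F : Monoid.Coprod G G →* Perm (Pts N S) :=
    Monoid.Coprod.lift ((act (emb1 N S)).comp φ) ((act (emb2 N a)).comp φ)
  have m1 : ∀ s, act (emb1 N S) s ∈ F.range := by
    intro s
    obtain ⟨g, rfl⟩ := hφ s
    exact ⟨Monoid.Coprod.inl g, by simp [F]⟩
  have m2 : ∀ s, act (emb2 N a) s ∈ F.range := by
    intro s
    obtain ⟨g, rfl⟩ := hφ s
    exact ⟨Monoid.Coprod.inr g, by simp [F]⟩
  have ht := trans a hz hN F.range m1 m2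
  have hprim : MulAction.IsPreprimitive F.range (Pts N S) :=
    MulAction.IsPreprimitive.of_prime_card (by rwa [Nat.card_eq_fintype_card, hcard])
  have hle : alternatingGroup (Pts N S) ≤ F.range :=
    alternatingGroup_le_of_isPreprimitive_of_isThreeCycle_mem hprim (three a hN ha)
      (mul_mem (mul_mem (m1 a) (m2 a)) (inv_mem (mul_mem (m2 a) (m1 a))))
  have hsign : (sign : Perm (Pts N S) →* ℤˣ).comp F = 1 := by
    apply Monoid.Coprod.hom_ext
    · ext1 g
      simpa [F] using to_comm_trivial hna (sign.comp (act (emb1 N S))) (φ g)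
    · ext1 g
      simpa [F] using to_comm_trivial hna (sign.comp (act (emb2 N a))) (φ g)
  have hmem : ∀ w, F w ∈ alternatingGroup (Pts N S) := by
    intro w
    rw [Equiv.Perm.mem_alternatingGroup]
    exact DFunLike.congr_fun hsign w
  let e : Pts N S ≃ Fin ((N + 1) * Nat.card S - 1) := Fintype.equivFinOfCardEq hcard
  refine ⟨(Equiv.altCongrHom e).toMonoidHom.comp (F.codRestrict _ hmem), ?_⟩
  intro y
  obtain ⟨x, rfl⟩ := (Equiv.altCongrHom e).surjective y
  obtain ⟨w, hw⟩ := hle x.2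
  refine ⟨w, ?_⟩
  have : F.codRestrict _ hmem w = x := Subtype.ext hw
  simp [this]

end AltQuot

/-- If a group `G` has a finite non-abelian simple quotient, then the free product `G * G`
maps onto `Alt(n)` for infinitely many `n`. -/
theorem stmt_3 (G : Type) [Group G]
    (S : Type) [Group S] [Finite S] [IsSimpleGroup S]
    (hna : ¬ ∀ x y : S, x * y = y * x)
    (φ : G →* S) (hφ : Function.Surjective φ) :
    {n : ℕ | ∃ ψ : Monoid.Coprod G G →* alternatingGroup (Fin n),
      Function.Surjective ψ}.Infinite := by
  have hd : 0 < Nat.card S := Nat.card_pos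
  have : NeZero (Nat.card S) := ⟨hd.ne'⟩
  rw [Set.infinite_iff_exists_gt]
  intro B
  obtain ⟨n, hn, hnp, hmod⟩ := Nat.forall_exists_prime_gt_and_eq_mod
    (q := Nat.card S) (a := -1) (isUnit_one.neg) (B + 2 * Nat.card S)
  have hdvd : Nat.card S ∣ n + 1 := by
    rw [← ZMod.natCast_eq_zero_iff]
    push_cast
    rw [hmod]; simp
  obtain ⟨k, hk⟩ := hdvd
  have hk2 : 2 ≤ k := by
    by_contra hc
    have : Nat.card S * k ≤ Nat.card S * 1 := Nat.mul_le_mul_left _ (by omega)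
    omega
  have hn' : n = (k - 1 + 1) * Nat.card S - 1 := by
    rw [Nat.sub_add_cancel (by omega), mul_comm, ← hk]; rfl
  refine ⟨n, ?_, by omega⟩
  rw [hn'] at hnp ⊢
  exact AltQuot.main hna φ hφ (k - 1) (by omega) hnp
end
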